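/- arXiv:1708.00505 — 3 statements merged into one kernel-verified Lean document; each statement's English description precedes it below -/
import Mathlib

section
/- Let b > 0, let q : ℝ → ℂ be continuous on [−b,b], let f solve f'' − q f = 0 on [−b,b] with f(0) = 1, f'(0) = 0, and assume f(x) ≠ 0 on [−b,b]. For ω ∈ ℂ let u(ω,·) be the solution of y'' − q(x)y = −ω² y with y(0) = 1, y'(0) = iω, and define u_N(ω,x) = e^{iωx} + Σ_{n=0}^{N} β_n(x) ∫_{−1}^{1} P_n(y) e^{iωxy} dy. Then there exist functions ε_N : (0,b] → [0,∞) with ε_N(x) → 0 as N → ∞ for every x ∈ (0,b], such that for every C > 0, every nonzero ω ∈ ℂ with |Im ω| ≤ C, every N ∈ ℕ and every x ∈ (0,b], |u(ω,x) − u_N(ω,x)| ≤ ε_N(x)·sinh(Cx)/C. -/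
open MeasureTheory Set Filter Finset Complex Topology

noncomputable section

/-- The iterated integrals X⁽ⁿ⁾: X⁽⁰⁾ ≡ 1, X⁽ⁿ⁾(x) = n ∫₀ˣ X⁽ⁿ⁻¹⁾(s) (f(s)²)^((−1)ⁿ) ds. -/
def formalX (f : ℝ → ℂ) : ℕ → ℝ → ℂ
  | 0 => fun _ => 1
  | n + 1 => fun x =>
      (n + 1 : ℂ) * ∫ s in (0:ℝ)..x, formalX f n s * ((f s) ^ 2) ^ ((-1 : ℤ) ^ (n + 1))

/-- The iterated integrals X̃⁽ⁿ⁾: X̃⁽⁰⁾ ≡ 1, X̃⁽ⁿ⁾(x) = n ∫₀ˣ X̃⁽ⁿ⁻¹⁾(s) (f(s)²)^((−1)^(n−1)) ds. -/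
def formalXt (f : ℝ → ℂ) : ℕ → ℝ → ℂ
  | 0 => fun _ => 1
  | n + 1 => fun x =>
      (n + 1 : ℂ) * ∫ s in (0:ℝ)..x, formalXt f n s * ((f s) ^ 2) ^ ((-1 : ℤ) ^ n)

/-- The formal powers φₖ: φₖ = f·X⁽ᵏ⁾ for odd k, φₖ = f·X̃⁽ᵏ⁾ for even k. -/
def formalPower (f : ℝ → ℂ) (k : ℕ) (x : ℝ) : ℂ :=
  if Odd k then f x * formalX f k x else f x * formalXt f k x

/-- The Legendre polynomial Pₙ via Rodrigues' formula. -/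
def legendreP (n : ℕ) : Polynomial ℝ :=
  ((1 : ℝ) / (2 ^ n * n.factorial)) • Polynomial.derivative^[n] ((Polynomial.X ^ 2 - 1) ^ n)

/-- βₙ(x) = ((2n+1)/2)·(Σₖ l_{k,n} φₖ(x)/xᵏ − 1), where l_{k,n} is the coefficient of xᵏ in Pₙ. -/
def betaCoef (f : ℝ → ℂ) (n : ℕ) (x : ℝ) : ℂ :=
  ((2 * n + 1 : ℂ) / 2) *
    ((∑ k ∈ Finset.range (n + 1), ((legendreP n).coeff k : ℂ) * formalPower f k x / (x : ℂ) ^ k) - 1)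

lemma pC2 : (Polynomial.C (2:ℝ)) = 2 := map_ofNat _ 2
lemma pC3 : (Polynomial.C (3:ℝ)) = 3 := map_ofNat _ 3

lemma leg_iter_root (n k : ℕ) (hk : k < n) (t : ℝ) (ht : t ^ 2 = 1) :
    (Polynomial.derivative^[k] ((Polynomial.X ^ 2 - 1 : Polynomial ℝ) ^ n)).eval t = 0 := by
  have h := Polynomial.pow_sub_dvd_iterate_derivative_pow (Polynomial.X ^ 2 - 1 : Polynomial ℝ) n k
  obtain ⟨r, hr⟩ := h
  rw [hr]
  simp [ht, Nat.sub_ne_zero_of_lt hk]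

/-- normalisation factor -/
lemma leg_C (n : ℕ) : (Polynomial.C ((2:ℝ) ^ n * n.factorial)) * legendreP n =
    Polynomial.derivative^[n] ((Polynomial.X ^ 2 - 1 : Polynomial ℝ) ^ n) := by
  have : (2:ℝ) ^ n * n.factorial ≠ 0 := by positivity
  rw [legendreP, Polynomial.C_mul', smul_smul, mul_one_div_cancel this, one_smul]

lemma leg_C_ne (n : ℕ) : (Polynomial.C ((2:ℝ) ^ n * n.factorial)) ≠ 0 := by
  rw [Polynomial.C_ne_zero]; positivity

lemma leg_zero : legendreP 0 = 1 := by simp [legendreP]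
lemma leg_one : legendreP 1 = Polynomial.X := by
  have h := leg_C 1
  simp only [pow_one, Function.iterate_one, Polynomial.derivative_sub, Polynomial.derivative_X_sq,
    Polynomial.derivative_one, Nat.factorial_one, Nat.cast_one, mul_one, sub_zero] at h
  exact mul_left_cancel₀ (by rw [Polynomial.C_ne_zero]; norm_num) h

lemma leg_C_succ (n : ℕ) : (Polynomial.C ((2:ℝ) ^ (n+1) * (n+1).factorial)) =
   (2 * (n + 1 : Polynomial ℝ)) * (Polynomial.C ((2:ℝ) ^ n * n.factorial)) := by
  rw [show (2 * (n + 1 : Polynomial ℝ)) = Polynomial.C (2 * (n + 1 : ℝ)) by simp [pC2], ← Polynomial.C_mul]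
  congr 1; push_cast [Nat.factorial_succ]; ring

lemma leg_der_w (n : ℕ) : Polynomial.derivative ((Polynomial.X ^ 2 - 1 : Polynomial ℝ) ^ (n+1)) =
   (2 * (n + 1 : Polynomial ℝ)) * (((Polynomial.X ^ 2 - 1 : Polynomial ℝ) ^ n) * Polynomial.X) := by
  rw [Polynomial.derivative_pow]; simp; ring

lemma iter_der_mul_nat (k n : ℕ) (p : Polynomial ℝ) :
    Polynomial.derivative^[k] ((2 * (n + 1 : Polynomial ℝ)) * p) =
      (2 * (n + 1 : Polynomial ℝ)) * Polynomial.derivative^[k] p := by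
  rw [show (2 * (n + 1 : Polynomial ℝ)) = Polynomial.C (2 * (n + 1 : ℝ)) by simp [pC2],
    Polynomial.iterate_derivative_C_mul]

lemma leg_succ_eval (n : ℕ) (t : ℝ) (ht : t ^ 2 = 1) :
    (legendreP (n+1)).eval t = t * (legendreP n).eval t := by
  have h := leg_C (n+1)
  rw [Function.iterate_succ_apply, leg_der_w, iter_der_mul_nat, Polynomial.iterate_derivative_mul_X,
    leg_C_succ, ← leg_C] at h
  have h2 := congrArg (Polynomial.eval t) h
  simp only [Polynomial.eval_mul, Polynomial.eval_add, Polynomial.eval_smul, Polynomial.eval_C,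
    Polynomial.eval_X, Polynomial.eval_natCast, Polynomial.eval_ofNat, Polynomial.eval_one] at h2
  have h3 : n • (Polynomial.derivative^[n-1] ((Polynomial.X ^ 2 - 1 : Polynomial ℝ) ^ n)).eval t = 0 := by
    rcases Nat.eq_zero_or_pos n with h | h
    · subst h; simp
    · rw [leg_iter_root n (n-1) (by omega) t ht]; simp
  rw [h3] at h2
  have : (2:ℝ) ^ n * n.factorial ≠ 0 := by positivity
  have h4 : (n:ℝ) + 1 ≠ 0 := by positivity
  have h5 : (2 * ((n:ℝ)+1) * ((2:ℝ) ^ n * n.factorial)) ≠ 0 := by positivity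
  apply mul_left_cancel₀ h5
  linear_combination h2

lemma leg_eval_one (n : ℕ) : (legendreP n).eval 1 = 1 := by
  induction n with
  | zero => simp [leg_zero]
  | succ n ih => rw [leg_succ_eval n 1 (by norm_num), ih]; norm_num

lemma leg_eval_neg_one (n : ℕ) : (legendreP n).eval (-1) = (-1) ^ n := by
  induction n with
  | zero => simp [leg_zero]
  | succ n ih => rw [leg_succ_eval n (-1) (by norm_num), ih]; ring

lemma leg_rec1 (n : ℕ) : Polynomial.derivative (legendreP (n+1)) =
    Polynomial.X * Polynomial.derivative (legendreP n) + (n+1 : Polynomial ℝ) * legendreP n := by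
  have h := congrArg Polynomial.derivative (leg_C (n+1))
  rw [← Function.iterate_succ_apply' Polynomial.derivative, Function.iterate_succ_apply, leg_der_w, iter_der_mul_nat,
    Polynomial.iterate_derivative_mul_X, Polynomial.derivative_C_mul, leg_C_succ,
    Function.iterate_succ_apply', Nat.add_sub_cancel, ← leg_C, Polynomial.derivative_C_mul] at h
  have h5 : (2 * ((n + 1 : Polynomial ℝ))) * (Polynomial.C ((2:ℝ) ^ n * n.factorial)) ≠ 0 := by
    rw [← leg_C_succ]; exact leg_C_ne _
  apply mul_left_cancel₀ h5
  simp only [nsmul_eq_mul] at h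
  push_cast at h
  linear_combination h

lemma leg_rec2 (n : ℕ) : Polynomial.derivative (legendreP (n+2)) =
    (2 * n + 3 : Polynomial ℝ) * legendreP (n+1) + Polynomial.derivative (legendreP n) := by
  have h := congrArg Polynomial.derivative (leg_C (n+2))
  have e : Polynomial.derivative ((Polynomial.X ^ 2 - 1 : Polynomial ℝ) ^ (n+1) * Polynomial.X) =
      (2 * n + 3 : Polynomial ℝ) * (Polynomial.X ^ 2 - 1 : Polynomial ℝ) ^ (n+1) +
        (2 * (n + 1 : Polynomial ℝ)) * (Polynomial.X ^ 2 - 1 : Polynomial ℝ) ^ n := by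
    rw [Polynomial.derivative_mul, leg_der_w]; simp; ring
  rw [← Function.iterate_succ_apply' Polynomial.derivative, Function.iterate_succ_apply, leg_der_w (n+1), iter_der_mul_nat,
    Function.iterate_succ_apply, e, show (2 * n + 3 : Polynomial ℝ) = Polynomial.C (2 * n + 3 : ℝ) by simp [pC2, pC3],
    iterate_map_add Polynomial.derivative, Polynomial.iterate_derivative_C_mul, iter_der_mul_nat, ← leg_C (n+1),
    Function.iterate_succ_apply', ← leg_C n, Polynomial.derivative_C_mul, Polynomial.derivative_C_mul,
    leg_C_succ (n+1), leg_C_succ n] at h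
  rw [show (2 * n + 3 : Polynomial ℝ) = Polynomial.C (2 * n + 3 : ℝ) by simp [pC2, pC3]]
  have h5 : (2 * (((n+1 : ℕ) + 1 : Polynomial ℝ))) * (Polynomial.C ((2:ℝ) ^ (n+1) * (n+1).factorial)) ≠ 0 := by
    rw [← leg_C_succ]; exact leg_C_ne _
  apply mul_left_cancel₀ h5
  rw [leg_C_succ]
  linear_combination h

lemma leg_rec3 (n : ℕ) : Polynomial.derivative (legendreP n) =
    Polynomial.X * Polynomial.derivative (legendreP (n+1)) - (n+1 : Polynomial ℝ) * legendreP (n+1) := by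
  have h1 := leg_rec1 (n+1)
  have h2 := leg_rec2 n
  push_cast at h1
  linear_combination h1 - h2

lemma leg_rec4 (n : ℕ) : (1 - Polynomial.X ^ 2) * Polynomial.derivative (legendreP (n+1)) =
    (n+1 : Polynomial ℝ) * (legendreP n - Polynomial.X * legendreP (n+1)) := by
  have h1 := leg_rec1 n
  have h3 := leg_rec3 n
  linear_combination h1 + Polynomial.X * h3

lemma leg_ode (n : ℕ) : (1 - Polynomial.X ^ 2) * Polynomial.derivative (Polynomial.derivative (legendreP (n+1)))
     - 2 * Polynomial.X * Polynomial.derivative (legendreP (n+1)) =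
    - ((n+1) * (n+2) : Polynomial ℝ) * legendreP (n+1) := by
  have h := congrArg Polynomial.derivative (leg_rec4 n)
  have h3 := leg_rec3 n
  rw [show (n+1 : Polynomial ℝ) = Polynomial.C (n+1 : ℝ) by simp, Polynomial.derivative_C_mul] at h
  simp only [Polynomial.derivative_mul, Polynomial.derivative_sub, Polynomial.derivative_one,
    Polynomial.derivative_X_pow, Polynomial.derivative_X] at h
  simp [pC2] at h
  linear_combination h + (n+1 : Polynomial ℝ) * h3

lemma leg_natDegree_le (n : ℕ) : (legendreP n).natDegree ≤ n := by
  rw [legendreP]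
  refine (Polynomial.natDegree_smul_le _ _).trans ?_
  refine (Polynomial.natDegree_iterate_derivative _ _).trans ?_
  have : ((Polynomial.X ^ 2 - 1 : Polynomial ℝ) ^ n).natDegree ≤ n * 2 := by
    refine Polynomial.natDegree_pow_le_of_le n ?_
    compute_degree
  omega

lemma leg_coeff_ne (n : ℕ) : (legendreP n).coeff n ≠ 0 := by
  rw [legendreP, Polynomial.coeff_smul, Polynomial.coeff_iterate_derivative]
  have hm : (Polynomial.X ^ 2 - 1 : Polynomial ℝ).Monic := by
    have := Polynomial.monic_X_pow_sub_C (1:ℝ) (two_ne_zero)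
    simpa using this
  have hd : (Polynomial.X ^ 2 - 1 : Polynomial ℝ).natDegree = 2 := by
    have := Polynomial.natDegree_X_pow_sub_C (n := 2) (r := (1:ℝ))
    simpa using this
  have h1 : ((Polynomial.X ^ 2 - 1 : Polynomial ℝ) ^ n).coeff (n + n) = 1 := by
    have := (hm.pow n).coeff_natDegree
    rwa [hm.natDegree_pow, hd, mul_two] at this
  rw [h1]
  have : (n + n).descFactorial n ≠ 0 := by
    rw [Ne, Nat.descFactorial_eq_zero_iff_lt]; omega
  simp only [smul_eq_mul, nsmul_eq_mul, mul_one]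
  have h2 : (((n + n).descFactorial n : ℕ) : ℝ) ≠ 0 := by exact_mod_cast this
  positivity

lemma poly_intble (p : Polynomial ℝ) (a b : ℝ) : IntervalIntegrable (fun s => p.eval s) volume a b :=
  p.continuous.intervalIntegrable a b

lemma leg_abs_le (n : ℕ) (s : ℝ) (hs : s ∈ Set.Icc (-1:ℝ) 1) : |(legendreP n).eval s| ≤ 1 := by
  rcases n with _ | n
  · simp [leg_zero]
  set P := legendreP (n+1) with hP
  set F : ℝ → ℝ := fun x => ((n:ℝ)+1) * (n+2) * (P.eval x)^2 + (1 - x^2) * (P.derivative.eval x)^2 with hF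
  have hd : ∀ x, HasDerivAt F (2 * x * (P.derivative.eval x)^2) x := by
    intro x
    have h1 := P.hasDerivAt x
    have h2 := P.derivative.hasDerivAt x
    have h3 := ((h1.pow 2).const_mul (((n:ℝ)+1) * (n+2))).add
      ((((hasDerivAt_id x).pow 2).const_sub 1).mul (h2.pow 2))
    have h4 := congrArg (Polynomial.eval x) (leg_ode n)
    simp only [Polynomial.eval_mul, Polynomial.eval_sub, Polynomial.eval_neg, Polynomial.eval_add,
      Polynomial.eval_pow, Polynomial.eval_X, Polynomial.eval_natCast, Polynomial.eval_ofNat,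
      Polynomial.eval_one, ← hP] at h4
    refine h3.congr_deriv ?_
    simp
    linear_combination (2 * (P.derivative.eval x)) * h4
  have hcont : Continuous F := continuous_iff_continuousAt.2 fun x => (hd x).continuousAt
  have hF1 : F 1 = ((n:ℝ)+1) * (n+2) := by simp [hF, hP, leg_eval_one]
  have hFm1 : F (-1) = ((n:ℝ)+1) * (n+2) := by
    simp [hF, hP, leg_eval_neg_one]
    rw [← pow_mul, mul_comm (n+1) 2, pow_mul]; simp
  have hb : F s ≤ ((n:ℝ)+1) * (n+2) := by
    rcases le_total 0 s with h | h
    · rw [← hF1]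
      have : MonotoneOn F (Set.Icc 0 1) := by
        apply monotoneOn_of_deriv_nonneg (convex_Icc 0 1) hcont.continuousOn
        · intro x _; exact (hd x).differentiableAt.differentiableWithinAt
        · intro x hx; rw [interior_Icc] at hx; rw [(hd x).deriv]
          have := hx.1; positivity
      exact this ⟨h, hs.2⟩ ⟨zero_le_one, le_rfl⟩ hs.2
    · rw [← hFm1]
      have : AntitoneOn F (Set.Icc (-1) 0) := by
        apply antitoneOn_of_deriv_nonpos (convex_Icc _ _) hcont.continuousOn
        · intro x _; exact (hd x).differentiableAt.differentiableWithinAt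
        · intro x hx; rw [interior_Icc] at hx; rw [(hd x).deriv]
          have := hx.2
          nlinarith [sq_nonneg (P.derivative.eval x)]
      exact this ⟨le_rfl, by norm_num⟩ ⟨hs.1, h⟩ hs.1
  have h1 : 0 ≤ (1 - s^2) * (P.derivative.eval s)^2 := by
    apply mul_nonneg _ (sq_nonneg _)
    nlinarith [hs.1, hs.2]
  have h2 : ((n:ℝ)+1) * (n+2) * (P.eval s)^2 ≤ ((n:ℝ)+1) * (n+2) * 1 := by
    simp only [hF] at hb; linarith
  have h3 := le_of_mul_le_mul_left h2 (by positivity)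
  exact abs_le_one_iff_mul_self_le_one.2 (by nlinarith)

lemma leg_ibp (n : ℕ) : ∀ (W p : Polynomial ℝ),
    (∀ k < n, (Polynomial.derivative^[k] W).eval 1 = 0 ∧ (Polynomial.derivative^[k] W).eval (-1) = 0) →
    ∫ s in (-1:ℝ)..1, (Polynomial.derivative^[n] W).eval s * p.eval s =
      (-1)^n * ∫ s in (-1:ℝ)..1, W.eval s * (Polynomial.derivative^[n] p).eval s := by
  induction n with
  | zero => intro W p _; simp
  | succ n ih =>
    intro W p h
    have h1 := intervalIntegral.integral_deriv_mul_eq_sub (a := -1) (b := 1)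
      (fun x _ => (Polynomial.derivative^[n] W).hasDerivAt x) (fun x _ => p.hasDerivAt x)
      (poly_intble _ _ _) (poly_intble _ _ _)
    rw [(h n (by omega)).1, (h n (by omega)).2] at h1
    rw [intervalIntegral.integral_add] at h1
    · rw [Function.iterate_succ_apply', Function.iterate_succ_apply]
      have h2 := ih W p.derivative (fun k hk => h k (by omega))
      rw [pow_succ]
      linear_combination h1 - h2
    · exact (Continuous.mul (Polynomial.continuous _) (Polynomial.continuous _)).intervalIntegrable _ _
    · exact (Continuous.mul (Polynomial.continuous _) (Polynomial.continuous _)).intervalIntegrable _ _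

lemma leg_orth (n : ℕ) (p : Polynomial ℝ) (hp : p.natDegree < n) :
    ∫ s in (-1:ℝ)..1, (legendreP n).eval s * p.eval s = 0 := by
  have h := leg_ibp n ((Polynomial.X ^ 2 - 1 : Polynomial ℝ) ^ n) p
    (fun k hk => ⟨leg_iter_root n k hk 1 (by norm_num), leg_iter_root n k hk (-1) (by norm_num)⟩)
  rw [Polynomial.iterate_derivative_eq_zero hp] at h
  simp only [legendreP, Polynomial.eval_smul, smul_eq_mul, mul_assoc]
  rw [intervalIntegral.integral_const_mul, h]
  simp

lemma leg_orth' (n m : ℕ) (h : n ≠ m) :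
    ∫ s in (-1:ℝ)..1, (legendreP n).eval s * (legendreP m).eval s = 0 := by
  rcases lt_or_gt_of_ne h with h | h
  · simp_rw [mul_comm (Polynomial.eval _ (legendreP n))]
    exact leg_orth m _ ((leg_natDegree_le n).trans_lt h)
  · exact leg_orth n _ ((leg_natDegree_le m).trans_lt h)

lemma leg_der_deg (n m : ℕ) (h : n ≤ m + 1) (hm : 0 < m): (Polynomial.derivative (legendreP n)).natDegree < m + 1 := by
  have h1 := Polynomial.natDegree_derivative_le (legendreP n)
  have := leg_natDegree_le n
  omega

lemma leg_norm (n : ℕ) : (2 * n + 1 : ℝ) / 2 *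
    ∫ s in (-1:ℝ)..1, (legendreP n).eval s * (legendreP n).eval s = 1 := by
  rcases n with _ | n
  · simp [leg_zero]; norm_num
  have h1 := intervalIntegral.integral_deriv_mul_eq_sub (a := -1) (b := 1)
      (fun x _ => (legendreP (n+2)).hasDerivAt x) (fun x _ => (legendreP (n+1)).hasDerivAt x)
      (poly_intble _ _ _) (poly_intble _ _ _)
  have ci : ∀ p q : Polynomial ℝ, IntervalIntegrable (fun s => p.eval s * q.eval s) volume (-1) 1 :=
    fun p q => (p.continuous.mul q.continuous).intervalIntegrable _ _
  have dl : ∀ k, (Polynomial.derivative (legendreP k)).natDegree ≤ k - 1 := fun k =>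
    (Polynomial.natDegree_derivative_le _).trans (Nat.sub_le_sub_right (leg_natDegree_le k) 1)
  rw [intervalIntegral.integral_add (ci _ _) (ci _ _), leg_orth (n+2) _ ((dl _).trans_lt (by omega)),
    leg_rec2] at h1
  simp only [leg_eval_one, leg_eval_neg_one] at h1
  have h2 : ∫ s in (-1:ℝ)..1, (((2 * n + 3 : Polynomial ℝ) * legendreP (n+1) +
      Polynomial.derivative (legendreP n)).eval s) * (legendreP (n+1)).eval s =
      (2 * n + 3) * (∫ s in (-1:ℝ)..1, (legendreP (n+1)).eval s * (legendreP (n+1)).eval s) +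
      ∫ s in (-1:ℝ)..1, (legendreP (n+1)).eval s * (Polynomial.derivative (legendreP n)).eval s := by
    rw [← intervalIntegral.integral_const_mul, ← intervalIntegral.integral_add ((ci _ _).const_mul _) (ci _ _)]
    congr 1; ext s; simp; ring
  rw [h2, leg_orth (n+1) _ ((dl _).trans_lt (by omega))] at h1
  have h3 : (-1:ℝ)^(n+2) * (-1)^(n+1) = -1 := by
    rw [← pow_add, show n + 2 + (n+1) = 2 * (n+1) + 1 by ring, pow_succ, pow_mul]; simp
  rw [h3] at h1
  push_cast
  linear_combination h1 / 2

lemma leg_span (N : ℕ) : ∀ p : Polynomial ℝ, p.natDegree < N →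
    ∃ d : ℕ → ℝ, p = ∑ n ∈ Finset.range N, Polynomial.C (d n) * legendreP n := by
  induction N with
  | zero => intro p h; omega
  | succ N ih =>
    intro p hp
    set c := p.coeff N / (legendreP N).coeff N with hc
    rcases Nat.eq_zero_or_pos N with h0 | h0
    · subst h0
      refine ⟨fun _ => p.coeff 0, ?_⟩
      simp [leg_zero]
      exact Polynomial.eq_C_of_natDegree_le_zero (by omega)
    obtain ⟨d, hd⟩ := ih (p - Polynomial.C c * legendreP N) (by
      have : (p - Polynomial.C c * legendreP N).natDegree ≤ N - 1 := by
        rw [Polynomial.natDegree_le_iff_coeff_eq_zero]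
        intro M hM
        rw [Polynomial.coeff_sub, Polynomial.coeff_C_mul]
        rcases Nat.lt_or_ge N M with h | h
        · rw [Polynomial.coeff_eq_zero_of_natDegree_lt (by omega),
            Polynomial.coeff_eq_zero_of_natDegree_lt ((leg_natDegree_le N).trans_lt h)]
          simp
        · have : M = N := by omega
          subst this
          rw [hc, div_mul_cancel₀ _ (leg_coeff_ne M), sub_self]
      omega)
    refine ⟨Function.update d N c, ?_⟩
    rw [Finset.sum_range_succ, Function.update_self, Finset.sum_congr rfl (g := fun n => Polynomial.C (d n) * legendreP n), ← hd]
    · ring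
    · intro n hn
      rw [Function.update_of_ne]
      exact (Finset.mem_range.1 hn).ne

/-- Legendre partial sum -/
def legS (g : ℝ → ℝ) (N : ℕ) (s : ℝ) : ℝ :=
  ∑ n ∈ Finset.range N, ((2 * n + 1 : ℝ) / 2 * ∫ t in (-1:ℝ)..1, (legendreP n).eval t * g t) * (legendreP n).eval s

lemma legS_poly (N : ℕ) (p : Polynomial ℝ) (hp : p.natDegree < N) (s : ℝ) :
    legS (fun t => p.eval t) N s = p.eval s := by
  obtain ⟨d, hd⟩ := leg_span N p hp
  have hc : ∀ n ∈ Finset.range N, (2 * n + 1 : ℝ) / 2 * ∫ t in (-1:ℝ)..1, (legendreP n).eval t * p.eval t = d n := by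
    intro n hn
    have : ∀ t, (legendreP n).eval t * p.eval t = ∑ m ∈ Finset.range N, d m * ((legendreP n).eval t * (legendreP m).eval t) := by
      intro t
      conv_lhs => rw [hd]
      rw [Polynomial.eval_finsetSum, Finset.mul_sum]
      refine Finset.sum_congr rfl fun m _ => ?_
      simp; ring
    simp_rw [this]
    rw [intervalIntegral.integral_finsetSum]
    · rw [Finset.sum_eq_single n]
      · rw [intervalIntegral.integral_const_mul]
        linear_combination d n * leg_norm n
      · intro m _ hm
        rw [intervalIntegral.integral_const_mul, leg_orth' n m hm.symm, mul_zero]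
      · intro h; exact absurd hn h
    · intro m _
      exact (continuous_const.mul ((Polynomial.continuous _).mul (Polynomial.continuous _))).intervalIntegrable _ _
  rw [legS, Finset.sum_congr rfl (fun n hn => by rw [hc n hn])]
  conv_rhs => rw [hd]
  rw [Polynomial.eval_finsetSum]
  simp

lemma leg_int_succ (m : ℕ) (s : ℝ) : (2 * m + 3 : ℝ) * ∫ t in (-1:ℝ)..s, (legendreP (m+1)).eval t =
    (legendreP (m+2)).eval s - (legendreP m).eval s := by
  have h := intervalIntegral.integral_eq_sub_of_hasDerivAt (a := -1) (b := s)
    (fun x _ => (legendreP (m+2) - legendreP m).hasDerivAt x) (poly_intble _ _ _)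
  have e : Polynomial.derivative (legendreP (m+2) - legendreP m) =
      Polynomial.C (2 * m + 3 : ℝ) * legendreP (m+1) := by
    rw [Polynomial.derivative_sub, leg_rec2]; simp [pC2, pC3]
  rw [e] at h
  simp only [Polynomial.eval_mul, Polynomial.eval_C, Polynomial.eval_sub, leg_eval_neg_one] at h
  rw [intervalIntegral.integral_const_mul] at h
  rw [h, pow_add]; ring

lemma leg_coef_ibp (h k : ℝ → ℝ) (hd : ∀ s, HasDerivAt h (k s) s) (hk : Continuous k) (n : ℕ) :
    (2 * (n+1 : ℕ) + 1 : ℝ) / 2 * ∫ t in (-1:ℝ)..1, (legendreP (n+1)).eval t * h t =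
     1 / 2 * ((∫ t in (-1:ℝ)..1, (legendreP n).eval t * k t) - ∫ t in (-1:ℝ)..1, (legendreP (n+2)).eval t * k t) := by
  have hh : Continuous h := continuous_iff_continuousAt.2 fun x => (hd x).continuousAt
  have h1 := intervalIntegral.integral_deriv_mul_eq_sub (a := -1) (b := 1)
    (fun x _ => (legendreP (n+2) - legendreP n).hasDerivAt x) (fun x _ => hd x)
    (poly_intble _ _ _) (hk.intervalIntegrable _ _)
  have e : Polynomial.derivative (legendreP (n+2) - legendreP n) =
      Polynomial.C (2 * n + 3 : ℝ) * legendreP (n+1) := by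
    rw [Polynomial.derivative_sub, leg_rec2]; simp [pC2, pC3]
  have ci : ∀ (p : Polynomial ℝ) (q : ℝ → ℝ), Continuous q → IntervalIntegrable (fun s => p.eval s * q s) volume (-1) 1 :=
    fun p q hq => (p.continuous.mul hq).intervalIntegrable _ _
  rw [e, intervalIntegral.integral_add (ci _ _ hh) (ci _ _ hk)] at h1
  simp only [Polynomial.eval_mul, Polynomial.eval_C, Polynomial.eval_sub, leg_eval_neg_one, leg_eval_one, mul_assoc,
    sub_mul] at h1
  rw [intervalIntegral.integral_const_mul, intervalIntegral.integral_sub (ci _ _ hk) (ci _ _ hk)] at h1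
  push_cast
  rw [pow_add] at h1
  linear_combination h1 / 2

lemma leg_bessel (k : ℝ → ℝ) (hk : Continuous k) (N : ℕ) :
    ∫ t in (-1:ℝ)..1, (legS k N t)^2 ≤ ∫ t in (-1:ℝ)..1, (k t)^2 := by
  set a : ℕ → ℝ := fun n => (2 * n + 1 : ℝ) / 2 * ∫ t in (-1:ℝ)..1, (legendreP n).eval t * k t with ha
  set p : Polynomial ℝ := ∑ n ∈ Finset.range N, Polynomial.C (a n) * legendreP n with hp
  have hS : ∀ t, legS k N t = p.eval t := by
    intro t; rw [hp, Polynomial.eval_finsetSum, legS]; simp [ha]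
  have ci : ∀ (p : Polynomial ℝ) (q : ℝ → ℝ), Continuous q → IntervalIntegrable (fun s => p.eval s * q s) volume (-1) 1 :=
    fun p q hq => (p.continuous.mul hq).intervalIntegrable _ _
  have h1 : ∀ q : ℝ → ℝ, Continuous q → ∫ t in (-1:ℝ)..1, p.eval t * q t =
      ∑ n ∈ Finset.range N, a n * ∫ t in (-1:ℝ)..1, (legendreP n).eval t * q t := by
    intro q hq
    have : ∀ t, p.eval t * q t = ∑ n ∈ Finset.range N, a n * ((legendreP n).eval t * q t) := by
      intro t; rw [hp, Polynomial.eval_finsetSum, Finset.sum_mul]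
      refine Finset.sum_congr rfl fun m _ => ?_
      simp; ring
    simp_rw [this]
    rw [intervalIntegral.integral_finsetSum]
    · simp_rw [intervalIntegral.integral_const_mul]
    · intro m _; exact (ci _ _ hq).const_mul _
  have h2 : ∫ t in (-1:ℝ)..1, p.eval t * p.eval t = ∫ t in (-1:ℝ)..1, p.eval t * k t := by
    rw [h1 _ hk, h1 _ p.continuous]
    refine Finset.sum_congr rfl fun n hn => ?_
    congr 1
    simp_rw [mul_comm (Polynomial.eval _ (legendreP n)) (Polynomial.eval _ p)]
    rw [h1 _ (legendreP n).continuous, Finset.sum_eq_single n]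
    · have := leg_norm n
      simp only [ha]
      linear_combination (∫ t in (-1:ℝ)..1, (legendreP n).eval t * k t) * this
    · intro m _ hm
      rw [leg_orth' m n hm, mul_zero]
    · intro h; exact absurd hn h
  have h3 : 0 ≤ ∫ t in (-1:ℝ)..1, (k t - p.eval t)^2 :=
    intervalIntegral.integral_nonneg (by norm_num) (fun _ _ => sq_nonneg _)
  have h4 : ∫ t in (-1:ℝ)..1, (k t - p.eval t)^2 = (∫ t in (-1:ℝ)..1, (k t)^2) -
      2 * (∫ t in (-1:ℝ)..1, p.eval t * k t) + ∫ t in (-1:ℝ)..1, p.eval t * p.eval t := by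
    rw [← intervalIntegral.integral_const_mul, ← intervalIntegral.integral_sub,
      ← intervalIntegral.integral_add]
    · congr 1; ext t; ring
    · exact (((hk.pow 2)).sub (continuous_const.mul (p.continuous.mul hk))).intervalIntegrable _ _
    · exact ci _ _ p.continuous
    · exact (hk.pow 2).intervalIntegrable _ _
    · exact (ci _ _ hk).const_mul _
  simp_rw [hS, sq (Polynomial.eval _ p)]
  linarith

lemma legS_continuous (k : ℝ → ℝ) (N : ℕ) : Continuous (legS k N) := by
  unfold legS
  refine continuous_finsetSum _ fun n _ => continuous_const.mul (Polynomial.continuous _)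

lemma legS_formula (h k : ℝ → ℝ) (hd : ∀ s, HasDerivAt h (k s) s) (hk : Continuous k) (N : ℕ) (s : ℝ) :
    legS h (N+1) s = ((1/2 * ∫ t in (-1:ℝ)..1, (legendreP 0).eval t * h t)
      - (1/2) * (∫ t in (-1:ℝ)..1, (legendreP 0).eval t * k t)
      + (1/2) * (∫ t in (-1:ℝ)..1, (legendreP 1).eval t * k t))
      + (∫ t in (-1:ℝ)..s, legS k (N+1) t)
      - (1/2) * (∫ t in (-1:ℝ)..1, (legendreP N).eval t * k t) * (legendreP (N+1)).eval s
      - (1/2) * (∫ t in (-1:ℝ)..1, (legendreP (N+1)).eval t * k t) * (legendreP N).eval s := by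
  induction N with
  | zero =>
    simp only [legS, Finset.sum_range_one, zero_add]
    rw [intervalIntegral.integral_const_mul]
    simp [leg_zero, leg_one]
    ring
  | succ N ih =>
    have e1 : legS h (N+1+1) s = legS h (N+1) s + _ := Finset.sum_range_succ _ _
    have e2 : ∀ t, legS k (N+1+1) t = legS k (N+1) t + _ := fun t => Finset.sum_range_succ _ _
    rw [e1, ih]
    simp_rw [e2]
    rw [intervalIntegral.integral_add ((legS_continuous k _).intervalIntegrable _ _)
      ((poly_intble _ _ _).const_mul _),
      intervalIntegral.integral_const_mul, leg_coef_ibp h k hd hk N]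
    have h3 := leg_int_succ N s
    push_cast
    linear_combination (-(1/2) * ∫ t in (-1:ℝ)..1, (legendreP (N+1)).eval t * k t) * h3

lemma legS_bound (h k : ℝ → ℝ) (hd : ∀ s, HasDerivAt h (k s) s) (hk : Continuous k) (δ : ℝ) (hδ : 0 < δ)
    (hb : ∀ s ∈ Set.Icc (-1:ℝ) 1, |k s| ≤ δ) (h0 : h (-1) = 0) (N : ℕ) (s : ℝ) (hs : s ∈ Set.Icc (-1:ℝ) 1) :
    |h s - legS h (N+1) s| ≤ 10 * δ := by
  have hh : Continuous h := continuous_iff_continuousAt.2 fun x => (hd x).continuousAt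
  have hhb : ∀ s ∈ Set.Icc (-1:ℝ) 1, |h s| ≤ 2 * δ := by
    intro s hs
    have := (convex_Icc (-1:ℝ) 1).norm_image_sub_le_of_norm_hasDerivWithin_le
      (fun x _ => (hd x).hasDerivWithinAt) (fun x hx => by simpa using hb x hx)
      (x := -1) (y := s) ⟨le_rfl, by norm_num⟩ hs
    rw [h0, sub_zero, Real.norm_eq_abs, Real.norm_eq_abs,
      abs_of_nonneg (show 0 ≤ s - -1 by linarith [hs.1])] at this
    nlinarith [hs.2]
  have cb : ∀ (g : ℝ → ℝ) (M : ℝ), (∀ s ∈ Set.Icc (-1:ℝ) 1, |g s| ≤ M) → ∀ n,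
      |∫ t in (-1:ℝ)..1, (legendreP n).eval t * g t| ≤ 2 * M := by
    intro g M hM n
    have := intervalIntegral.norm_integral_le_of_norm_le_const (a := -1) (b := 1) (C := M)
      (f := fun t => (legendreP n).eval t * g t) (by
        intro t ht
        rw [Set.uIoc_of_le (by norm_num)] at ht
        have ht' : t ∈ Set.Icc (-1:ℝ) 1 := ⟨ht.1.le, ht.2⟩
        have h1 := leg_abs_le n t ht'
        have h2 := hM t ht'
        rw [Real.norm_eq_abs, abs_mul]
        nlinarith [abs_nonneg (g t)])
    rw [Real.norm_eq_abs] at this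
    norm_num at this
    linarith
  have hI : |∫ t in (-1:ℝ)..s, legS k (N+1) t| ≤ 2 * δ := by
    have c1 : Continuous (fun t => (δ + (legS k (N+1) t)^2 / δ) / 2) := by
      have := legS_continuous k (N+1); fun_prop
    have h1 : |∫ t in (-1:ℝ)..s, legS k (N+1) t| ≤ ∫ t in (-1:ℝ)..s, (δ + (legS k (N+1) t)^2 / δ) / 2 := by
      rw [← Real.norm_eq_abs]
      apply intervalIntegral.norm_integral_le_of_norm_le hs.1 _ (c1.intervalIntegrable _ _)
      refine Filter.Eventually.of_forall fun t _ => ?_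
      rw [Real.norm_eq_abs, le_div_iff₀ (by norm_num), ← sub_nonneg]
      have : δ + legS k (N+1) t ^ 2 / δ - |legS k (N+1) t| * 2 = (δ - |legS k (N+1) t|)^2 / δ := by
        rw [sub_sq, sq_abs]; field_simp; ring
      rw [this]; positivity
    have h2 : ∫ t in (-1:ℝ)..s, (δ + (legS k (N+1) t)^2 / δ) / 2 ≤ ∫ t in (-1:ℝ)..1, (δ + (legS k (N+1) t)^2 / δ) / 2 := by
      apply intervalIntegral.integral_mono_interval le_rfl hs.1 hs.2 _ (c1.intervalIntegrable _ _)
      refine Filter.Eventually.of_forall fun t => ?_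
      simp only [Pi.zero_apply]; positivity
    have h3 : ∫ t in (-1:ℝ)..1, (δ + (legS k (N+1) t)^2 / δ) / 2 = δ + (∫ t in (-1:ℝ)..1, (legS k (N+1) t)^2) / δ / 2 := by
      rw [intervalIntegral.integral_div, intervalIntegral.integral_add, intervalIntegral.integral_div]
      · simp; ring
      · simp
      · have := legS_continuous k (N+1)
        exact Continuous.intervalIntegrable (by fun_prop) _ _
    have h4 := leg_bessel k hk (N+1)
    have h5 : ∫ t in (-1:ℝ)..1, (k t)^2 ≤ ∫ t in (-1:ℝ)..1, δ^2 := by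
      apply intervalIntegral.integral_mono_on (by norm_num) ((hk.pow 2).intervalIntegrable _ _) (by simp)
      intro t ht
      have := hb t ht
      show (k t)^2 ≤ δ^2
      rw [← sq_abs]
      exact pow_le_pow_left₀ (abs_nonneg _) this 2
    simp at h5
    have h6 : (∫ t in (-1:ℝ)..1, (legS k (N+1) t)^2) / δ ≤ 2 * δ := by
      rw [div_le_iff₀ hδ]; nlinarith
    linarith
  have f := legS_formula h k hd hk N s
  have b1 := cb h _ hhb 0
  have b2 := cb k _ hb 0
  have b3 := cb k _ hb 1
  have b4 : |(∫ t in (-1:ℝ)..1, (legendreP N).eval t * k t) * (legendreP (N+1)).eval s| ≤ 2 * δ * 1 := by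
    rw [abs_mul]; exact mul_le_mul (cb k _ hb N) (leg_abs_le _ s hs) (abs_nonneg _) (by positivity)
  have b5 : |(∫ t in (-1:ℝ)..1, (legendreP (N+1)).eval t * k t) * (legendreP N).eval s| ≤ 2 * δ * 1 := by
    rw [abs_mul]; exact mul_le_mul (cb k _ hb (N+1)) (leg_abs_le _ s hs) (abs_nonneg _) (by positivity)
  have b6 := hhb s hs
  rw [f]
  simp only [mul_assoc]
  rw [abs_le] at *
  constructor <;> linarith [b1.1, b1.2, b2.1, b2.2, b3.1, b3.2, b4.1, b4.2, b5.1, b5.2, b6.1, b6.2, hI.1, hI.2]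

lemma exists_antider (p : Polynomial ℝ) : ∃ P : Polynomial ℝ, Polynomial.derivative P = p := by
  induction p using Polynomial.induction_on' with
  | add p q hp hq =>
    obtain ⟨P, hP⟩ := hp
    obtain ⟨Q, hQ⟩ := hq
    exact ⟨P + Q, by simp [hP, hQ]⟩
  | monomial n a =>
    refine ⟨Polynomial.monomial (n+1) (a / (n+1)), ?_⟩
    rw [Polynomial.derivative_monomial]
    have : (n:ℝ) + 1 ≠ 0 := by positivity
    simp [this]

lemma legS_add (g h : ℝ → ℝ) (hg : Continuous g) (hh : Continuous h) (N : ℕ) (s : ℝ) :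
    legS (fun t => g t + h t) N s = legS g N s + legS h N s := by
  simp only [legS]
  rw [← Finset.sum_add_distrib]
  refine Finset.sum_congr rfl fun n _ => ?_
  simp only [mul_add]
  have ci : ∀ (q : ℝ → ℝ), Continuous q → IntervalIntegrable (fun s => (legendreP n).eval s * q s) volume (-1) 1 :=
    fun q hq => ((legendreP n).continuous.mul hq).intervalIntegrable _ _
  rw [intervalIntegral.integral_add (ci _ hg) (ci _ hh)]
  ring

lemma legS_unif (g k : ℝ → ℝ) (hd : ∀ s, HasDerivAt g (k s) s) (hk : Continuous k) (δ : ℝ) (hδ : 0 < δ) :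
    ∃ N0, ∀ N ≥ N0, ∀ s ∈ Set.Icc (-1:ℝ) 1, |g s - legS g N s| ≤ δ := by
  have hg : Continuous g := continuous_iff_continuousAt.2 fun x => (hd x).continuousAt
  obtain ⟨r, hr⟩ := exists_polynomial_near_of_continuousOn (-1) 1 k hk.continuousOn (δ/10) (by positivity)
  obtain ⟨R, hR⟩ := exists_antider r
  set p : Polynomial ℝ := R + Polynomial.C (g (-1) - R.eval (-1)) with hp
  refine ⟨p.natDegree + 1, fun N hN s hs => ?_⟩
  have hpd : Polynomial.derivative p = r := by simp [hp, hR]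
  have hb := legS_bound (fun t => g t - p.eval t) (fun t => k t - r.eval t)
    (fun t => by have := p.hasDerivAt t; rw [hpd] at this; exact (hd t).sub this)
    (hk.sub r.continuous) (δ/10) (by positivity)
    (fun t ht => by rw [abs_sub_comm]; exact (hr t ht).le) (by simp [hp]) (N-1) s hs
  rw [Nat.sub_add_cancel (by omega)] at hb
  have e : legS g N s = legS (fun t => g t - p.eval t) N s + legS (fun t => p.eval t) N s := by
    rw [← legS_add (fun t => g t - p.eval t) (fun t => p.eval t) (hg.sub p.continuous) p.continuous]; simp
  rw [legS_poly N p (by omega)] at e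
  rw [e]
  convert hb using 1
  · congr 1; ring
  · ring

lemma legSC_unif (g k : ℝ → ℂ) (hd : ∀ s, HasDerivAt g (k s) s) (hk : Continuous k) :
    ∃ η : ℕ → ℝ, (∀ N, 0 ≤ η N) ∧ Tendsto η atTop (𝓝 0) ∧ ∀ N, ∀ s ∈ Set.Icc (-1:ℝ) 1,
      ‖g s - ∑ n ∈ Finset.range N, ((2 * n + 1 : ℂ) / 2 *
        ∫ t in (-1:ℝ)..1, (((legendreP n).eval t : ℝ) : ℂ) * g t) * (((legendreP n).eval s : ℝ) : ℂ)‖ ≤ η N := by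
  have hg : Continuous g := continuous_iff_continuousAt.2 fun x => (hd x).continuousAt
  have hre : Continuous fun t => (g t).re := Complex.continuous_re.comp hg
  have him : Continuous fun t => (g t).im := Complex.continuous_im.comp hg
  have key : ∀ N s, g s - ∑ n ∈ Finset.range N, ((2 * n + 1 : ℂ) / 2 *
        ∫ t in (-1:ℝ)..1, (((legendreP n).eval t : ℝ) : ℂ) * g t) * (((legendreP n).eval s : ℝ) : ℂ) =
      (((g s).re - legS (fun t => (g t).re) N s : ℝ) : ℂ) +
      (((g s).im - legS (fun t => (g t).im) N s : ℝ) : ℂ) * Complex.I := by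
    intro N s
    have h1 : ∀ n, ∫ t in (-1:ℝ)..1, (((legendreP n).eval t : ℝ) : ℂ) * g t =
        ((∫ t in (-1:ℝ)..1, (legendreP n).eval t * (g t).re : ℝ) : ℂ) +
        ((∫ t in (-1:ℝ)..1, (legendreP n).eval t * (g t).im : ℝ) : ℂ) * Complex.I := by
      intro n
      rw [← intervalIntegral.integral_ofReal, ← intervalIntegral.integral_ofReal,
        ← intervalIntegral.integral_mul_const, ← intervalIntegral.integral_add]
      · congr 1; ext t
        conv_lhs => rw [← Complex.re_add_im (g t)]
        push_cast; ring
      · have := (legendreP n).continuous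
        exact Continuous.intervalIntegrable (by fun_prop) _ _
      · have := (legendreP n).continuous
        exact Continuous.intervalIntegrable (by fun_prop) _ _
    conv_lhs => rw [← Complex.re_add_im (g s)]
    simp_rw [h1]
    simp only [legS]
    push_cast
    simp only [mul_add, add_mul, Finset.sum_add_distrib, sub_mul, Finset.sum_mul]
    have : ∀ a b c d d' : ℂ, d = d' → a + b - (c + d) = a - c + (b - d') := by intros; subst_vars; ring
    apply this
    refine Finset.sum_congr rfl fun n _ => ?_
    ring
  have hcontE : ∀ N, Continuous fun s => ‖g s - ∑ n ∈ Finset.range N, ((2 * n + 1 : ℂ) / 2 *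
        ∫ t in (-1:ℝ)..1, (((legendreP n).eval t : ℝ) : ℂ) * g t) * (((legendreP n).eval s : ℝ) : ℂ)‖ := by
    intro N
    refine (hg.sub (continuous_finsetSum _ fun n _ => continuous_const.mul
      (Complex.continuous_ofReal.comp (Polynomial.continuous _)))).norm
  set E : ℕ → ℝ → ℝ := fun N s => ‖g s - ∑ n ∈ Finset.range N, ((2 * n + 1 : ℂ) / 2 *
        ∫ t in (-1:ℝ)..1, (((legendreP n).eval t : ℝ) : ℂ) * g t) * (((legendreP n).eval s : ℝ) : ℂ)‖ with hE
  have hbd : ∀ N, BddAbove (E N '' Set.Icc (-1:ℝ) 1) := fun N =>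
    (isCompact_Icc.image (hcontE N)).bddAbove
  have hne : ∀ N, (E N '' Set.Icc (-1:ℝ) 1).Nonempty := fun N =>
    ⟨_, 0, ⟨by norm_num, by norm_num⟩, rfl⟩
  have hnn : ∀ N, 0 ≤ sSup (E N '' Set.Icc (-1:ℝ) 1) := by
    intro N
    apply Real.sSup_nonneg
    rintro _ ⟨s, _, rfl⟩
    exact norm_nonneg _
  refine ⟨fun N => sSup (E N '' Set.Icc (-1:ℝ) 1), hnn, ?_, fun N s hs => le_csSup (hbd N) ⟨s, hs, rfl⟩⟩
  rw [Metric.tendsto_atTop]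
  intro ε hε
  obtain ⟨N1, h1⟩ := legS_unif (fun t => (g t).re) (fun t => (k t).re)
    (fun s => Complex.reCLM.hasFDerivAt.comp_hasDerivAt s (hd s)) (Complex.continuous_re.comp hk) (ε/4) (by positivity)
  obtain ⟨N2, h2⟩ := legS_unif (fun t => (g t).im) (fun t => (k t).im)
    (fun s => Complex.imCLM.hasFDerivAt.comp_hasDerivAt s (hd s)) (Complex.continuous_im.comp hk) (ε/4) (by positivity)
  refine ⟨max N1 N2, fun N hN => ?_⟩
  rw [Real.dist_eq, sub_zero, abs_of_nonneg (hnn N)]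
  refine lt_of_le_of_lt (csSup_le (hne N) (a := ε/2) ?_) (by linarith)
  rintro _ ⟨s, hs, rfl⟩
  simp only [hE, key]
  refine (norm_add_le _ _).trans ?_
  rw [norm_mul, Complex.norm_I, mul_one, Complex.norm_real, Complex.norm_real, Real.norm_eq_abs, Real.norm_eq_abs]
  have a1 := h1 N (le_trans (le_max_left _ _) hN) s hs
  have a2 := h2 N (le_trans (le_max_right _ _) hN) s hs
  linarith

lemma leibniz_int (F F' : ℝ → ℝ → ℂ) (hF : Continuous (Function.uncurry F)) (hF' : Continuous (Function.uncurry F'))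
    (hd : ∀ s a, HasDerivAt (fun s => F s a) (F' s a) s) (u : ℝ → ℝ) (u' s0 : ℝ) (hu : HasDerivAt u u' s0) :
    HasDerivAt (fun s => ∫ a in (0:ℝ)..(u s), F s a) (u' * F s0 (u s0) + ∫ a in (0:ℝ)..(u s0), F' s0 a) s0 := by
  have cF : ∀ s, Continuous (F s) := fun s => hF.comp (Continuous.prodMk_right s)
  have cF' : ∀ s, Continuous (F' s) := fun s => hF'.comp (Continuous.prodMk_right s)
  have h1 : HasDerivAt (fun s => ∫ a in (0:ℝ)..(u s0), F s a) (∫ a in (0:ℝ)..(u s0), F' s0 a) s0 := by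
    obtain ⟨M, hM⟩ := ((isCompact_Icc (a := s0 - 1) (b := s0 + 1)).prod
      (isCompact_uIcc (a := 0) (b := u s0))).exists_bound_of_continuousOn hF'.continuousOn
    refine (intervalIntegral.hasDerivAt_integral_of_dominated_loc_of_deriv_le (bound := fun _ => M)
      (F' := F') (s := Set.Icc (s0 - 1) (s0 + 1)) (Icc_mem_nhds (by linarith) (by linarith)) ?_ ?_ ?_ ?_ ?_ ?_).2
    · exact Filter.Eventually.of_forall fun s => (cF s).aestronglyMeasurable
    · exact (cF s0).intervalIntegrable _ _
    · exact (cF' s0).aestronglyMeasurable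
    · exact Filter.Eventually.of_forall fun t ht x hx => hM (x, t) ⟨hx, Set.uIoc_subset_uIcc ht⟩
    · simp
    · exact Filter.Eventually.of_forall fun t _ x _ => hd x t
  have h2 : HasDerivAt (fun s => ∫ a in (u s0)..(u s), F s a) (u' * F s0 (u s0)) s0 := by
    have e : (fun s => ∫ a in (u s0)..(u s), F s a) = fun s => (∫ a in (u s0)..(u s), (F s a - F s0 (u s0))) +
        (u s - u s0 : ℝ) * F s0 (u s0) := by
      ext s
      rw [intervalIntegral.integral_sub ((cF s).intervalIntegrable _ _) (by simp)]
      simp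
    rw [e]
    have h3 : HasDerivAt (fun s => ((u s - u s0 : ℝ) : ℂ) * F s0 (u s0)) (u' * F s0 (u s0)) s0 :=
      ((hu.sub_const _).ofReal_comp).mul_const _
    have h4 : HasDerivAt (fun s => ∫ a in (u s0)..(u s), (F s a - F s0 (u s0))) 0 s0 := by
      rw [hasDerivAt_iff_isLittleO]
      simp only [intervalIntegral.integral_same, sub_zero, smul_zero]
      have hO : (fun s => u s - u s0) =O[𝓝 s0] fun s => s - s0 := hu.isBigO_sub
      refine Asymptotics.IsLittleO.trans_isBigO ?_ hO
      rw [Asymptotics.isLittleO_iff]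
      intro ε hε
      have hc : ContinuousAt (Function.uncurry F) (s0, u s0) := hF.continuousAt
      obtain ⟨δ, hδ, hball⟩ := Metric.continuousAt_iff.1 hc ε hε
      have hu1 : ∀ᶠ s in 𝓝 s0, dist (u s) (u s0) < δ :=
        hu.continuousAt (Metric.ball_mem_nhds _ hδ)
      filter_upwards [hu1, Metric.ball_mem_nhds s0 hδ] with s hs1 hs2
      refine intervalIntegral.norm_integral_le_of_norm_le_const ?_
      intro a ha
      have ha' : |a - u s0| ≤ |u s - u s0| := Set.abs_sub_left_of_mem_uIcc (Set.uIoc_subset_uIcc ha)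
      have := @hball (s, a) (by
        rw [Prod.dist_eq]
        exact max_lt hs2 (lt_of_le_of_lt ha' hs1))
      rw [dist_eq_norm] at this
      exact this.le
    have := h4.add h3
    rwa [zero_add] at this
  have e : (fun s => ∫ a in (0:ℝ)..(u s), F s a) = fun s => (∫ a in (u s0)..(u s), F s a) + ∫ a in (0:ℝ)..(u s0), F s a := by
    ext s
    rw [add_comm, intervalIntegral.integral_add_adjacent_intervals ((cF s).intervalIntegrable _ _) ((cF s).intervalIntegrable _ _)]
  rw [e]
  exact h2.add h1

lemma exists_goursat (Q : ℝ → ℂ) (hQ : Continuous Q) (b : ℝ) (hb : 0 < b) :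
    ∃ G : ℝ → ℝ → ℂ, Continuous (Function.uncurry G) ∧ ∀ u ∈ Set.Icc 0 b, ∀ v ∈ Set.Icc 0 b,
      G u v = 1 / 2 * (∫ s in (0:ℝ)..u, Q s) + ∫ α in (0:ℝ)..u, ∫ β in (0:ℝ)..v, Q (α + β) * G α β := by
  obtain ⟨M, hM⟩ := (isCompact_Icc (a := (0:ℝ)) (b := b + b)).exists_bound_of_continuousOn hQ.continuousOn
  have hM0 : 0 ≤ M := (norm_nonneg _).trans (hM 0 ⟨le_rfl, by linarith⟩)
  set l : ℝ := 2 * b * M + 1 with hl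
  have hl0 : 0 < l := by positivity
  let S := Set.Icc (0:ℝ) b
  let pr : ℝ → S := Set.projIcc 0 b hb.le
  have hpr : Continuous pr := continuous_projIcc
  let ext : C(S × S, ℂ) → ℝ → ℝ → ℂ := fun g α β => (Real.exp (l * α) : ℂ) * g (pr α, pr β)
  have hext : ∀ g, Continuous (Function.uncurry (ext g)) := by
    intro g
    have : Function.uncurry (ext g) = fun p : ℝ × ℝ => (Real.exp (l * p.1) : ℂ) * g (pr p.1, pr p.2) := rfl
    rw [this]
    fun_prop
  let J : (ℝ → ℝ → ℂ) → ℝ → ℝ → ℂ := fun g u v => ∫ α in (0:ℝ)..u, ∫ β in (0:ℝ)..v, Q (α + β) * g α β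
  have cin : ∀ g : ℝ → ℝ → ℂ, Continuous (Function.uncurry g) →
      Continuous fun p : ℝ × ℝ => ∫ β in (0:ℝ)..p.2, Q (p.1 + β) * g p.1 β := by
    intro g hg
    apply intervalIntegral.continuous_parametric_intervalIntegral_of_continuous
      (f := fun (p : ℝ × ℝ) β => Q (p.1 + β) * g p.1 β) _ continuous_snd
    have : Continuous fun z : (ℝ × ℝ) × ℝ => g z.1.1 z.2 :=
      hg.comp ((continuous_fst.comp continuous_fst).prodMk continuous_snd)
    simp only [Function.uncurry_def]
    fun_prop
  have cJ : ∀ g : ℝ → ℝ → ℂ, Continuous (Function.uncurry g) → Continuous fun p : ℝ × ℝ => J g p.1 p.2 := by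
    intro g hg
    apply intervalIntegral.continuous_parametric_intervalIntegral_of_continuous
      (f := fun (p : ℝ × ℝ) α => ∫ β in (0:ℝ)..p.2, Q (α + β) * g α β) _ continuous_fst
    exact (cin g hg).comp (continuous_snd.prodMk (continuous_snd.comp continuous_fst))
  have cI : Continuous fun u : ℝ => ∫ s in (0:ℝ)..u, Q s :=
    intervalIntegral.continuous_primitive (fun a b => hQ.intervalIntegrable a b) 0
  let Φ : C(S × S, ℂ) → C(S × S, ℂ) := fun g =>
    ⟨fun p => (Real.exp (-(l * p.1)) : ℂ) * (1 / 2 * (∫ s in (0:ℝ)..(p.1 : ℝ), Q s) + J (ext g) p.1 p.2), by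
      have h1 : Continuous fun p : S × S => J (ext g) p.1 p.2 :=
        (cJ _ (hext g)).comp ((continuous_subtype_val.comp continuous_fst).prodMk (continuous_subtype_val.comp continuous_snd))
      have h2 : Continuous fun p : S × S => ∫ s in (0:ℝ)..(p.1 : ℝ), Q s :=
        cI.comp (continuous_subtype_val.comp continuous_fst)
      fun_prop⟩
  have hcontr : ContractingWith (1/2) Φ := by
    refine ⟨by norm_num, LipschitzWith.of_dist_le_mul fun g1 g2 => ?_⟩
    rw [ContinuousMap.dist_le (by positivity)]
    rintro ⟨⟨u, hu⟩, ⟨v, hv⟩⟩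
    set D := dist g1 g2 with hD
    have hD0 : 0 ≤ D := dist_nonneg
    show dist ((Real.exp (-(l * u)) : ℂ) * (1 / 2 * (∫ s in (0:ℝ)..u, Q s) + J (ext g1) u v))
      ((Real.exp (-(l * u)) : ℂ) * (1 / 2 * (∫ s in (0:ℝ)..u, Q s) + J (ext g2) u v)) ≤ _
    rw [dist_eq_norm, ← mul_sub, add_sub_add_left_eq_sub, norm_mul, Complex.norm_real, Real.norm_eq_abs,
      abs_of_pos (Real.exp_pos _)]
    have hin : ∀ g : C(S × S, ℂ), Continuous fun α => ∫ β in (0:ℝ)..v, Q (α + β) * ext g α β := fun g =>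
      (cin _ (hext g)).comp (Continuous.prodMk_left v)
    have hin2 : ∀ (g : C(S × S, ℂ)) α, Continuous fun β => Q (α + β) * ext g α β := by
      intro g α
      have : Continuous fun β => ext g α β := (hext g).comp (Continuous.prodMk_right α)
      fun_prop
    have hJ : ‖J (ext g1) u v - J (ext g2) u v‖ ≤ ∫ α in (0:ℝ)..u, b * M * D * Real.exp (l * α) := by
      simp only [J]
      rw [← intervalIntegral.integral_sub ((hin g1).intervalIntegrable _ _) ((hin g2).intervalIntegrable _ _)]
      apply intervalIntegral.norm_integral_le_of_norm_le hu.1 _ (Continuous.intervalIntegrable (by fun_prop) _ _)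
      refine Filter.Eventually.of_forall fun α hα => ?_
      rw [← intervalIntegral.integral_sub ((hin2 g1 α).intervalIntegrable _ _) ((hin2 g2 α).intervalIntegrable _ _)]
      have := intervalIntegral.norm_integral_le_of_norm_le_const (a := 0) (b := v)
        (C := M * D * Real.exp (l * α)) (f := fun β => Q (α + β) * ext g1 α β - Q (α + β) * ext g2 α β) (by
          intro β hβ
          rw [Set.uIoc_of_le hv.1] at hβ
          have q1 := hM (α + β) ⟨by linarith [hα.1, hβ.1], by linarith [hα.2, hβ.2, hu.2, hv.2]⟩
          have q2 : ‖g1 (pr α, pr β) - g2 (pr α, pr β)‖ ≤ D := by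
            rw [← dist_eq_norm]; exact ContinuousMap.dist_apply_le_dist _
          rw [← mul_sub, ← mul_sub, norm_mul, norm_mul, Complex.norm_real, Real.norm_eq_abs, abs_of_pos (Real.exp_pos _)]
          calc _ ≤ M * (Real.exp (l * α) * D) := by gcongr
            _ = _ := by ring)
      rw [sub_zero, abs_of_nonneg hv.1] at this
      refine this.trans ?_
      have : 0 ≤ M * D * Real.exp (l * α) := by positivity
      nlinarith [hv.2]
    have hintg : ∫ α in (0:ℝ)..u, b * M * D * Real.exp (l * α) = b * M * D * ((Real.exp (l * u) - 1) / l) := by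
      rw [intervalIntegral.integral_const_mul, intervalIntegral.integral_comp_mul_left (fun x => Real.exp x) hl0.ne']
      simp [div_eq_inv_mul]
    rw [hintg] at hJ
    have hexp : Real.exp (-(l * u)) * Real.exp (l * u) = 1 := by rw [← Real.exp_add]; simp
    have hep := Real.exp_pos (-(l * u))
    calc _ ≤ Real.exp (-(l * u)) * (b * M * D * ((Real.exp (l * u) - 1) / l)) := by gcongr
      _ = b * M * D * (1 - Real.exp (-(l * u))) / l := by
        have e : Real.exp (-(l * u)) * (b * M * D * ((Real.exp (l * u) - 1) / l)) =
            b * M * D * (Real.exp (-(l * u)) * Real.exp (l * u) - Real.exp (-(l * u))) / l := by ring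
        rw [e, hexp]
      _ ≤ b * M * D / l := by
        have : 0 ≤ b * M * D := by positivity
        apply div_le_div_of_nonneg_right _ hl0.le
        nlinarith
      _ ≤ 1 / 2 * D := by
        rw [div_le_iff₀ hl0, hl]
        nlinarith
      _ = _ := by simp
  set g := ContractingWith.fixedPoint Φ hcontr with hg
  have hfix : Φ g = g := hcontr.fixedPoint_isFixedPt
  refine ⟨ext g, hext g, fun u hu v hv => ?_⟩
  have e1 : pr u = ⟨u, hu⟩ := Set.projIcc_of_mem hb.le hu
  have e2 : pr v = ⟨v, hv⟩ := Set.projIcc_of_mem hb.le hv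
  have h1 : (Real.exp (-(l * u)) : ℂ) * (1 / 2 * (∫ s in (0:ℝ)..u, Q s) + J (ext g) u v) = g (⟨u, hu⟩, ⟨v, hv⟩) :=
    congrArg (fun f : C(S × S, ℂ) => f (⟨u, hu⟩, ⟨v, hv⟩)) hfix
  have h2 : ext g u v = (Real.exp (l * u) : ℂ) * g (⟨u, hu⟩, ⟨v, hv⟩) := by
    simp only [ext, e1, e2]
  have hexp : (Real.exp (l * u) : ℂ) * (Real.exp (-(l * u)) : ℂ) = 1 := by
    rw [← Complex.ofReal_mul, ← Real.exp_add]; simp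
  rw [h2, ← h1, ← mul_assoc, hexp, one_mul]

/-- the operator T_x -/
def trA (H : ℝ → ℝ → ℂ) (h : ℝ → ℂ) (x : ℝ) : ℂ := ∫ u in (0:ℝ)..x, H u (x - u) * h (2 * u - x)

lemma exists_transmutation (Q : ℝ → ℂ) (hQ : Continuous Q) (b : ℝ) (hb : 0 < b) :
    ∃ H : ℝ → ℝ → ℂ, 
      (∀ x : ℝ, ∃ k : ℝ → ℂ, Continuous k ∧
        ∀ s, HasDerivAt (fun s => H (x * (1 + s) / 2) (x * (1 - s) / 2)) (k s) s) ∧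
      ∀ h h' h'' : ℝ → ℂ, (∀ x, HasDerivAt h (h' x) x) → (∀ x, HasDerivAt h' (h'' x) x) → Continuous h'' →
        ∃ T' : ℝ → ℂ, (∀ x, HasDerivAt (fun x => h x + 2 * trA H h x) (T' x) x) ∧
          (∀ x ∈ Set.Icc 0 b, HasDerivAt T' (Q x * (h x + 2 * trA H h x) + (h'' x + 2 * trA H h'' x)) x) ∧
          T' 0 = h' 0 := by
  obtain ⟨G, hG, hGe⟩ := exists_goursat Q hQ b hb
  have cin : Continuous fun p : ℝ × ℝ => ∫ β in (0:ℝ)..p.2, Q (p.1 + β) * G p.1 β := by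
    apply intervalIntegral.continuous_parametric_intervalIntegral_of_continuous
      (f := fun (p : ℝ × ℝ) β => Q (p.1 + β) * G p.1 β) _ continuous_snd
    have : Continuous fun z : (ℝ × ℝ) × ℝ => G z.1.1 z.2 :=
      hG.comp ((continuous_fst.comp continuous_fst).prodMk continuous_snd)
    simp only [Function.uncurry_def]
    fun_prop
  set J : ℝ → ℝ → ℂ := fun α v => ∫ β in (0:ℝ)..v, Q (α + β) * G α β with hJ
  have cJ : Continuous (Function.uncurry J) := cin
  have dJ : ∀ α v, HasDerivAt (fun v => J α v) (Q (α + v) * G α v) v := by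
    intro α v
    have hc : Continuous fun β => Q (α + β) * G α β := by
      have : Continuous fun β => G α β := hG.comp (Continuous.prodMk_right α)
      fun_prop
    exact intervalIntegral.integral_hasDerivAt_right (hc.intervalIntegrable _ _)
      hc.stronglyMeasurable.stronglyMeasurableAtFilter hc.continuousAt
  have cQG : Continuous fun p : ℝ × ℝ => Q (p.1 + p.2) * G p.1 p.2 := by
    have : Continuous fun p : ℝ × ℝ => G p.1 p.2 := hG
    fun_prop
  have dI : ∀ x, HasDerivAt (fun x => ∫ s in (0:ℝ)..x, Q s) (Q x) x := fun x =>
    intervalIntegral.integral_hasDerivAt_right (hQ.intervalIntegrable _ _)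
      hQ.stronglyMeasurable.stronglyMeasurableAtFilter hQ.continuousAt
  have cI : Continuous fun x => ∫ s in (0:ℝ)..x, Q s := continuous_iff_continuousAt.2 fun x => (dI x).continuousAt
  set H : ℝ → ℝ → ℂ := fun u v => 1 / 2 * (∫ s in (0:ℝ)..u, Q s) + ∫ α in (0:ℝ)..u, J α v with hH
  set H2 : ℝ → ℝ → ℂ := fun u v => ∫ α in (0:ℝ)..u, Q (α + v) * G α v with hH2
  have cH2 : Continuous fun p : ℝ × ℝ => H2 p.1 p.2 := by
    apply intervalIntegral.continuous_parametric_intervalIntegral_of_continuous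
      (f := fun (p : ℝ × ℝ) α => Q (α + p.2) * G α p.2) _ continuous_fst
    exact cQG.comp (continuous_snd.prodMk (continuous_snd.comp continuous_fst))
  have cH : Continuous fun p : ℝ × ℝ => H p.1 p.2 := by
    have h1 : Continuous fun p : ℝ × ℝ => ∫ α in (0:ℝ)..p.1, J α p.2 := by
      apply intervalIntegral.continuous_parametric_intervalIntegral_of_continuous
        (f := fun (p : ℝ × ℝ) α => J α p.2) _ continuous_fst
      exact cJ.comp (continuous_snd.prodMk (continuous_snd.comp continuous_fst))
    have h2 : Continuous fun p : ℝ × ℝ => ∫ s in (0:ℝ)..p.1, Q s := cI.comp continuous_fst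
    exact (continuous_const.mul h2).add h1
  have dHv : ∀ u v, HasDerivAt (fun v => H u v) (H2 u v) v := by
    intro u v
    have := leibniz_int (fun v α => J α v) (fun v α => Q (α + v) * G α v)
      (cJ.comp (continuous_snd.prodMk continuous_fst)) (cQG.comp (continuous_snd.prodMk continuous_fst))
      (fun v α => dJ α v) (fun _ => u) 0 v (hasDerivAt_const v u)
    simp only [Complex.ofReal_zero, zero_mul, zero_add] at this
    exact this.const_add _
  have dH2u : ∀ u v, HasDerivAt (fun u => H2 u v) (Q (u + v) * G u v) u := by
    intro u v
    have hc : Continuous fun α => Q (α + v) * G α v := cQG.comp (Continuous.prodMk_left v)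
    exact intervalIntegral.integral_hasDerivAt_right (hc.intervalIntegrable _ _)
      hc.stronglyMeasurable.stronglyMeasurableAtFilter hc.continuousAt
  have H20 : ∀ v, H2 0 v = 0 := by intro v; simp [hH2]
  have Hu0 : ∀ u, H u 0 = 1 / 2 * ∫ s in (0:ℝ)..u, Q s := by intro u; simp [hH, hJ]
  have HG : ∀ u ∈ Set.Icc 0 b, ∀ v ∈ Set.Icc 0 b, G u v = H u v := hGe
  refine ⟨H, ?_, ?_⟩
  · intro x
    have hu : ∀ s, HasDerivAt (fun s : ℝ => x * (1 + s) / 2) (x / 2) s := by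
      intro s
      have := (((hasDerivAt_id s).const_add 1).const_mul x).div_const 2
      simpa using this
    have hv : ∀ s, HasDerivAt (fun s : ℝ => x * (1 - s) / 2) (-x / 2) s := by
      intro s
      have := (((hasDerivAt_id s).const_sub 1).const_mul x).div_const 2
      simpa using this
    refine ⟨fun s => 1 / 2 * ((x/2 : ℝ) * Q (x * (1 + s) / 2)) + 
      ((x/2 : ℝ) * J (x * (1 + s) / 2) (x * (1 - s) / 2) + ∫ α in (0:ℝ)..(x * (1 + s) / 2),
        ((-x/2 : ℝ) : ℂ) * (Q (α + x * (1 - s) / 2) * G α (x * (1 - s) / 2))), ?_, ?_⟩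
    · have h1 : Continuous fun s : ℝ => J (x * (1 + s) / 2) (x * (1 - s) / 2) :=
        cJ.comp (Continuous.prodMk (by fun_prop) (by fun_prop))
      have h2 : Continuous fun s : ℝ => ∫ α in (0:ℝ)..(x * (1 + s) / 2),
        ((-x/2 : ℝ) : ℂ) * (Q (α + x * (1 - s) / 2) * G α (x * (1 - s) / 2)) := by
        apply intervalIntegral.continuous_parametric_intervalIntegral_of_continuous
          (f := fun (s : ℝ) α => ((-x/2 : ℝ) : ℂ) * (Q (α + x * (1 - s) / 2) * G α (x * (1 - s) / 2))) _ (by fun_prop)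
        exact continuous_const.mul (cQG.comp (f := fun z : ℝ × ℝ => (z.2, x * (1 - z.1) / 2)) (by fun_prop))
      fun_prop
    · intro s
      refine HasDerivAt.add ?_ ?_
      · have := (dI (x * (1 + s) / 2)).scomp s (hu s)
        exact (this.const_mul _)
      · refine leibniz_int (fun s α => J α (x * (1 - s) / 2))
          (fun s α => ((-x/2 : ℝ) : ℂ) * (Q (α + x * (1 - s) / 2) * G α (x * (1 - s) / 2))) ?_ ?_ ?_ _ _ s (hu s)
        · exact cJ.comp (f := fun z : ℝ × ℝ => (z.2, x * (1 - z.1) / 2)) (by fun_prop)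
        · exact continuous_const.mul (cQG.comp (f := fun z : ℝ × ℝ => (z.2, x * (1 - z.1) / 2)) (by fun_prop))
        · intro s α
          exact (dJ α _).scomp s (hv s)
  ·
    set B : (ℝ → ℂ) → ℝ → ℂ := fun h x => ∫ u in (0:ℝ)..x, H2 u (x - u) * h (2 * u - x) with hB
    have dA : ∀ h h' : ℝ → ℂ, (∀ x, HasDerivAt h (h' x) x) → Continuous h' → ∀ x,
        HasDerivAt (trA H h) (H x 0 * h x + (B h x - trA H h' x)) x := by
      intro h h' hd hc x
      have ch : Continuous h := continuous_iff_continuousAt.2 fun x => (hd x).continuousAt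
      have c1 : Continuous fun z : ℝ × ℝ => H2 z.2 (z.1 - z.2) * h (2 * z.2 - z.1) :=
        (cH2.comp (f := fun z : ℝ × ℝ => (z.2, z.1 - z.2)) (by fun_prop)).mul (by fun_prop)
      have c2 : ∀ h : ℝ → ℂ, Continuous h → Continuous fun z : ℝ × ℝ => H z.2 (z.1 - z.2) * h (2 * z.2 - z.1) :=
        fun h ch => (cH.comp (f := fun z : ℝ × ℝ => (z.2, z.1 - z.2)) (by fun_prop)).mul (by fun_prop)
      have := leibniz_int (fun x u => H u (x - u) * h (2 * u - x))
        (fun x u => H2 u (x - u) * h (2 * u - x) - H u (x - u) * h' (2 * u - x))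
        (c2 h ch) (c1.sub (c2 h' hc)) (by
          intro s a
          have e1 : HasDerivAt (fun s => H a (s - a)) (H2 a (s - a)) s := by
            have := (dHv a (s - a)).scomp s ((hasDerivAt_id s).sub_const a)
            exact this.congr_deriv (by simp)
          have e2 : HasDerivAt (fun s => h (2 * a - s)) (- h' (2 * a - s)) s := by
            have := (hd (2 * a - s)).scomp s ((hasDerivAt_id s).const_sub (2 * a))
            exact this.congr_deriv (by simp)
          refine (e1.mul e2).congr_deriv ?_
          ring) id 1 x (hasDerivAt_id x)
      simp only [id] at this
      rw [intervalIntegral.integral_sub] at this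
      · refine this.congr_deriv ?_
        simp only [Complex.ofReal_one, one_mul, sub_self, trA, hB]
        congr 3; ring
      · exact (c1.comp (Continuous.prodMk_right x)).intervalIntegrable _ _
      · exact ((c2 h' hc).comp (Continuous.prodMk_right x)).intervalIntegrable _ _
    have dB : ∀ h h' : ℝ → ℂ, (∀ x, HasDerivAt h (h' x) x) → Continuous h' → ∀ x ∈ Set.Icc 0 b,
        HasDerivAt (B h) (Q x * trA H h x + B h' x) x := by
      intro h h' hd hc x hx
      have ch : Continuous h := continuous_iff_continuousAt.2 fun x => (hd x).continuousAt
      have flip : ∀ (K : ℝ → ℝ → ℂ) (h : ℝ → ℂ) (x : ℝ), ∫ u in (0:ℝ)..x, K u (x - u) * h (2 * u - x) =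
          ∫ v in (0:ℝ)..x, K (x - v) v * h (x - 2 * v) := by
        intro K h x
        have := intervalIntegral.integral_comp_sub_left (a := 0) (b := x) (fun u => K u (x - u) * h (2 * u - x)) x
        simp only [sub_self, sub_zero] at this
        rw [← this]
        congr 1; ext v; congr 2 <;> ring
      have e : B h = fun x => ∫ v in (0:ℝ)..x, H2 (x - v) v * h (x - 2 * v) := by
        ext x; exact flip H2 h x
      rw [e]
      have c1 : ∀ h : ℝ → ℂ, Continuous h → Continuous fun z : ℝ × ℝ => H2 (z.1 - z.2) z.2 * h (z.1 - 2 * z.2) :=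
        fun h ch => (cH2.comp (f := fun z : ℝ × ℝ => (z.1 - z.2, z.2)) (by fun_prop)).mul (by fun_prop)
      have c2 : Continuous fun z : ℝ × ℝ => Q z.1 * G (z.1 - z.2) z.2 * h (z.1 - 2 * z.2) := by
        have : Continuous fun z : ℝ × ℝ => G (z.1 - z.2) z.2 :=
          hG.comp (f := fun z : ℝ × ℝ => (z.1 - z.2, z.2)) (by fun_prop)
        fun_prop
      have := leibniz_int (fun x v => H2 (x - v) v * h (x - 2 * v))
        (fun x v => Q x * G (x - v) v * h (x - 2 * v) + H2 (x - v) v * h' (x - 2 * v))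
        (c1 h ch) (c2.add (c1 h' hc)) (by
          intro s a
          have e1 : HasDerivAt (fun s => H2 (s - a) a) (Q s * G (s - a) a) s := by
            have := (dH2u (s - a) a).scomp s ((hasDerivAt_id s).sub_const a)
            exact this.congr_deriv (by simp)
          have e2 : HasDerivAt (fun s => h (s - 2 * a)) (h' (s - 2 * a)) s := by
            have := (hd (s - 2 * a)).scomp s ((hasDerivAt_id s).sub_const (2 * a))
            exact this.congr_deriv (by simp)
          exact e1.mul e2) id 1 x (hasDerivAt_id x)
      simp only [id] at this
      rw [intervalIntegral.integral_add] at this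
      · refine this.congr_deriv ?_
        simp only [sub_self, H20, zero_mul, mul_zero, zero_add]
        congr 1
        · rw [trA, flip, ← intervalIntegral.integral_const_mul]
          apply intervalIntegral.integral_congr
          intro v hv
          rw [Set.uIcc_of_le hx.1] at hv
          simp only
          rw [HG _ ⟨by linarith [hv.2], by linarith [hv.1, hx.2]⟩ _ ⟨hv.1, hv.2.trans hx.2⟩, mul_assoc]
        · exact (flip H2 h' x).symm
      · exact (c2.comp (Continuous.prodMk_right x)).intervalIntegrable _ _
      · exact ((c1 h' hc).comp (Continuous.prodMk_right x)).intervalIntegrable _ _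
    intro h h' h'' hd hd' hc
    have ch' : Continuous h' := continuous_iff_continuousAt.2 fun x => (hd' x).continuousAt
    refine ⟨fun x => h' x + 2 * (H x 0 * h x + (B h x - trA H h' x)), ?_, ?_, ?_⟩
    · intro x
      exact (hd x).add ((dA h h' hd ch' x).const_mul 2)
    · intro x hx
      have dHx : HasDerivAt (fun x => H x 0) (1 / 2 * Q x) x := by
        simp_rw [Hu0]; exact (dI x).const_mul _
      have := (hd' x).add (((dHx.mul (hd x)).add ((dB h h' hd ch' x hx).sub (dA h' h'' hd' hc x))).const_mul 2)
      refine this.congr_deriv ?_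
      ring
    · simp [hB, trA, Hu0]


lemma ode_zero (b : ℝ) (c d d' : ℝ → ℂ) (hc : ContinuousOn c (Set.Icc 0 b))
    (h1 : ∀ x ∈ Set.Icc 0 b, HasDerivAt d (d' x) x)
    (h2 : ∀ x ∈ Set.Icc 0 b, HasDerivAt d' (c x * d x) x)
    (h0 : d 0 = 0) (h0' : d' 0 = 0) : ∀ x ∈ Set.Icc 0 b, d x = 0 := by
  obtain ⟨M, hM⟩ := isCompact_Icc.exists_bound_of_continuousOn hc
  have key := eq_zero_of_abs_deriv_le_mul_abs_self_of_eq_zero_right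
    (f := fun x => (d x, d' x)) (f' := fun x => (d' x, c x * d x)) (K := max 1 M) (a := 0) (b := b)
    (fun x hx => ((h1 x hx).continuousAt.prodMk (h2 x hx).continuousAt).continuousWithinAt)
    (fun x hx => ((h1 x ⟨hx.1, hx.2.le⟩).prodMk (h2 x ⟨hx.1, hx.2.le⟩)).hasDerivWithinAt)
    (by simp [h0, h0']) (by
      intro x hx
      have hx' : x ∈ Set.Icc 0 b := ⟨hx.1, hx.2.le⟩
      have e1 : ‖d x‖ ≤ ‖(d x, d' x)‖ := norm_fst_le (d x, d' x)
      have e2 : ‖d' x‖ ≤ ‖(d x, d' x)‖ := norm_snd_le (d x, d' x)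
      have e3 := hM x hx'
      have m1 : (1:ℝ) ≤ max 1 M := le_max_left _ _
      have m2 : M ≤ max 1 M := le_max_right _ _
      rw [Prod.norm_mk (d' x)]
      apply max_le
      · calc ‖d' x‖ ≤ 1 * ‖(d x, d' x)‖ := by linarith
          _ ≤ _ := by gcongr
      · rw [norm_mul]
        exact mul_le_mul (e3.trans m2) e1 (norm_nonneg _) (by linarith))
  intro x hx
  exact congrArg Prod.fst (key x hx)

lemma ode_uniq (b : ℝ) (c r T T' S S' : ℝ → ℂ) (hc : ContinuousOn c (Set.Icc 0 b))
    (h1 : ∀ x ∈ Set.Icc 0 b, HasDerivAt T (T' x) x)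
    (h2 : ∀ x ∈ Set.Icc 0 b, HasDerivAt T' (c x * T x + r x) x)
    (k1 : ∀ x ∈ Set.Icc 0 b, HasDerivAt S (S' x) x)
    (k2 : ∀ x ∈ Set.Icc 0 b, HasDerivAt S' (c x * S x + r x) x)
    (h0 : T 0 = S 0) (h0' : T' 0 = S' 0) : ∀ x ∈ Set.Icc 0 b, T x = S x := by
  intro x hx
  have := ode_zero b c (fun x => T x - S x) (fun x => T' x - S' x) hc
    (fun x hx => (h1 x hx).sub (k1 x hx))
    (fun x hx => ((h2 x hx).sub (k2 x hx)).congr_deriv (by ring)) (by simp [h0]) (by simp [h0']) x hx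
  exact sub_eq_zero.1 this

lemma fp_ode (b : ℝ) (q f f' : ℝ → ℂ) (hf : ∀ x ∈ Set.Icc 0 b, HasDerivAt f (f' x) x)
    (hf' : ∀ x ∈ Set.Icc 0 b, HasDerivAt f' (q x * f x) x)
    (hfne : ∀ x ∈ Set.Icc 0 b, f x ≠ 0) (a c : ℂ) (W2 W1 W0 : ℝ → ℂ)
    (d2 : ∀ x ∈ Set.Icc 0 b, HasDerivAt W2 (a * (W1 x * ((f x)^2)⁻¹)) x)
    (d1 : ∀ x ∈ Set.Icc 0 b, HasDerivAt W1 (c * (W0 x * (f x)^2)) x) :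
    (∀ x ∈ Set.Icc 0 b, HasDerivAt (fun x => f x * W2 x) (f' x * W2 x + a * W1 x * (f x)⁻¹) x) ∧
    (∀ x ∈ Set.Icc 0 b, HasDerivAt (fun x => f' x * W2 x + a * W1 x * (f x)⁻¹)
      (q x * (f x * W2 x) + a * c * (f x * W0 x)) x) := by
  constructor
  · intro x hx
    refine ((hf x hx).mul (d2 x hx)).congr_deriv ?_
    have := hfne x hx
    field_simp
  · intro x hx
    refine (((hf' x hx).mul (d2 x hx)).add (((d1 x hx).const_mul a).mul ((hf x hx).inv (hfne x hx)))).congr_deriv ?_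
    have := hfne x hx
    simp only [Pi.inv_apply]
    field_simp
    ring

lemma formalX_congr (f F : ℝ → ℂ) (b : ℝ) (h : ∀ x ∈ Set.Icc 0 b, f x = F x) (n : ℕ) :
    ∀ x ∈ Set.Icc 0 b, formalX f n x = formalX F n x := by
  induction n with
  | zero => intro x _; rfl
  | succ n ih =>
    intro x hx
    simp only [formalX]
    congr 1
    apply intervalIntegral.integral_congr
    intro s hs
    rw [Set.uIcc_of_le hx.1] at hs
    have hs' : s ∈ Set.Icc 0 b := ⟨hs.1, hs.2.trans hx.2⟩
    simp only [ih s hs', h s hs']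

lemma formalXt_congr (f F : ℝ → ℂ) (b : ℝ) (h : ∀ x ∈ Set.Icc 0 b, f x = F x) (n : ℕ) :
    ∀ x ∈ Set.Icc 0 b, formalXt f n x = formalXt F n x := by
  induction n with
  | zero => intro x _; rfl
  | succ n ih =>
    intro x hx
    simp only [formalXt]
    congr 1
    apply intervalIntegral.integral_congr
    intro s hs
    rw [Set.uIcc_of_le hx.1] at hs
    have hs' : s ∈ Set.Icc 0 b := ⟨hs.1, hs.2.trans hx.2⟩
    simp only [ih s hs', h s hs']

lemma ftc_cont (g : ℝ → ℂ) (hg : Continuous g) (c : ℂ) (x : ℝ) :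
    HasDerivAt (fun x => c * ∫ s in (0:ℝ)..x, g s) (c * g x) x :=
  (intervalIntegral.integral_hasDerivAt_right (hg.intervalIntegrable _ _)
      hg.stronglyMeasurable.stronglyMeasurableAtFilter hg.continuousAt).const_mul c

lemma formalX_deriv (F : ℝ → ℂ) (hF : Continuous F) (hne : ∀ x, F x ≠ 0) (n : ℕ) :
    Continuous (formalX F n) ∧ ∀ x, HasDerivAt (formalX F (n + 1))
      ((n + 1 : ℂ) * (formalX F n x * ((F x) ^ 2) ^ ((-1 : ℤ) ^ (n + 1)))) x := by
  have main : ∀ n, Continuous (formalX F n) → ∀ x, HasDerivAt (formalX F (n + 1))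
      ((n + 1 : ℂ) * (formalX F n x * ((F x) ^ 2) ^ ((-1 : ℤ) ^ (n + 1)))) x := by
    intro n hn x
    have hc : Continuous fun s => formalX F n s * ((F s) ^ 2) ^ ((-1 : ℤ) ^ (n + 1)) :=
      hn.mul ((hF.pow 2).zpow₀ _ fun x => Or.inl (pow_ne_zero 2 (hne x)))
    exact ftc_cont _ hc _ x
  have hcont : ∀ n, Continuous (formalX F n) := by
    intro n
    induction n with
    | zero => exact continuous_const
    | succ n ih => exact continuous_iff_continuousAt.2 fun x => (main n ih x).continuousAt
  exact ⟨hcont n, main n (hcont n)⟩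

lemma formalXt_deriv (F : ℝ → ℂ) (hF : Continuous F) (hne : ∀ x, F x ≠ 0) (n : ℕ) :
    Continuous (formalXt F n) ∧ ∀ x, HasDerivAt (formalXt F (n + 1))
      ((n + 1 : ℂ) * (formalXt F n x * ((F x) ^ 2) ^ ((-1 : ℤ) ^ n))) x := by
  have main : ∀ n, Continuous (formalXt F n) → ∀ x, HasDerivAt (formalXt F (n + 1))
      ((n + 1 : ℂ) * (formalXt F n x * ((F x) ^ 2) ^ ((-1 : ℤ) ^ n))) x := by
    intro n hn x
    have hc : Continuous fun s => formalXt F n s * ((F s) ^ 2) ^ ((-1 : ℤ) ^ n) :=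
      hn.mul ((hF.pow 2).zpow₀ _ fun x => Or.inl (pow_ne_zero 2 (hne x)))
    exact ftc_cont _ hc _ x
  have hcont : ∀ n, Continuous (formalXt F n) := by
    intro n
    induction n with
    | zero => exact continuous_const
    | succ n ih => exact continuous_iff_continuousAt.2 fun x => (main n ih x).continuousAt
  exact ⟨hcont n, main n (hcont n)⟩

lemma trA_const_mul (H : ℝ → ℝ → ℂ) (c : ℂ) (h : ℝ → ℂ) (x : ℝ) :
    trA H (fun t => c * h t) x = c * trA H h x := by
  unfold trA
  rw [← intervalIntegral.integral_const_mul]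
  congr 1; ext u; ring

lemma trA_zero (H : ℝ → ℝ → ℂ) (h : ℝ → ℂ) : trA H h 0 = 0 := by simp [trA]

lemma trA_subst (H : ℝ → ℝ → ℂ) (h : ℝ → ℂ) (x : ℝ) :
    2 * trA H h x = ∫ s in (-1:ℝ)..1, ((x:ℂ) * H (x * (1 + s) / 2) (x * (1 - s) / 2)) * h (x * s) := by
  have := intervalIntegral.smul_integral_comp_mul_add (a := -1) (b := 1)
    (fun u => H u (x - u) * h (2 * u - x)) (x / 2) (x / 2)
  have e1 : x / 2 * (-1) + x / 2 = 0 := by ring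
  have e2 : x / 2 * 1 + x / 2 = x := by ring
  rw [e1, e2] at this
  unfold trA
  rw [← this, Complex.real_smul, ← intervalIntegral.integral_const_mul, ← intervalIntegral.integral_const_mul]
  congr 1; ext s
  have e3 : x / 2 * s + x / 2 = x * (1 + s) / 2 := by ring
  have e4 : x - x * (1 + s) / 2 = x * (1 - s) / 2 := by ring
  have e5 : 2 * (x * (1 + s) / 2) - x = x * s := by ring
  rw [e3, e4, e5]
  push_cast
  ring

lemma fp_transmute (b : ℝ) (hb : 0 < b) (q f f' : ℝ → ℂ) (hq : ContinuousOn q (Set.Icc 0 b))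
    (hf : ∀ x ∈ Set.Icc 0 b, HasDerivAt f (f' x) x)
    (hf' : ∀ x ∈ Set.Icc 0 b, HasDerivAt f' (q x * f x) x)
    (hf0 : f 0 = 1) (hf'0 : f' 0 = 0)
    (F : ℝ → ℂ) (hF : Continuous F) (hne : ∀ x, F x ≠ 0) (hFf : ∀ x ∈ Set.Icc 0 b, f x = F x)
    (H : ℝ → ℝ → ℂ)
    (hH : ∀ h h' h'' : ℝ → ℂ, (∀ x, HasDerivAt h (h' x) x) → (∀ x, HasDerivAt h' (h'' x) x) → Continuous h'' →
        ∃ T' : ℝ → ℂ, (∀ x, HasDerivAt (fun x => h x + 2 * trA H h x) (T' x) x) ∧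
          (∀ x ∈ Set.Icc 0 b, HasDerivAt T' (q x * (h x + 2 * trA H h x) + (h'' x + 2 * trA H h'' x)) x) ∧
          T' 0 = h' 0) (k : ℕ) :
    ∀ x ∈ Set.Icc 0 b, formalPower f k x = (x:ℂ) ^ k + 2 * trA H (fun t => (t:ℂ) ^ k) x := by
  have hfne : ∀ x ∈ Set.Icc 0 b, f x ≠ 0 := fun x hx => by rw [hFf x hx]; exact hne x
  have hpos : (0:ℝ) ∈ Set.Icc 0 b := ⟨le_rfl, hb.le⟩
  have gen : ∀ (a c : ℂ) (W2 W1 W0 h h' h'' : ℝ → ℂ),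
      (∀ x ∈ Set.Icc 0 b, HasDerivAt W2 (a * (W1 x * ((f x)^2)⁻¹)) x) →
      (∀ x ∈ Set.Icc 0 b, HasDerivAt W1 (c * (W0 x * (f x)^2)) x) →
      (∀ x, HasDerivAt h (h' x) x) → (∀ x, HasDerivAt h' (h'' x) x) → Continuous h'' →
      W2 0 = h 0 → a * W1 0 = h' 0 →
      (∀ x ∈ Set.Icc 0 b, a * c * (f x * W0 x) = h'' x + 2 * trA H h'' x) →
      ∀ x ∈ Set.Icc 0 b, f x * W2 x = h x + 2 * trA H h x := by
    intro a c W2 W1 W0 h h' h'' d2 d1 dh dh' ch i0 i1 hr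
    obtain ⟨T', t1, t2, t0⟩ := hH h h' h'' dh dh' ch
    obtain ⟨s1, s2⟩ := fp_ode b q f f' hf hf' hfne a c W2 W1 W0 d2 d1
    refine ode_uniq b q (fun x => h'' x + 2 * trA H h'' x) _ _ _ T' hq s1 ?_ (fun x _ => t1 x) t2 ?_ ?_
    · intro x hx
      rw [← hr x hx]; exact s2 x hx
    · simp [hf0, i0, trA_zero]
    · simp [hf0, hf'0, i1, t0]
  have dpow : ∀ (n : ℕ) (x : ℝ), HasDerivAt (fun t : ℝ => (t:ℂ) ^ (n + 1)) ((n + 1 : ℂ) * (x:ℂ) ^ n) x := by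
    intro n x
    have := (hasDerivAt_pow (n + 1) (x : ℂ)).comp_ofReal
    simpa using this
  induction k using Nat.twoStepInduction with
  | zero =>
    intro x hx
    have := gen 0 0 (fun _ => 1) (fun _ => 0) (fun _ => 0) (fun _ => 1) (fun _ => 0) (fun _ => 0)
      (fun x _ => (hasDerivAt_const x _).congr_deriv (by simp))
      (fun x _ => (hasDerivAt_const x _).congr_deriv (by simp))
      (fun x => hasDerivAt_const x _) (fun x => hasDerivAt_const x _) continuous_const rfl (by simp)
      (fun x _ => by simp [trA]) x hx
    simpa [formalPower, formalXt] using this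
  | one =>
    intro x hx
    have := gen 1 0 (formalX F 1) (fun _ => 1) (fun _ => 0) (fun t => (t:ℂ)) (fun _ => 1) (fun _ => 0)
      (fun x hx => ((formalX_deriv F hF hne 0).2 x).congr_deriv (by rw [hFf x hx]; simp [formalX]))
      (fun x _ => (hasDerivAt_const x _).congr_deriv (by simp))
      (fun x => (hasDerivAt_id (x:ℂ)).comp_ofReal) (fun x => hasDerivAt_const x _) continuous_const
      (by simp [formalX]) (by simp)
      (fun x _ => by simp [trA]) x hx
    rw [← formalX_congr f F b hFf 1 x hx] at this
    simpa [formalPower] using this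
  | more k ih _ =>
    intro x hx
    have e : ∀ W2 W1 W0 : ℝ → ℂ, (∀ x ∈ Set.Icc 0 b, HasDerivAt W2 ((k + 2 : ℂ) * (W1 x * ((f x)^2)⁻¹)) x) →
      (∀ x ∈ Set.Icc 0 b, HasDerivAt W1 ((k + 1 : ℂ) * (W0 x * (f x)^2)) x) → W2 0 = 0 → W1 0 = 0 →
      (∀ x ∈ Set.Icc 0 b, f x * W0 x = (x:ℂ) ^ k + 2 * trA H (fun t => (t:ℂ) ^ k) x) →
      f x * W2 x = (x:ℂ) ^ (k + 2) + 2 * trA H (fun t => (t:ℂ) ^ (k + 2)) x := by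
      intro W2 W1 W0 d2 d1 i2 i1 h0
      refine gen (k + 2) (k + 1) W2 W1 W0 (fun t => (t:ℂ) ^ (k + 2)) (fun t => (k + 2 : ℂ) * (t:ℂ) ^ (k + 1))
        (fun t => ((k + 2 : ℂ) * (k + 1)) * (t:ℂ) ^ k) d2 d1 ?_ ?_ (by fun_prop) (by simp [i2]) (by simp [i1]) ?_ x hx
      · intro x
        refine (dpow (k + 1) x).congr_deriv ?_
        push_cast; ring
      · intro x
        exact ((dpow k x).const_mul _).congr_deriv (by ring)
      · intro x hx
        rw [h0 x hx, trA_const_mul]; ring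
    by_cases hk : Odd k
    · have hk2 : Odd (k + 2) := by rcases hk with ⟨m, rfl⟩; exact ⟨m + 1, by ring⟩
      have hk1 : Even (k + 1) := hk.add_one
      simp only [formalPower, hk, hk2, if_true] at ih ⊢
      rw [formalX_congr f F b hFf _ x hx]
      refine e (formalX F (k + 2)) (formalX F (k + 1)) (formalX F k) ?_ ?_ (by simp [formalX]) (by simp [formalX]) ?_
      · intro x hx
        refine ((formalX_deriv F hF hne (k + 1)).2 x).congr_deriv ?_
        rw [hFf x hx, hk2.neg_one_pow, zpow_neg_one]; push_cast; ring
      · intro x hx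
        refine ((formalX_deriv F hF hne k).2 x).congr_deriv ?_
        rw [hFf x hx, hk1.neg_one_pow, zpow_one]
      · intro x hx
        rw [← formalX_congr f F b hFf _ x hx]; exact ih x hx
    · have hk2 : ¬ Odd (k + 2) := by
        rintro ⟨m, hm⟩; exact hk ⟨m - 1, by omega⟩
      have hk0 : Even k := Nat.not_odd_iff_even.1 hk
      have hk1 : Odd (k + 1) := hk0.add_one
      simp only [formalPower, hk, hk2, if_false] at ih ⊢
      rw [formalXt_congr f F b hFf _ x hx]
      refine e (formalXt F (k + 2)) (formalXt F (k + 1)) (formalXt F k) ?_ ?_ (by simp [formalXt]) (by simp [formalXt]) ?_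
      · intro x hx
        refine ((formalXt_deriv F hF hne (k + 1)).2 x).congr_deriv ?_
        rw [hFf x hx, hk1.neg_one_pow, zpow_neg_one]; push_cast; ring
      · intro x hx
        refine ((formalXt_deriv F hF hne k).2 x).congr_deriv ?_
        rw [hFf x hx, hk0.neg_one_pow, zpow_one]
      · intro x hx
        rw [← formalXt_congr f F b hFf _ x hx]; exact ih x hx


lemma int_exp_le (a c : ℝ) (hc : 0 < c) (hac : |a| ≤ c) :
    ∫ s in (-1:ℝ)..1, Real.exp (-(a * s)) ≤ 2 * (Real.sinh c / c) := by
  have c1 : Continuous fun s : ℝ => Real.exp (-(a * s)) := by fun_prop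
  have c2 : Continuous fun s : ℝ => Real.exp (a * s) := by fun_prop
  have h1 : ∫ s in (-1:ℝ)..1, Real.exp (-(a * s)) = ∫ s in (-1:ℝ)..1, Real.exp (a * s) := by
    have := intervalIntegral.integral_comp_neg (a := -1) (b := 1) (fun s => Real.exp (a * s))
    simpa using this
  have h2 : ∫ s in (-1:ℝ)..1, Real.exp (-(a * s)) = ∫ s in (-1:ℝ)..1, Real.cosh (a * s) := by
    have : ∀ s, Real.cosh (a * s) = (Real.exp (a * s) + Real.exp (-(a * s))) / 2 := fun s => Real.cosh_eq _
    simp only [this]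
    rw [intervalIntegral.integral_div, intervalIntegral.integral_add (c2.intervalIntegrable _ _)
      (c1.intervalIntegrable _ _), ← h1]
    ring
  rw [h2]
  have h3 : ∫ s in (-1:ℝ)..1, Real.cosh (c * s) = 2 * (Real.sinh c / c) := by
    have hd : ∀ s ∈ Set.uIcc (-1:ℝ) 1, HasDerivAt (fun s => Real.sinh (c * s) / c) (Real.cosh (c * s)) s := by
      intro s _
      have := ((Real.hasDerivAt_sinh (c * s)).comp s ((hasDerivAt_id s).const_mul c)).div_const c
      refine this.congr_deriv ?_
      field_simp
    rw [intervalIntegral.integral_eq_sub_of_hasDerivAt hd (by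
      apply Continuous.intervalIntegrable; fun_prop)]
    simp only [mul_neg, mul_one, Real.sinh_neg]
    ring
  rw [← h3]
  apply intervalIntegral.integral_mono_on (by norm_num)
  · apply Continuous.intervalIntegrable; fun_prop
  · apply Continuous.intervalIntegrable; fun_prop
  · intro s _
    rw [Real.cosh_le_cosh, abs_mul, abs_mul, abs_of_pos hc]
    gcongr

lemma beta_eq (f : ℝ → ℂ) (n : ℕ) (x : ℝ) (hx : x ≠ 0) (g : ℝ → ℂ) (hg : Continuous g)
    (h : ∀ k, formalPower f k x = (x:ℂ) ^ k + ∫ s in (-1:ℝ)..1, g s * ((x * s : ℝ) : ℂ) ^ k) :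
    betaCoef f n x = (2 * n + 1 : ℂ) / 2 * ∫ t in (-1:ℝ)..1, (((legendreP n).eval t : ℝ) : ℂ) * g t := by
  unfold betaCoef
  congr 1
  have hx' : (x:ℂ) ≠ 0 := by exact_mod_cast hx
  have e1 : ∀ k, ((legendreP n).coeff k : ℂ) * formalPower f k x / (x : ℂ) ^ k =
      ((legendreP n).coeff k : ℂ) * (1:ℂ) ^ k + ∫ s in (-1:ℝ)..1, ((legendreP n).coeff k : ℂ) * ((s:ℂ) ^ k * g s) := by
    intro k
    rw [h k, intervalIntegral.integral_const_mul]
    have : ∫ s in (-1:ℝ)..1, g s * ((x * s : ℝ) : ℂ) ^ k = (x:ℂ) ^ k * ∫ s in (-1:ℝ)..1, (s:ℂ) ^ k * g s := by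
      rw [← intervalIntegral.integral_const_mul]
      congr 1; ext s; push_cast; ring
    rw [this]
    field_simp
    simp
  have ev : ∀ t : ℝ, (((legendreP n).eval t : ℝ) : ℂ) = ∑ k ∈ Finset.range (n + 1), ((legendreP n).coeff k : ℂ) * (t:ℂ) ^ k := by
    intro t
    rw [Polynomial.eval_eq_sum_range' (Nat.lt_succ_of_le (leg_natDegree_le n))]
    push_cast; rfl
  simp only [e1]
  rw [Finset.sum_add_distrib]
  have e2 : ∑ k ∈ Finset.range (n + 1), ((legendreP n).coeff k : ℂ) * (1:ℂ) ^ k = 1 := by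
    have := ev 1
    rw [leg_eval_one] at this
    simpa using this.symm
  rw [e2, ← intervalIntegral.integral_finset_sum]
  · rw [add_sub_cancel_left]
    congr 1; ext s
    rw [ev, Finset.sum_mul]
    apply Finset.sum_congr rfl
    intros; ring
  · intro k _
    apply Continuous.intervalIntegrable; fun_prop

lemma final_est (g : ℝ → ℂ) (hg : Continuous g) (η : ℝ) (N : ℕ) (c : ℕ → ℂ) (hη0 : 0 ≤ η)
    (hη : ∀ s ∈ Set.Icc (-1:ℝ) 1, ‖g s - ∑ n ∈ Finset.range N, c n * (((legendreP n).eval s : ℝ) : ℂ)‖ ≤ η)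
    (w : ℂ) (x C : ℝ) (hx : 0 < x) (hC : 0 < C) (hw : |w.im| ≤ C) :
    ‖(∫ s in (-1:ℝ)..1, g s * Complex.exp (Complex.I * w * x * s)) - ∑ n ∈ Finset.range N, c n *
          ∫ s in (-1:ℝ)..1, (((legendreP n).eval s : ℝ) : ℂ) * Complex.exp (Complex.I * w * x * s)‖
      ≤ (2 / x * η) * Real.sinh (C * x) / C := by
  have cP : ∀ n, Continuous fun s : ℝ => (((legendreP n).eval s : ℝ) : ℂ) := fun n =>
    Complex.continuous_ofReal.comp (legendreP n).continuous
  have e1 : (∫ s in (-1:ℝ)..1, g s * Complex.exp (Complex.I * w * x * s)) - ∑ n ∈ Finset.range N, c n *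
          ∫ s in (-1:ℝ)..1, (((legendreP n).eval s : ℝ) : ℂ) * Complex.exp (Complex.I * w * x * s)
      = ∫ s in (-1:ℝ)..1, (g s - ∑ n ∈ Finset.range N, c n * (((legendreP n).eval s : ℝ) : ℂ)) *
        Complex.exp (Complex.I * w * x * s) := by
    simp only [← intervalIntegral.integral_const_mul]
    rw [← intervalIntegral.integral_finset_sum, ← intervalIntegral.integral_sub]
    · congr 1; ext s
      rw [sub_mul, Finset.sum_mul]
      congr 1
      apply Finset.sum_congr rfl
      intros; ring
    · apply Continuous.intervalIntegrable; fun_prop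
    · apply Continuous.intervalIntegrable
      have := cP
      fun_prop
    · intro n _
      apply Continuous.intervalIntegrable
      have := cP n
      fun_prop
  rw [e1]
  have b1 := intervalIntegral.norm_integral_le_of_norm_le (a := -1) (b := 1) (μ := volume) (by norm_num)
    (f := fun s : ℝ => (g s - ∑ n ∈ Finset.range N, c n * (((legendreP n).eval s : ℝ) : ℂ)) *
        Complex.exp (Complex.I * w * x * s)) (g := fun s => η * Real.exp (-((w.im * x) * s)))
    (Filter.Eventually.of_forall fun s hs => by
      rw [norm_mul, Complex.norm_exp]
      have : (Complex.I * w * x * s).re = -((w.im * x) * s) := by simp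
      rw [this]
      exact mul_le_mul_of_nonneg_right (hη s ⟨hs.1.le, hs.2⟩) (Real.exp_pos _).le)
    (by apply Continuous.intervalIntegrable; fun_prop)
  refine b1.trans ?_
  rw [intervalIntegral.integral_const_mul]
  have b2 := int_exp_le (w.im * x) (C * x) (by positivity) (by rw [abs_mul, abs_of_pos hx]; gcongr)
  refine (mul_le_mul_of_nonneg_left b2 hη0).trans (le_of_eq ?_)
  field_simp

/-- error bound for the truncated NSBF representation in a strip |Im ω| ≤ C. -/
theorem NSBF_truncation_error_strip
    (b : ℝ) (hb : 0 < b) (q : ℝ → ℂ) (hq : ContinuousOn q (Set.Icc (-b) b))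
    (f f' : ℝ → ℂ)
    (hf : ∀ x ∈ Set.Icc (-b) b, HasDerivAt f (f' x) x)
    (hf' : ∀ x ∈ Set.Icc (-b) b, HasDerivAt f' (q x * f x) x)
    (hf0 : f 0 = 1) (hf'0 : f' 0 = 0)
    (hfne : ∀ x ∈ Set.Icc (-b) b, f x ≠ 0) :
    ∃ ε : ℕ → ℝ → ℝ,
      (∀ N : ℕ, ∀ x ∈ Set.Ioc (0:ℝ) b, 0 ≤ ε N x) ∧
      (∀ x ∈ Set.Ioc (0:ℝ) b, Tendsto (fun N : ℕ => ε N x) atTop (𝓝 0)) ∧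
      ∀ (C : ℝ), 0 < C → ∀ (w : ℂ), w ≠ 0 → |w.im| ≤ C →
        ∀ (y y' : ℝ → ℂ),
          (∀ x ∈ Set.Icc (-b) b, HasDerivAt y (y' x) x) →
          (∀ x ∈ Set.Icc (-b) b, HasDerivAt y' (q x * y x - w ^ 2 * y x) x) →
          y 0 = 1 → y' 0 = Complex.I * w →
          ∀ (N : ℕ), ∀ x ∈ Set.Ioc (0:ℝ) b,
            ‖y x - (fun (w : ℂ) (N : ℕ) (x : ℝ) => Complex.exp (Complex.I * w * x) +
        ∑ n ∈ Finset.range N, betaCoef f n x *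
          ∫ s in (-1:ℝ)..1, (((legendreP n).eval s : ℝ) : ℂ) * Complex.exp (Complex.I * w * x * s)) w N x‖ ≤ ε N x * Real.sinh (C * x) / C := by
  have hbb : -b ≤ b := by linarith
  have hsub : Set.Icc 0 b ⊆ Set.Icc (-b) b := Set.Icc_subset_Icc_left (by linarith)
  have fcont : ContinuousOn f (Set.Icc (-b) b) := fun x hx => (hf x hx).continuousAt.continuousWithinAt
  have hQc : Continuous fun x => q (Set.projIcc (-b) b hbb x) :=
    (continuousOn_iff_continuous_restrict.1 hq).comp continuous_projIcc
  have hFc : Continuous fun x => f (Set.projIcc (-b) b hbb x) :=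
    (continuousOn_iff_continuous_restrict.1 fcont).comp continuous_projIcc
  have pr : ∀ x ∈ Set.Icc 0 b, ((Set.projIcc (-b) b hbb x : Set.Icc (-b) b) : ℝ) = x := by
    intro x hx
    rw [Set.projIcc_of_mem hbb (hsub hx)]
  obtain ⟨H, hHd, hH⟩ := exists_transmutation (fun x => q (Set.projIcc (-b) b hbb x)) hQc b hb
  have hHq : ∀ h h' h'' : ℝ → ℂ, (∀ x, HasDerivAt h (h' x) x) → (∀ x, HasDerivAt h' (h'' x) x) → Continuous h'' →
        ∃ T' : ℝ → ℂ, (∀ x, HasDerivAt (fun x => h x + 2 * trA H h x) (T' x) x) ∧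
          (∀ x ∈ Set.Icc 0 b, HasDerivAt T' (q x * (h x + 2 * trA H h x) + (h'' x + 2 * trA H h'' x)) x) ∧
          T' 0 = h' 0 := by
    intro h h' h'' d1 d2 d3
    obtain ⟨T', t1, t2, t3⟩ := hH h h' h'' d1 d2 d3
    refine ⟨T', t1, ?_, t3⟩
    intro x hx
    have := t2 x hx
    simp only [pr x hx] at this
    exact this
  have hfp := fp_transmute b hb q f f' (hq.mono hsub) (fun x hx => hf x (hsub hx)) (fun x hx => hf' x (hsub hx))
    hf0 hf'0 (fun x => f (Set.projIcc (-b) b hbb x)) hFc (fun x => hfne _ (Subtype.coe_prop _))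
    (fun x hx => by simp only [pr x hx]) H hHq
  have hgd : ∀ x : ℝ, ∃ k : ℝ → ℂ, Continuous k ∧ ∀ s, HasDerivAt
      (fun s => (x:ℂ) * H (x * (1 + s) / 2) (x * (1 - s) / 2)) (k s) s := by
    intro x
    obtain ⟨k, hk, hkd⟩ := hHd x
    exact ⟨fun s => x * k s, by fun_prop, fun s => (hkd s).const_mul _⟩
  choose kk hkc hkd using hgd
  have hgc : ∀ x : ℝ, Continuous fun s : ℝ => (x:ℂ) * H (x * (1 + s) / 2) (x * (1 - s) / 2) := fun x =>
    continuous_iff_continuousAt.2 fun s => (hkd x s).continuousAt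
  have hη := fun x => legSC_unif _ (kk x) (hkd x) (hkc x)
  choose η η0 ηt ηb using hη
  refine ⟨fun N x => 2 / x * η x N, ?_, ?_, ?_⟩
  · intro N x hx
    have := η0 x N
    have := hx.1
    positivity
  · intro x hx
    simpa using (ηt x).const_mul (2 / x)
  · intro C hC w _ hw y y' hy hy' hy0 hy'0 N x hx
    have hxI : x ∈ Set.Icc 0 b := ⟨hx.1.le, hx.2⟩
    have dexp : ∀ t : ℝ, HasDerivAt (fun t : ℝ => Complex.exp (Complex.I * w * t))
        (Complex.I * w * Complex.exp (Complex.I * w * t)) t := by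
      intro t
      have := (((hasDerivAt_id (t:ℂ)).const_mul (Complex.I * w)).cexp).comp_ofReal
      refine this.congr_deriv ?_
      simp only [id]; ring
    obtain ⟨T', t1, t2, t0⟩ := hHq (fun t => Complex.exp (Complex.I * w * t))
      (fun t => Complex.I * w * Complex.exp (Complex.I * w * t))
      (fun t => (-w ^ 2) * Complex.exp (Complex.I * w * t)) dexp
      (fun t => ((dexp t).const_mul _).congr_deriv (by
        rw [← mul_assoc]; congr 1
        linear_combination w ^ 2 * Complex.I_sq)) (by fun_prop)
    have hyx : y x = Complex.exp (Complex.I * w * x) + 2 * trA H (fun t => Complex.exp (Complex.I * w * t)) x := by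
      refine ode_uniq b (fun x => q x - w ^ 2) (fun _ => 0) y y'
        (fun x => Complex.exp (Complex.I * w * x) + 2 * trA H (fun t => Complex.exp (Complex.I * w * t)) x) T'
        ((hq.mono hsub).sub continuousOn_const)
        (fun x hx => hy x (hsub hx)) (fun x hx => (hy' x (hsub hx)).congr_deriv (by ring))
        (fun x _ => t1 x) ?_ ?_ ?_ x hxI
      · intro x hx
        refine (t2 x hx).congr_deriv ?_
        rw [trA_const_mul]; ring
      · simp [hy0, trA_zero]
      · simp [hy'0, t0]
    have hbeta : ∀ n, betaCoef f n x = (2 * n + 1 : ℂ) / 2 * ∫ t in (-1:ℝ)..1, (((legendreP n).eval t : ℝ) : ℂ) *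
        ((x:ℂ) * H (x * (1 + t) / 2) (x * (1 - t) / 2)) := by
      intro n
      refine beta_eq f n x hx.1.ne' _ (hgc x) ?_
      intro k
      rw [hfp k x hxI, trA_subst]
    have est := final_est _ (hgc x) (η x N) N (fun n => betaCoef f n x) (η0 x N) (by
      intro s hs
      simp only [hbeta]
      exact ηb x N s hs) w x C hx.1 hC hw
    refine le_trans (le_of_eq ?_) est
    congr 1
    rw [hyx, trA_subst]
    have e : ∀ s : ℝ, Complex.exp (Complex.I * w * ((x * s : ℝ) : ℂ)) = Complex.exp (Complex.I * w * x * s) := by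
      intro s; congr 1; push_cast; ring
    simp only [e]
    ring

end
end

section
/- Let b > 0, let q : ℝ → ℂ be continuous on [−b,b], let f solve f'' − q f = 0 on [−b,b] with f(0) = 1, f'(0) = 0, and assume f(x) ≠ 0 on [−b,b]. For ω ∈ ℝ let u(ω,·) be the solution of y'' − q(x)y = −ω² y on [−b,b] with y(0) = 1, y'(0) = iω. Then for every ω ∈ ℝ and every x ∈ [−b,b], the series Σ_{n=0}^{∞} a_n(x)·(iω)ⁿ/(1+iω)^{n+1} converges and u(ω,x) = e^{iωx}·(1 + Σ_{n=0}^{∞} a_n(x)·(iω)ⁿ/(1+iω)^{n+1}), where a_n(x) = Σ_{j=0}^{n} (−1)^j (φ_j(x) − x^j) Σ_{k=j}^{n} (−1)^k n!/((n−k)! k! (k−j)! j!) x^{k−j}. -/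
open MeasureTheory Set Filter Finset Complex Topology

noncomputable section

/-- aₙ(x) = Σⱼ (−1)ʲ (φⱼ(x) − xʲ) Σₖ (−1)ᵏ n!/((n−k)!k!(k−j)!j!) x^{k−j}. -/
def aCoef (f : ℝ → ℂ) (n : ℕ) (x : ℝ) : ℂ :=
  ∑ j ∈ Finset.range (n + 1), (-1 : ℂ) ^ j * (formalPower f j x - (x : ℂ) ^ j) *
    ∑ k ∈ Finset.Icc j n, (-1 : ℂ) ^ k * (n.factorial : ℂ) /
      (((n - k).factorial : ℂ) * (k.factorial : ℂ) * ((k - j).factorial : ℂ) * (j.factorial : ℂ)) *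
      (x : ℂ) ^ (k - j)

lemma uIcc_sub_aux {b x : ℝ} (hb : 0 < b) (hx : x ∈ Set.Icc (-b) b) :
    Set.uIcc 0 x ⊆ Set.Icc (-b) b :=
  Set.uIcc_subset_Icc ⟨by linarith, hb.le⟩ hx

lemma step_bound {b K L : ℝ} (hb : 0 < b) {n : ℕ} (g P : ℝ → ℂ)
    (hP : ∀ s ∈ Set.Icc (-b) b, ‖P s‖ ≤ L)
    (hg : ∀ s ∈ Set.Icc (-b) b, ‖g s‖ ≤ K * (L * |s|) ^ n / n.factorial)
    {x : ℝ} (hx : x ∈ Set.Icc (-b) b) :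
    ‖∫ s in (0:ℝ)..x, g s * P s‖ ≤ K * (L * |x|) ^ (n + 1) / (n + 1).factorial := by
  have hcont : Continuous fun s : ℝ => K * L ^ (n + 1) / n.factorial * |s - 0| ^ n := by fun_prop
  have h1 : ‖∫ s in (0:ℝ)..x, g s * P s‖ ≤
      ∫ s in Set.uIoc 0 x, K * L ^ (n + 1) / n.factorial * |s - 0| ^ n := by
    rw [intervalIntegral.norm_intervalIntegral_eq]
    refine norm_integral_le_of_norm_le ?_ ?_
    · exact (hcont.intervalIntegrable 0 x).def'
    · refine (ae_restrict_iff' measurableSet_uIoc).2 (ae_of_all _ fun s hs => ?_)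
      have hs' := uIcc_sub_aux hb hx (Set.uIoc_subset_uIcc hs)
      rw [norm_mul]
      have hL : 0 ≤ L := (norm_nonneg _).trans (hP s hs')
      calc ‖g s‖ * ‖P s‖ ≤ (K * (L * |s|) ^ n / n.factorial) * L :=
            mul_le_mul (hg s hs') (hP s hs') (norm_nonneg _) ((norm_nonneg _).trans (hg s hs'))
        _ = _ := by rw [sub_zero, mul_pow]; ring
  refine h1.trans (le_of_eq ?_)
  rw [integral_const_mul, integral_pow_abs_sub_uIoc, sub_zero, Nat.factorial_succ]
  push_cast
  have : (n.factorial : ℝ) ≠ 0 := by positivity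
  have : (n + 1 : ℝ) ≠ 0 := by positivity
  field_simp
  rw [mul_pow]
  ring

lemma CD_cont {b : ℝ} (hb : 0 < b) {P Q : ℝ → ℂ} (hPc : ContinuousOn P (Set.Icc (-b) b))
    (hQc : ContinuousOn Q (Set.Icc (-b) b)) {C D : ℕ → ℝ → ℂ}
    (hC0 : ∀ x, C 0 x = 1) (hD0 : ∀ x, D 0 x = 1)
    (hC : ∀ n x, C (n + 1) x = ∫ s in (0:ℝ)..x, D n s * P s)
    (hD : ∀ n x, D (n + 1) x = ∫ s in (0:ℝ)..x, C n s * Q s) (n : ℕ) :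
    ContinuousOn (C n) (Set.Icc (-b) b) ∧ ContinuousOn (D n) (Set.Icc (-b) b) := by
  have hbb : -b ≤ b := by linarith
  induction n with
  | zero =>
    rw [funext hC0, funext hD0]
    exact ⟨continuousOn_const, continuousOn_const⟩
  | succ n ih =>
    rw [funext (hC n), funext (hD n)]
    rw [← Set.uIcc_of_le hbb] at *
    have h0 : (0:ℝ) ∈ Set.uIcc (-b) b := by
      rw [Set.uIcc_of_le hbb]; exact ⟨by linarith, hb.le⟩
    exact ⟨intervalIntegral.continuousOn_primitive_interval'
        (ih.2.mul hPc).intervalIntegrable h0,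
      intervalIntegral.continuousOn_primitive_interval'
        (ih.1.mul hQc).intervalIntegrable h0⟩

lemma CD_bound {b M : ℝ} (hb : 0 < b) {P Q : ℝ → ℂ}
    (hP : ∀ s ∈ Set.Icc (-b) b, ‖P s‖ ≤ M)
    (hQ : ∀ s ∈ Set.Icc (-b) b, ‖Q s‖ ≤ M) {C D : ℕ → ℝ → ℂ}
    (hC0 : ∀ x, C 0 x = 1) (hD0 : ∀ x, D 0 x = 1)
    (hC : ∀ n x, C (n + 1) x = ∫ s in (0:ℝ)..x, D n s * P s)
    (hD : ∀ n x, D (n + 1) x = ∫ s in (0:ℝ)..x, C n s * Q s) (n : ℕ) :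
    ∀ x ∈ Set.Icc (-b) b, ‖C n x‖ ≤ 1 * (M * |x|) ^ n / n.factorial ∧
      ‖D n x‖ ≤ 1 * (M * |x|) ^ n / n.factorial := by
  induction n with
  | zero => intro x hx; simp [hC0, hD0]
  | succ n ih =>
    intro x hx
    rw [hC, hD]
    exact ⟨step_bound hb _ _ hP (fun s hs => (ih s hs).2) hx,
      step_bound hb _ _ hQ (fun s hs => (ih s hs).1) hx⟩

lemma spps {b M : ℝ} (hb : 0 < b) {P Q : ℝ → ℂ} (hPc : ContinuousOn P (Set.Icc (-b) b))
    (hQc : ContinuousOn Q (Set.Icc (-b) b))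
    (hP : ∀ s ∈ Set.Icc (-b) b, ‖P s‖ ≤ M)
    (hQ : ∀ s ∈ Set.Icc (-b) b, ‖Q s‖ ≤ M) {C D : ℕ → ℝ → ℂ}
    (hC0 : ∀ x, C 0 x = 1) (hD0 : ∀ x, D 0 x = 1)
    (hC : ∀ n x, C (n + 1) x = ∫ s in (0:ℝ)..x, D n s * P s)
    (hD : ∀ n x, D (n + 1) x = ∫ s in (0:ℝ)..x, C n s * Q s)
    {v w : ℝ → ℂ} {z : ℂ} (hvc : ContinuousOn v (Set.Icc (-b) b))
    (hwc : ContinuousOn w (Set.Icc (-b) b))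
    (hv : ∀ x ∈ Set.Icc (-b) b, v x = 1 + ∫ s in (0:ℝ)..x, w s * P s)
    (hw : ∀ x ∈ Set.Icc (-b) b, w x = z + ∫ s in (0:ℝ)..x, v s * (z ^ 2 * Q s))
    {x : ℝ} (hx : x ∈ Set.Icc (-b) b) :
    Tendsto (fun N => ∑ k ∈ Finset.range N, z ^ k * C k x) atTop (𝓝 (v x)) := by
  have hcont := CD_cont hb hPc hQc hC0 hD0 hC hD
  have hM : 0 ≤ M := (norm_nonneg _).trans (hP x hx)
  obtain ⟨K1, hK1⟩ := isCompact_Icc.exists_bound_of_continuousOn hvc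
  obtain ⟨K2, hK2⟩ := isCompact_Icc.exists_bound_of_continuousOn hwc
  set K := max K1 K2
  set L := M * (1 + ‖z‖ ^ 2) with hL
  have hPL : ∀ s ∈ Set.Icc (-b) b, ‖P s‖ ≤ L := fun s hs =>
    (hP s hs).trans (by rw [hL]; nlinarith [mul_nonneg hM (sq_nonneg ‖z‖)])
  have hQL : ∀ s ∈ Set.Icc (-b) b, ‖z ^ 2 * Q s‖ ≤ L := fun s hs => by
    rw [norm_mul, norm_pow, hL]
    nlinarith [mul_le_mul_of_nonneg_left (hQ s hs) (sq_nonneg ‖z‖)]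
  have key : ∀ n : ℕ, ∀ x ∈ Set.Icc (-b) b,
      ‖v x - ∑ k ∈ Finset.range n, z ^ k * C k x‖ ≤ K * (L * |x|) ^ n / n.factorial ∧
      ‖w x - ∑ k ∈ Finset.range n, z ^ (k + 1) * D k x‖ ≤ K * (L * |x|) ^ n / n.factorial := by
    intro n
    induction n with
    | zero =>
      intro x hx
      simpa using ⟨(hK1 x hx).trans (le_max_left _ _), (hK2 x hx).trans (le_max_right _ _)⟩
    | succ n ih =>
      intro x hx
      have hsub := uIcc_sub_aux hb hx
      have e1 : v x - ∑ k ∈ Finset.range (n + 1), z ^ k * C k x =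
          ∫ s in (0:ℝ)..x, (w s - ∑ k ∈ Finset.range n, z ^ (k + 1) * D k s) * P s := by
        simp_rw [sub_mul, Finset.sum_mul]
        rw [intervalIntegral.integral_sub, intervalIntegral.integral_finsetSum, hv x hx,
          Finset.sum_range_succ']
        · simp_rw [mul_assoc, intervalIntegral.integral_const_mul, hC, hC0]
          ring
        · intro k _
          exact (((continuousOn_const.mul (hcont k).2).mul hPc).mono hsub).intervalIntegrable
        · exact ((hwc.mul hPc).mono hsub).intervalIntegrable
        · refine ContinuousOn.intervalIntegrable (ContinuousOn.mono ?_ hsub)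
          exact continuousOn_finsetSum _ fun k _ =>
            ((continuousOn_const.mul (hcont k).2).mul hPc)
      have e2 : w x - ∑ k ∈ Finset.range (n + 1), z ^ (k + 1) * D k x =
          ∫ s in (0:ℝ)..x, (v s - ∑ k ∈ Finset.range n, z ^ k * C k s) * (z ^ 2 * Q s) := by
        have hQc' : ContinuousOn (fun s => z ^ 2 * Q s) (Set.Icc (-b) b) :=
          continuousOn_const.mul hQc
        simp_rw [sub_mul, Finset.sum_mul]
        rw [intervalIntegral.integral_sub, intervalIntegral.integral_finsetSum, hw x hx,
          Finset.sum_range_succ']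
        · have : ∀ k s, z ^ k * C k s * (z ^ 2 * Q s) = z ^ (k + 2) * (C k s * Q s) := by
            intro k s; ring
          simp_rw [this, intervalIntegral.integral_const_mul, hD, hD0]
          ring
        · intro k _
          exact (((continuousOn_const.mul (hcont k).1).mul hQc').mono hsub).intervalIntegrable
        · exact ((hvc.mul hQc').mono hsub).intervalIntegrable
        · refine ContinuousOn.intervalIntegrable (ContinuousOn.mono ?_ hsub)
          exact continuousOn_finsetSum _ fun k _ =>
            ((continuousOn_const.mul (hcont k).1).mul hQc')
      rw [e1, e2]
      exact ⟨step_bound hb _ _ hPL (fun s hs => (ih s hs).2) hx,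
        step_bound hb _ _ hQL (fun s hs => (ih s hs).1) hx⟩
  rw [tendsto_iff_norm_sub_tendsto_zero]
  have hlim : Tendsto (fun n : ℕ => K * (L * |x|) ^ n / n.factorial) atTop (𝓝 0) := by
    simpa [mul_div_assoc] using
      (FloorSemiring.tendsto_pow_div_factorial_atTop (L * |x|)).const_mul K
  refine squeeze_zero (fun _ => norm_nonneg _) (fun n => ?_) hlim
  rw [norm_sub_rev]
  exact (key n x hx).1

/-- Resummation: binomial transform of an entire series. -/
lemma resum {c : ℕ → ℂ} {t : ℂ} (ht : ‖t‖ < 1)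
    (hc : ∀ R : ℝ, 0 ≤ R → Summable fun k => ‖c k‖ * R ^ k) :
    HasSum (fun n => (∑ kl ∈ antidiagonal n, (n.choose kl.1 : ℂ) * c kl.1) * t ^ n)
      (∑' k, c k * (t ^ k / (1 - t) ^ (k + 1))) := by
  set F : ℕ × ℕ → ℂ := fun p => c p.1 * t ^ p.1 * (((p.2 + p.1).choose p.1 : ℂ) * t ^ p.2) with hF
  have hr1 : ‖(‖t‖ : ℝ)‖ < 1 := by simpa using ht
  have hn : ∀ p, ‖F p‖ = ‖c p.1‖ * ‖t‖ ^ p.1 * (((p.2 + p.1).choose p.1 : ℝ) * ‖t‖ ^ p.2) := by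
    intro p; simp [hF]
  have hFs : Summable F := by
    refine Summable.of_norm ?_
    refine (summable_prod_of_nonneg (fun p => norm_nonneg _)).2 ⟨fun k => ?_, ?_⟩
    · simp_rw [hn]
      exact (hasSum_choose_mul_geometric_of_norm_lt_one k hr1).summable.mul_left _
    · simp_rw [hn, tsum_mul_left, tsum_choose_mul_geometric_of_norm_lt_one _ hr1]
      have h1 : 0 < 1 - ‖t‖ := by linarith
      have := (hc (‖t‖ / (1 - ‖t‖)) (by positivity)).mul_left (1 / (1 - ‖t‖))
      refine this.congr fun k => ?_
      rw [div_pow, pow_succ]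
      field_simp
  have hs : HasSum F (∑' k, c k * (t ^ k / (1 - t) ^ (k + 1))) := by
    have h0 := hFs.hasSum
    rw [hFs.tsum_prod] at h0
    have hk : ∀ k, ∑' m, F (k, m) = c k * (t ^ k / (1 - t) ^ (k + 1)) := by
      intro k
      simp only [hF]
      rw [tsum_mul_left, tsum_choose_mul_geometric_of_norm_lt_one _ ht]
      ring
    simpa only [hk] using h0
  have h2 := (Finset.HasAntidiagonal.sigmaAntidiagonalEquivProd.hasSum_iff).2 hs
  have h3 := h2.sigma (fun n => hasSum_fintype _)
  convert h3 using 2 with n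
  rw [Finset.sum_mul, ← Finset.sum_coe_sort]
  refine Finset.sum_congr rfl fun p _ => ?_
  have hp := mem_antidiagonal.1 p.2
  simp only [Function.comp, hF, HasAntidiagonal.sigmaAntidiagonalEquivProd_apply]
  have ht' : t ^ n = t ^ p.1.1 * t ^ p.1.2 := by rw [← pow_add, hp]
  rw [add_comm p.1.2, hp, ht']
  ring

/-- The normalised formal powers divided by f. -/
def Cf (f : ℝ → ℂ) (n : ℕ) (x : ℝ) : ℂ :=
  (if Odd n then formalX f n x else formalXt f n x) / n.factorial

/-- The complementary family. -/
def Df (f : ℝ → ℂ) (n : ℕ) (x : ℝ) : ℂ :=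
  (if Odd n then formalXt f n x else formalX f n x) / n.factorial

lemma Cf_succ (f : ℝ → ℂ) (n : ℕ) (x : ℝ) :
    Cf f (n + 1) x = ∫ s in (0:ℝ)..x, Df f n s * ((f s) ^ 2)⁻¹ := by
  have h1 : (n.factorial : ℂ) ≠ 0 := by exact_mod_cast n.factorial_ne_zero
  have h2 : (n + 1 : ℂ) ≠ 0 := by exact_mod_cast n.succ_ne_zero
  have h3 : ∀ s, ∀ a : ℂ, a / n.factorial * ((f s) ^ 2)⁻¹ =
    (n.factorial : ℂ)⁻¹ * (a * ((f s) ^ 2)⁻¹) := by intro s a; ring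
  rcases Nat.even_or_odd n with h | h
  · have ho : Odd (n + 1) := h.add_one
    have hn : ¬ Odd n := Nat.not_odd_iff_even.2 h
    simp only [Cf, Df, if_pos ho, if_neg hn, formalX, ho.neg_one_pow, h3,
      intervalIntegral.integral_const_mul, Nat.factorial_succ, zpow_neg_one]
    push_cast
    field_simp
  · have ho : ¬ Odd (n + 1) := Nat.not_odd_iff_even.2 h.add_one
    simp only [Cf, Df, if_pos h, if_neg ho, formalXt, h.neg_one_pow, h3,
      intervalIntegral.integral_const_mul, Nat.factorial_succ, zpow_neg_one]
    push_cast
    field_simp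

lemma Df_succ (f : ℝ → ℂ) (n : ℕ) (x : ℝ) :
    Df f (n + 1) x = ∫ s in (0:ℝ)..x, Cf f n s * (f s) ^ 2 := by
  have h1 : (n.factorial : ℂ) ≠ 0 := by exact_mod_cast n.factorial_ne_zero
  have h2 : (n + 1 : ℂ) ≠ 0 := by exact_mod_cast n.succ_ne_zero
  have h3 : ∀ s, ∀ a : ℂ, a / n.factorial * (f s) ^ 2 =
    (n.factorial : ℂ)⁻¹ * (a * (f s) ^ 2) := by intro s a; ring
  rcases Nat.even_or_odd n with h | h
  · have ho : Odd (n + 1) := h.add_one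
    have hn : ¬ Odd n := Nat.not_odd_iff_even.2 h
    simp only [Cf, Df, if_pos ho, if_neg hn, formalXt, h.neg_one_pow, h3,
      intervalIntegral.integral_const_mul, Nat.factorial_succ, zpow_one]
    push_cast
    field_simp
  · have ho : ¬ Odd (n + 1) := Nat.not_odd_iff_even.2 h.add_one
    simp only [Cf, Df, if_pos h, if_neg ho, formalX, h.add_one.neg_one_pow, h3,
      intervalIntegral.integral_const_mul, Nat.factorial_succ, zpow_one]
    push_cast
    field_simp

lemma formalPower_eq (f : ℝ → ℂ) (n : ℕ) (x : ℝ) :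
    formalPower f n x = n.factorial * (f x * Cf f n x) := by
  have h1 : (n.factorial : ℂ) ≠ 0 := by exact_mod_cast n.factorial_ne_zero
  unfold formalPower Cf
  split_ifs <;> field_simp

/-- Coefficients d_j. -/
def dc (f : ℝ → ℂ) (x : ℝ) (j : ℕ) : ℂ := f x * Cf f j x - (x : ℂ) ^ j / j.factorial

/-- Coefficients c_k. -/
def cc (f : ℝ → ℂ) (x : ℝ) (k : ℕ) : ℂ :=
  ∑ jl ∈ antidiagonal k, dc f x jl.1 * ((-(x : ℂ)) ^ jl.2 / jl.2.factorial)

lemma aCoef_eq (f : ℝ → ℂ) (n : ℕ) (x : ℝ) :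
    aCoef f n x = ∑ kl ∈ antidiagonal n, (n.choose kl.1 : ℂ) * cc f x kl.1 := by
  unfold aCoef cc
  rw [Finset.Nat.sum_antidiagonal_eq_sum_range_succ_mk]
  simp only [Finset.Nat.sum_antidiagonal_eq_sum_range_succ_mk, Finset.mul_sum]
  rw [Finset.sum_comm' (t' := Finset.range (n + 1)) (s' := fun k => Finset.range (k + 1))
    (by intro a c; simp only [Finset.mem_range, Finset.mem_Icc]; omega)]
  refine Finset.sum_congr rfl fun k hk => Finset.sum_congr rfl fun j hj => ?_
  have hkn : k ≤ n := by simpa [Nat.lt_succ_iff] using hk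
  have hjk : j ≤ k := by simpa [Nat.lt_succ_iff] using hj
  obtain ⟨m, rfl⟩ := Nat.exists_eq_add_of_le hjk
  have h0 : ∀ a : ℕ, (a.factorial : ℂ) ≠ 0 := fun a => by exact_mod_cast a.factorial_ne_zero
  rw [Nat.cast_choose ℂ hkn, formalPower_eq, dc, Nat.add_sub_cancel_left, neg_pow (x : ℂ) m,
    pow_add (-1 : ℂ)]
  have h1 := h0 (n - (j + m))
  have h2 := h0 (j + m)
  have h3 := h0 m
  have h4 := h0 j
  have h5 : ((-1 : ℂ) ^ j) * (-1) ^ j = 1 := by rw [← mul_pow]; simp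
  field_simp
  linear_combination (x ^ m * ((n.factorial : ℂ)) * (f x * Cf f j x * j.factorial - x ^ j)) * h5

lemma dc_summable {f : ℝ → ℂ} {x M : ℝ}
    (hC : ∀ n, ‖Cf f n x‖ ≤ 1 * (M * |x|) ^ n / n.factorial) (s : ℂ) :
    Summable fun j => ‖dc f x j * s ^ j‖ := by
  have hs := ((Real.summable_pow_div_factorial (M * |x| * ‖s‖)).mul_left ‖f x‖).add
    (Real.summable_pow_div_factorial (|x| * ‖s‖))
  refine Summable.of_nonneg_of_le (fun _ => norm_nonneg _) (fun j => ?_) hs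
  rw [norm_mul, norm_pow, mul_pow _ ‖s‖, mul_pow _ ‖s‖]
  have h1 : ‖dc f x j‖ ≤ ‖f x‖ * (1 * (M * |x|) ^ j / j.factorial) + |x| ^ j / j.factorial := by
    unfold dc
    refine (norm_sub_le _ _).trans (add_le_add ?_ ?_)
    · rw [norm_mul]
      exact mul_le_mul_of_nonneg_left (hC j) (norm_nonneg _)
    · simp
  refine (mul_le_mul_of_nonneg_right h1 (by positivity)).trans (le_of_eq ?_)
  ring

lemma exp_term_summable (a : ℂ) : Summable fun l : ℕ => ‖a ^ l / (l.factorial : ℂ)‖ :=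
  NormedSpace.norm_expSeries_div_summable a

lemma cc_mul (f : ℝ → ℂ) (x : ℝ) (s : ℂ) (k : ℕ) : cc f x k * s ^ k =
    ∑ jl ∈ antidiagonal k, (dc f x jl.1 * s ^ jl.1) *
      ((-(x : ℂ) * s) ^ jl.2 / (jl.2.factorial : ℂ)) := by
  unfold cc
  rw [Finset.sum_mul]
  refine Finset.sum_congr rfl fun p hp => ?_
  rw [← mem_antidiagonal.1 hp, pow_add, mul_pow]
  ring

lemma exp_tsum (a : ℂ) : ∑' l : ℕ, a ^ l / (l.factorial : ℂ) = Complex.exp a := by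
  rw [Complex.exp_eq_exp_ℂ, NormedSpace.exp_eq_tsum_div]

/-- Fourier–Laguerre representation of the solution for real ω. -/
theorem solution_laguerre_representation
    (b : ℝ) (hb : 0 < b) (q : ℝ → ℂ) (hq : ContinuousOn q (Set.Icc (-b) b))
    (f f' : ℝ → ℂ)
    (hf : ∀ x ∈ Set.Icc (-b) b, HasDerivAt f (f' x) x)
    (hf' : ∀ x ∈ Set.Icc (-b) b, HasDerivAt f' (q x * f x) x)
    (hf0 : f 0 = 1) (hf'0 : f' 0 = 0)
    (hfne : ∀ x ∈ Set.Icc (-b) b, f x ≠ 0)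
    (ω : ℝ) (y y' : ℝ → ℂ)
    (hy : ∀ x ∈ Set.Icc (-b) b, HasDerivAt y (y' x) x)
    (hy' : ∀ x ∈ Set.Icc (-b) b, HasDerivAt y' (q x * y x - (ω : ℂ) ^ 2 * y x) x)
    (hy0 : y 0 = 1) (hy'0 : y' 0 = Complex.I * ω) :
    ∀ x ∈ Set.Icc (-b) b, ∃ S : ℂ,
      Tendsto (fun N : ℕ => ∑ n ∈ Finset.range N,
          aCoef f n x * (Complex.I * ω) ^ n / (1 + Complex.I * ω) ^ (n + 1)) atTop (𝓝 S) ∧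
      y x = Complex.exp (Complex.I * ω * x) * (1 + S) := by
  intro x hx
  set z : ℂ := Complex.I * ω with hz
  have hz2 : z ^ 2 = -(ω : ℂ) ^ 2 := by rw [hz, mul_pow, Complex.I_sq]; ring
  have hfc : ContinuousOn f (Set.Icc (-b) b) := fun s hs => (hf s hs).continuousAt.continuousWithinAt
  have hfc' : ContinuousOn f' (Set.Icc (-b) b) :=
    fun s hs => (hf' s hs).continuousAt.continuousWithinAt
  have hyc : ContinuousOn y (Set.Icc (-b) b) := fun s hs => (hy s hs).continuousAt.continuousWithinAt
  have hyc' : ContinuousOn y' (Set.Icc (-b) b) :=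
    fun s hs => (hy' s hs).continuousAt.continuousWithinAt
  have hQc : ContinuousOn (fun s => (f s) ^ 2) (Set.Icc (-b) b) := hfc.pow 2
  have hPc : ContinuousOn (fun s => ((f s) ^ 2)⁻¹) (Set.Icc (-b) b) :=
    hQc.inv₀ fun s hs => pow_ne_zero _ (hfne s hs)
  obtain ⟨M1, hM1⟩ := isCompact_Icc.exists_bound_of_continuousOn hPc
  obtain ⟨M2, hM2⟩ := isCompact_Icc.exists_bound_of_continuousOn hQc
  have hP : ∀ s ∈ Set.Icc (-b) b, ‖((f s) ^ 2)⁻¹‖ ≤ max M1 M2 :=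
    fun s hs => (hM1 s hs).trans (le_max_left _ _)
  have hQ : ∀ s ∈ Set.Icc (-b) b, ‖(f s) ^ 2‖ ≤ max M1 M2 :=
    fun s hs => (hM2 s hs).trans (le_max_right _ _)
  set M := max M1 M2
  have hC0 : ∀ x, Cf f 0 x = 1 := by intro x; simp [Cf, formalXt]
  have hD0 : ∀ x, Df f 0 x = 1 := by intro x; simp [Df, formalX]
  set v : ℝ → ℂ := fun s => y s / f s with hvdef
  set w : ℝ → ℂ := fun s => f s * y' s - f' s * y s with hwdef
  have hvc : ContinuousOn v (Set.Icc (-b) b) := hyc.div hfc hfne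
  have hwc : ContinuousOn w (Set.Icc (-b) b) := (hfc.mul hyc').sub (hfc'.mul hyc)
  have hv : ∀ x ∈ Set.Icc (-b) b, v x = 1 + ∫ s in (0:ℝ)..x, w s * ((f s) ^ 2)⁻¹ := by
    intro x hx
    have hsub := uIcc_sub_aux hb hx
    rw [intervalIntegral.integral_eq_sub_of_hasDerivAt (f := v)]
    · simp [hvdef, hf0, hy0]
    · intro s hs
      have hs' := hsub hs
      convert! (hy s hs').div (hf s hs') (hfne s hs') using 1
      simp only [hwdef]
      ring
    · exact ((hwc.mul hPc).mono hsub).intervalIntegrable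
  have hw : ∀ x ∈ Set.Icc (-b) b, w x = z + ∫ s in (0:ℝ)..x, v s * (z ^ 2 * (f s) ^ 2) := by
    intro x hx
    have hsub := uIcc_sub_aux hb hx
    rw [intervalIntegral.integral_eq_sub_of_hasDerivAt (f := w)]
    · simp [hwdef, hf0, hy0, hf'0, hy'0]
    · intro s hs
      have hs' := hsub hs
      convert! ((hf s hs').mul (hy' s hs')).sub ((hf' s hs').mul (hy s hs')) using 1
      simp only [hvdef, hz2]
      have := hfne s hs'
      field_simp
      ring
    · exact ((hvc.mul (continuousOn_const.mul hQc)).mono hsub).intervalIntegrable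
  have htend := spps hb hPc hQc hP hQ hC0 hD0 (Cf_succ f) (Df_succ f) hvc hwc hv hw hx
  have hCb : ∀ n, ‖Cf f n x‖ ≤ 1 * (M * |x|) ^ n / n.factorial := fun n =>
    (CD_bound hb hP hQ hC0 hD0 (Cf_succ f) (Df_succ f) n x hx).1
  -- the sum of d_j z^j
  have hd : ∑' j, dc f x j * z ^ j = y x - Complex.exp (z * x) := by
    have h1 := (dc_summable hCb z).of_norm.hasSum.tendsto_sum_nat
    have h2 := (exp_term_summable (z * x)).of_norm.hasSum.tendsto_sum_nat
    rw [exp_tsum] at h2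
    have h3 := (htend.const_mul (f x)).sub h2
    have h4 : f x * v x = y x := by simp only [hvdef]; field_simp [hfne x hx]
    rw [h4] at h3
    refine tendsto_nhds_unique h1 (h3.congr fun N => ?_)
    rw [Finset.mul_sum, ← Finset.sum_sub_distrib]
    refine Finset.sum_congr rfl fun j _ => ?_
    rw [dc, mul_pow]
    ring
  have hc : ∑' k, cc f x k * z ^ k = (y x - Complex.exp (z * x)) * Complex.exp (-(x : ℂ) * z) := by
    rw [← hd, ← exp_tsum, tsum_mul_tsum_eq_tsum_sum_antidiagonal_of_summable_norm
      (dc_summable hCb z) (exp_term_summable _)]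
    simp_rw [cc_mul]
  have hcs : ∀ R : ℝ, 0 ≤ R → Summable fun k => ‖cc f x k‖ * R ^ k := by
    intro R hR
    have := summable_norm_sum_mul_antidiagonal_of_summable_norm
      (dc_summable hCb (R : ℂ)) (exp_term_summable (-(x : ℂ) * R))
    refine this.congr fun k => ?_
    rw [← cc_mul, norm_mul, norm_pow, Complex.norm_real, Real.norm_of_nonneg hR]
  have hre : (1 + z).re = 1 := by simp [hz]
  have h1z : 1 + z ≠ 0 := by
    intro h; rw [h] at hre; simp at hre
  have ht : ‖z / (1 + z)‖ < 1 := by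
    rw [norm_div, div_lt_one (norm_pos_iff.2 h1z)]
    refine lt_of_pow_lt_pow_left₀ 2 (norm_nonneg _) ?_
    rw [Complex.sq_norm, Complex.sq_norm, Complex.normSq_apply, Complex.normSq_apply]
    simp [hz]
  have h1t : 1 - z / (1 + z) = 1 / (1 + z) := by field_simp; ring
  have hsum := (resum ht hcs).div_const (1 + z)
  refine ⟨(y x - Complex.exp (z * x)) * Complex.exp (-(x : ℂ) * z), ?_, ?_⟩
  · have h5 := hsum.tendsto_sum_nat
    have h6 : (∑' k, cc f x k * ((z / (1 + z)) ^ k / (1 - z / (1 + z)) ^ (k + 1))) / (1 + z)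
        = (y x - Complex.exp (z * x)) * Complex.exp (-(x : ℂ) * z) := by
      rw [← hc, ← tsum_div_const]
      refine tsum_congr fun k => ?_
      rw [h1t, div_pow, div_pow, one_pow, pow_succ]
      field_simp
    rw [h6] at h5
    refine h5.congr fun N => Finset.sum_congr rfl fun n _ => ?_
    rw [← aCoef_eq, div_pow, pow_succ]
    field_simp
  · have : Complex.exp (z * x) * Complex.exp (-(x : ℂ) * z) = 1 := by
      rw [← Complex.exp_add]; simp [mul_comm]
    linear_combination (-(y x - Complex.exp (z * x))) * this

end
end

section
/- Let b > 0, let q : ℝ → ℂ be continuous on [−b,b], let f solve f'' − q f = 0 on [−b,b] with f(0) = 1, f'(0) = 0, and assume f(x) ≠ 0 on [−b,b]. Then there exists a continuous function K on {(x,t) : |t| ≤ |x| ≤ b} such that (i) for every twice continuously differentiable u : [−b,b] → ℂ, the function (Tu)(x) = u(x) + ∫_{−x}^{x} K(x,t)u(t)dt satisfies (Tu)'' − q·(Tu) = T(u'') on [−b,b], and (ii) for every integer n ≥ 0 and every x ∈ (0,b], ∫_{−x}^{x} K(x,y) H_n(y) dy = Σ_{k=0}^{n} h_{k,n}·(φ_k(x)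 − x^k) = √π · n! · 2ⁿ · c_n(x). -/
open MeasureTheory Set Filter Finset Complex Topology

noncomputable section

/-- The physicists' Hermite polynomials: H₀ = 1, Hₙ₊₁ = 2x·Hₙ − Hₙ'. -/
def hermitePhys : ℕ → Polynomial ℝ
  | 0 => 1
  | n + 1 => 2 * Polynomial.X * hermitePhys n - Polynomial.derivative (hermitePhys n)

/-- cₙ(x) = (1/(√π n! 2ⁿ)) Σₖ h_{k,n} (φₖ(x) − xᵏ), h_{k,n} the coefficient of yᵏ in Hₙ. -/
def cCoef (f : ℝ → ℂ) (n : ℕ) (x : ℝ) : ℂ :=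
  (1 / ((Real.sqrt Real.pi : ℂ) * n.factorial * 2 ^ n)) *
    ∑ k ∈ Finset.range (n + 1), ((hermitePhys n).coeff k : ℂ) * (formalPower f k x - (x : ℂ) ^ k)

/-! ### Calculus helpers -/

lemma tk_cont_param {X : Type*} [TopologicalSpace X] [FirstCountableTopology X]
    {F : X → ℝ → ℂ} (h : Continuous fun p : X × ℝ => F p.1 p.2) {a s : X → ℝ}
    (ha : Continuous a) (hs : Continuous s) :
    Continuous fun x => ∫ t in (a x)..(s x), F x t := by
  have hF : ∀ x, Continuous (F x) := fun x => h.comp (by fun_prop : Continuous fun t : ℝ => (x, t))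
  have e : (fun x => ∫ t in (a x)..(s x), F x t) =
      fun x => (∫ t in (0:ℝ)..(s x), F x t) - ∫ t in (0:ℝ)..(a x), F x t := by
    funext x
    rw [intervalIntegral.integral_interval_sub_left] <;>
      exact (hF x).intervalIntegrable _ _
  rw [e]
  exact (intervalIntegral.continuous_parametric_intervalIntegral_of_continuous
      (f := F) h hs).sub
    (intervalIntegral.continuous_parametric_intervalIntegral_of_continuous (f := F) h ha)

lemma tk_leib0 {G G' : ℝ → ℝ → ℂ} (hG : Continuous fun p : ℝ × ℝ => G p.1 p.2)
    (hG' : Continuous fun p : ℝ × ℝ => G' p.1 p.2)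
    (hd : ∀ s x, HasDerivAt (fun x => G s x) (G' s x) x) (a c x : ℝ) :
    HasDerivAt (fun x => ∫ s in a..c, G s x) (∫ s in a..c, G' s x) x := by
  have hcomp : IsCompact (Set.uIcc a c ×ˢ Metric.closedBall x 1) :=
    isCompact_uIcc.prod (isCompact_closedBall x 1)
  obtain ⟨C, hC⟩ := hcomp.exists_bound_of_continuousOn hG'.continuousOn
  have h1 : ∀ y, Continuous fun s => G s y := fun y =>
    hG.comp (by fun_prop : Continuous fun s : ℝ => (s, y))
  have h2 : ∀ y, Continuous fun s => G' s y := fun y =>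
    hG'.comp (by fun_prop : Continuous fun s : ℝ => (s, y))
  refine (intervalIntegral.hasDerivAt_integral_of_dominated_loc_of_deriv_le
    (F := fun x s => G s x) (F' := fun x s => G' s x) (bound := fun _ => C)
    (Metric.closedBall_mem_nhds x one_pos) ?_ ?_ ?_ ?_ ?_ ?_).2
  · exact Filter.Eventually.of_forall fun y => (h1 y).aestronglyMeasurable
  · exact (h1 x).intervalIntegrable _ _
  · exact (h2 x).aestronglyMeasurable
  · refine Filter.Eventually.of_forall fun t ht y hy => ?_
    exact hC (t, y) ⟨Set.uIoc_subset_uIcc ht, hy⟩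
  · exact intervalIntegrable_const
  · exact Filter.Eventually.of_forall fun t _ y _ => hd t y

lemma tk_leib {G G' : ℝ → ℝ → ℂ} (hG : Continuous fun p : ℝ × ℝ => G p.1 p.2)
    (hG' : Continuous fun p : ℝ × ℝ => G' p.1 p.2)
    (hd : ∀ s x, HasDerivAt (fun x => G s x) (G' s x) x) (a x : ℝ) :
    HasDerivAt (fun x => ∫ s in a..x, G s x) (G x x + ∫ s in a..x, G' s x) x := by
  have h1 : ∀ y, Continuous fun s => G s y := fun y =>
    hG.comp (by fun_prop : Continuous fun s : ℝ => (s, y))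
  have key := hasStrictFDerivAt_uncurry_coprod (𝕜 := ℝ) (u := ((x, x) : ℝ × ℝ))
    (f := fun y z => ∫ s in a..y, G s z)
    (f₁ := fun y z => ContinuousLinearMap.toSpanSingleton ℝ (G y z))
    (f₂ := fun y z => ContinuousLinearMap.toSpanSingleton ℝ (∫ s in a..y, G' s z))
    (Filter.Eventually.of_forall fun v => by
      exact (intervalIntegral.integral_hasDerivAt_right ((h1 v.2).intervalIntegrable _ _)
        ((h1 v.2).stronglyMeasurableAtFilter _ _) (h1 v.2).continuousAt).hasFDerivAt)
    (Filter.Eventually.of_forall fun v => (tk_leib0 hG hG' hd a v.1 v.2).hasFDerivAt)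
    (by
      refine Continuous.continuousAt ?_
      exact (ContinuousLinearMap.toSpanSingletonCLE (𝕜 := ℝ) (E := ℂ)).continuous.comp hG)
    (by
      refine Continuous.continuousAt ?_
      refine (ContinuousLinearMap.toSpanSingletonCLE (𝕜 := ℝ) (E := ℂ)).continuous.comp
        (tk_cont_param (F := fun (p : ℝ × ℝ) s => G' s p.2) ?_ continuous_const continuous_fst)
      exact hG'.comp (by fun_prop : Continuous fun p : (ℝ × ℝ) × ℝ => (p.2, p.1.2)))
  have h2 : HasDerivAt (fun x : ℝ => ((x, x) : ℝ × ℝ)) (1, 1) x :=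
    (hasDerivAt_id x).prodMk (hasDerivAt_id x)
  have := HasFDerivAt.comp_hasDerivAt (f := fun x : ℝ => ((x, x) : ℝ × ℝ)) x key.hasFDerivAt h2
  simpa [Function.comp_def, Function.HasUncurry.uncurry, ContinuousLinearMap.coprod_apply] using this

lemma tk_eq_of_deriv {g h g' : ℝ → ℂ} (hg : ∀ x, HasDerivAt g (g' x) x)
    (hh : ∀ x, HasDerivAt h (g' x) x) (h0 : g 0 = h 0) (x : ℝ) : g x = h x := by
  have hd : ∀ y, HasDerivAt (fun y => g y - h y) 0 y := fun y => by
    have := (hg y).sub (hh y)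
    rw [sub_self] at this
    exact this
  have := is_const_of_deriv_eq_zero (fun y => (hd y).differentiableAt) (fun y => (hd y).deriv) x 0
  simp only [h0, sub_self] at this
  exact sub_eq_zero.mp this

lemma tk_ftc {g : ℝ → ℂ} (hg : Continuous g) (a x : ℝ) :
    HasDerivAt (fun x => ∫ s in a..x, g s) (g x) x :=
  intervalIntegral.integral_hasDerivAt_right (hg.intervalIntegrable _ _)
        (hg.stronglyMeasurableAtFilter _ _) hg.continuousAt

lemma tk_swap {F : ℝ → ℝ → ℂ} (hF : Continuous fun p : ℝ × ℝ => F p.1 p.2) (x : ℝ) :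
    (∫ s in (0:ℝ)..x, ∫ σ in s..x, F s σ) = ∫ σ in (0:ℝ)..x, ∫ s in (0:ℝ)..σ, F s σ := by
  have hc : ∀ s, Continuous fun t => F s t := fun s =>
    hF.comp (by fun_prop : Continuous fun t : ℝ => (s, t))
  refine tk_eq_of_deriv (g := fun x => ∫ s in (0:ℝ)..x, ∫ σ in s..x, F s σ)
    (h := fun x => ∫ σ in (0:ℝ)..x, ∫ s in (0:ℝ)..σ, F s σ)
    (g' := fun x => ∫ s in (0:ℝ)..x, F s x) ?_ ?_ (by simp) x
  · intro x
    have := tk_leib (G := fun s x => ∫ σ in s..x, F s σ) (G' := F)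
      (tk_cont_param (F := fun (p : ℝ × ℝ) t => F p.1 t)
        (hF.comp (by fun_prop : Continuous fun p : (ℝ × ℝ) × ℝ => (p.1.1, p.2)))
        continuous_fst continuous_snd) hF
      (fun s x => tk_ftc (hc s) s x) 0 x
    simpa using this
  · intro x
    refine tk_ftc (tk_cont_param (F := fun σ s => F s σ) ?_ continuous_const continuous_id) 0 x
    exact hF.comp (by fun_prop : Continuous fun p : ℝ × ℝ => (p.2, p.1))

/-! ### The Goursat kernel -/

lemma tk_bound_pos {g : ℝ → ℂ} {C l : ℝ} (hl : 0 < l)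
    (hC : ∀ α, ‖g α‖ ≤ C * Real.exp (l * |α|)) {ξ : ℝ} (hξ : 0 ≤ ξ) (hC0 : 0 ≤ C) :
    ‖∫ α in (0:ℝ)..ξ, g α‖ ≤ C / l * Real.exp (l * |ξ|) := by
  have h1 : ‖∫ α in (0:ℝ)..ξ, g α‖ ≤ ∫ α in (0:ℝ)..ξ, C * Real.exp (l * α) := by
    refine intervalIntegral.norm_integral_le_of_norm_le hξ
      (Filter.Eventually.of_forall fun t ht => ?_) (Continuous.intervalIntegrable (by fun_prop) _ _)
    have := hC t
    rwa [abs_of_pos ht.1] at this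
  have h2 : (∫ α in (0:ℝ)..ξ, C * Real.exp (l * α)) = C / l * Real.exp (l * ξ) - C / l := by
    have : ∀ x ∈ Set.uIcc 0 ξ, HasDerivAt (fun x => C / l * Real.exp (l * x))
        (C * Real.exp (l * x)) x := by
      intro x _
      have h := (((hasDerivAt_id x).const_mul l).exp).const_mul (C / l)
      simp only [id, mul_one] at h
      have e : C / l * (Real.exp (l * x) * l) = C * Real.exp (l * x) := by field_simp
      rw [e] at h
      exact h
    rw [intervalIntegral.integral_eq_sub_of_hasDerivAt this
      (Continuous.intervalIntegrable (by fun_prop) _ _)]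
    simp
  rw [abs_of_nonneg hξ]
  have : 0 ≤ C / l := by positivity
  linarith

lemma tk_bound {g : ℝ → ℂ} {C l : ℝ} (hl : 0 < l) (hC0 : 0 ≤ C)
    (hC : ∀ α, ‖g α‖ ≤ C * Real.exp (l * |α|)) (ξ : ℝ) :
    ‖∫ α in (0:ℝ)..ξ, g α‖ ≤ C / l * Real.exp (l * |ξ|) := by
  rcases le_total 0 ξ with h | h
  · exact tk_bound_pos hl hC h hC0
  · have := tk_bound_pos (g := fun α => g (-α)) hl (fun α => by simpa using hC (-α))
      (neg_nonneg.mpr h) hC0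
    rw [intervalIntegral.integral_comp_neg, neg_neg, neg_zero, intervalIntegral.integral_symm,
      norm_neg, abs_neg] at this
    exact this

lemma tk_bound2 {g : ℝ → ℝ → ℂ} {C l : ℝ} (hl : 0 < l) (hC0 : 0 ≤ C)
    (hC : ∀ α β, ‖g α β‖ ≤ C * Real.exp (l * |α|) * Real.exp (l * |β|)) (ξ η : ℝ) :
    ‖∫ α in (0:ℝ)..ξ, ∫ β in (0:ℝ)..η, g α β‖ ≤
      C / l ^ 2 * (Real.exp (l * |ξ|) * Real.exp (l * |η|)) := by
  have h1 : ∀ α, ‖∫ β in (0:ℝ)..η, g α β‖ ≤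
      (C / l * Real.exp (l * |η|)) * Real.exp (l * |α|) := by
    intro α
    refine (tk_bound hl (by positivity) (hC α) η).trans (le_of_eq ?_)
    ring
  refine (tk_bound hl (by positivity) h1 ξ).trans (le_of_eq ?_)
  field_simp

lemma tk_exists_H {q : ℝ → ℂ} (hq : Continuous q) {M : ℝ} (hM : ∀ x, ‖q x‖ ≤ M) :
    ∃ H : ℝ → ℝ → ℂ, Continuous (fun p : ℝ × ℝ => H p.1 p.2) ∧
      ∀ ξ η, H ξ η = (1 / 2 : ℂ) * (∫ s in (0:ℝ)..ξ, q s) +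
        ∫ α in (0:ℝ)..ξ, ∫ β in (0:ℝ)..η, q (α + β) * H α β := by
  have hM0 : 0 ≤ M := (norm_nonneg _).trans (hM 0)
  set l : ℝ := M + 1 with hl
  have hlpos : 0 < l := by positivity
  let W : ℝ → ℝ → ℝ := fun ξ η => Real.exp (l * |ξ|) * Real.exp (l * |η|)
  have hWpos : ∀ ξ η, 0 < W ξ η := fun ξ η => by positivity
  have hWc : Continuous fun p : ℝ × ℝ => W p.1 p.2 := by fun_prop
  let I : (ℝ → ℝ → ℂ) → ℝ → ℝ → ℂ := fun G ξ η =>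
    ∫ α in (0:ℝ)..ξ, ∫ β in (0:ℝ)..η, q (α + β) * ((W α β : ℂ) * G α β)
  have hin : ∀ G : ℝ → ℝ → ℂ, Continuous (fun p : ℝ × ℝ => G p.1 p.2) →
      Continuous fun p : ℝ × ℝ => q (p.1 + p.2) * ((W p.1 p.2 : ℂ) * G p.1 p.2) := by
    intro G hG
    exact (hq.comp (by fun_prop)).mul ((Complex.continuous_ofReal.comp hWc).mul hG)
  have hIc : ∀ G : ℝ → ℝ → ℂ, Continuous (fun p : ℝ × ℝ => G p.1 p.2) →
      Continuous fun p : ℝ × ℝ => I G p.1 p.2 := by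
    intro G hG
    refine tk_cont_param (F := fun (p : ℝ × ℝ) α =>
      ∫ β in (0:ℝ)..p.2, q (α + β) * ((W α β : ℂ) * G α β)) ?_ continuous_const continuous_fst
    refine tk_cont_param (F := fun (p : (ℝ × ℝ) × ℝ) β =>
      q (p.2 + β) * ((W p.2 β : ℂ) * G p.2 β)) ?_ continuous_const (by fun_prop)
    exact (hin G hG).comp (by fun_prop : Continuous fun p : ((ℝ × ℝ) × ℝ) × ℝ => (p.1.2, p.2))
  have hIb : ∀ (G : ℝ → ℝ → ℂ) (C : ℝ), 0 ≤ C → (∀ ξ η, ‖G ξ η‖ ≤ C) → ∀ ξ η,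
      ‖I G ξ η‖ ≤ (M * C) / l ^ 2 * W ξ η := by
    intro G C hC0 hC ξ η
    refine tk_bound2 hlpos (by positivity) (fun α β => ?_) ξ η
    rw [norm_mul, norm_mul, Complex.norm_real, Real.norm_of_nonneg (hWpos α β).le]
    calc ‖q (α + β)‖ * (W α β * ‖G α β‖) ≤ M * (W α β * C) := by
          gcongr
          · exact hM _
          · exact hC _ _
      _ = _ := by simp only [W]; ring
  have hq1 : ∀ ξ η, ‖(1 / 2 : ℂ) * ∫ s in (0:ℝ)..ξ, q s‖ ≤ (M / l) * W ξ η := by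
    intro ξ η
    have h1 := tk_bound (g := q) hlpos hM0 (fun α => (hM α).trans
      (le_mul_of_one_le_right hM0 (Real.one_le_exp (by positivity)))) ξ
    have h2 : 1 ≤ Real.exp (l * |η|) := Real.one_le_exp (by positivity)
    rw [norm_mul]
    have h3 : ‖(1 / 2 : ℂ)‖ ≤ 1 := by norm_num
    calc _ ≤ 1 * (M / l * Real.exp (l * |ξ|)) := by gcongr
      _ = (M / l * Real.exp (l * |ξ|)) * 1 := by ring
      _ ≤ (M / l * Real.exp (l * |ξ|)) * Real.exp (l * |η|) := by gcongr
      _ = _ := by simp only [W]; ring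
  have hgb : ∀ (G : BoundedContinuousFunction (ℝ × ℝ) ℂ) (p : ℝ × ℝ),
      ‖((W p.1 p.2 : ℂ))⁻¹ * ((1 / 2 : ℂ) * (∫ s in (0:ℝ)..p.1, q s) +
        I (fun ξ η => G (ξ, η)) p.1 p.2)‖ ≤ M / l + (M * ‖G‖) / l ^ 2 := by
    intro G p
    rw [norm_mul, norm_inv, Complex.norm_real, Real.norm_of_nonneg (hWpos _ _).le,
      inv_mul_le_iff₀ (hWpos _ _)]
    refine (norm_add_le _ _).trans ?_
    have h1 := hq1 p.1 p.2
    have h2 := hIb (fun ξ η => G (ξ, η)) ‖G‖ (norm_nonneg _) (fun ξ η => G.norm_coe_le_norm _)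
      p.1 p.2
    linarith
  have hprim : Continuous fun p : ℝ × ℝ => ∫ s in (0:ℝ)..p.1, q s :=
    tk_cont_param (F := fun (_ : ℝ × ℝ) s => q s) (hq.comp continuous_snd)
      continuous_const continuous_fst
  let Φ : BoundedContinuousFunction (ℝ × ℝ) ℂ → BoundedContinuousFunction (ℝ × ℝ) ℂ := fun G =>
    BoundedContinuousFunction.ofNormedAddCommGroup
      (fun p => ((W p.1 p.2 : ℂ))⁻¹ * ((1 / 2 : ℂ) * (∫ s in (0:ℝ)..p.1, q s) +
        I (fun ξ η => G (ξ, η)) p.1 p.2))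
      (by
        refine Continuous.mul ?_ ((continuous_const.mul hprim).add (hIc _ G.continuous))
        refine (Complex.continuous_ofReal.comp hWc).inv₀ fun p => ?_
        simpa using (hWpos p.1 p.2).ne')
      (M / l + (M * ‖G‖) / l ^ 2) (hgb G)
  have hk0 : 0 ≤ M / l ^ 2 := by positivity
  have hΦ : ContractingWith (NNReal.mk (M / l ^ 2) hk0) Φ := by
    constructor
    · rw [← NNReal.coe_lt_coe]
      change M / l ^ 2 < 1
      rw [div_lt_one (by positivity)]
      nlinarith
    · refine LipschitzWith.of_dist_le_mul fun G₁ G₂ => ?_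
      change dist (Φ G₁) (Φ G₂) ≤ M / l ^ 2 * dist G₁ G₂
      rw [BoundedContinuousFunction.dist_le (by positivity)]
      intro p
      have hsub : Φ G₁ p - Φ G₂ p = ((W p.1 p.2 : ℂ))⁻¹ *
          I (fun ξ η => G₁ (ξ, η) - G₂ (ξ, η)) p.1 p.2 := by
        have hlin : I (fun ξ η => G₁ (ξ, η) - G₂ (ξ, η)) p.1 p.2 =
            I (fun ξ η => G₁ (ξ, η)) p.1 p.2 - I (fun ξ η => G₂ (ξ, η)) p.1 p.2 := by
          have hc : ∀ G : BoundedContinuousFunction (ℝ × ℝ) ℂ, Continuous fun z : ℝ × ℝ =>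
              q (z.1 + z.2) * ((W z.1 z.2 : ℂ) * G (z.1, z.2)) :=
            fun G => hin (fun ξ η => G (ξ, η)) G.continuous
          have hcα : ∀ (G : BoundedContinuousFunction (ℝ × ℝ) ℂ) (α : ℝ), Continuous fun β : ℝ =>
              q (α + β) * ((W α β : ℂ) * G (α, β)) :=
            fun G α => (hc G).comp (by fun_prop : Continuous fun β : ℝ => (α, β))
          have hcβ : ∀ (G : BoundedContinuousFunction (ℝ × ℝ) ℂ), Continuous fun α : ℝ =>
              ∫ β in (0:ℝ)..p.2, q (α + β) * ((W α β : ℂ) * G (α, β)) :=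
            fun G => tk_cont_param (F := fun (α : ℝ) β => q (α + β) * ((W α β : ℂ) * G (α, β)))
              (hc G) continuous_const continuous_const
          simp only [I]
          rw [← intervalIntegral.integral_sub ((hcβ G₁).intervalIntegrable _ _)
            ((hcβ G₂).intervalIntegrable _ _)]
          refine intervalIntegral.integral_congr fun α _ => ?_
          rw [← intervalIntegral.integral_sub ((hcα G₁ α).intervalIntegrable _ _)
            ((hcα G₂ α).intervalIntegrable _ _)]
          refine intervalIntegral.integral_congr fun β _ => ?_
          ring
        rw [hlin]
        change ((W p.1 p.2 : ℂ))⁻¹ * _ - ((W p.1 p.2 : ℂ))⁻¹ * _ = _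
        ring
      rw [dist_eq_norm, hsub, norm_mul, norm_inv, Complex.norm_real,
        Real.norm_of_nonneg (hWpos _ _).le, inv_mul_le_iff₀ (hWpos _ _)]
      refine (hIb _ (dist G₁ G₂) dist_nonneg (fun ξ η => ?_) p.1 p.2).trans (le_of_eq ?_)
      · rw [← dist_eq_norm]
        exact BoundedContinuousFunction.dist_coe_le_dist _
      · ring
  let G := ContractingWith.fixedPoint Φ hΦ
  have hG : Φ G = G := hΦ.fixedPoint_isFixedPt
  refine ⟨fun ξ η => (W ξ η : ℂ) * G (ξ, η),
    (Complex.continuous_ofReal.comp hWc).mul G.continuous, fun ξ η => ?_⟩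
  have h1 : G (ξ, η) = ((W ξ η : ℂ))⁻¹ * ((1 / 2 : ℂ) * (∫ s in (0:ℝ)..ξ, q s) +
        I (fun ξ η => G (ξ, η)) ξ η) := by
    conv_lhs => rw [← hG]
    rfl
  have hne : (W ξ η : ℂ) ≠ 0 := by simpa using (hWpos ξ η).ne'
  change (W ξ η : ℂ) * G (ξ, η) = _
  rw [h1, mul_inv_cancel_left₀ hne]

/-! ### The transmutation operator -/

lemma tk_chain {f f₁ f₂ : ℝ → ℝ → ℂ}
    (d1 : ∀ y z, HasDerivAt (fun y => f y z) (f₁ y z) y)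
    (d2 : ∀ y z, HasDerivAt (fun z => f y z) (f₂ y z) z)
    (c1 : Continuous fun p : ℝ × ℝ => f₁ p.1 p.2) (c2 : Continuous fun p : ℝ × ℝ => f₂ p.1 p.2)
    (t x : ℝ) :
    HasDerivAt (fun x => f ((x + t) / 2) ((x - t) / 2))
      ((1 / 2 : ℂ) * (f₁ ((x + t) / 2) ((x - t) / 2) + f₂ ((x + t) / 2) ((x - t) / 2))) x := by
  have key := hasStrictFDerivAt_uncurry_coprod (𝕜 := ℝ)
    (u := (((x + t) / 2, (x - t) / 2) : ℝ × ℝ)) (f := f)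
    (f₁ := fun y z => ContinuousLinearMap.toSpanSingleton ℝ (f₁ y z))
    (f₂ := fun y z => ContinuousLinearMap.toSpanSingleton ℝ (f₂ y z))
    (Filter.Eventually.of_forall fun v => (d1 v.1 v.2).hasFDerivAt)
    (Filter.Eventually.of_forall fun v => (d2 v.1 v.2).hasFDerivAt)
    (Continuous.continuousAt
      ((ContinuousLinearMap.toSpanSingletonCLE (𝕜 := ℝ) (E := ℂ)).continuous.comp c1))
    (Continuous.continuousAt
      ((ContinuousLinearMap.toSpanSingletonCLE (𝕜 := ℝ) (E := ℂ)).continuous.comp c2))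
  have h2 : HasDerivAt (fun x : ℝ => (((x + t) / 2, (x - t) / 2) : ℝ × ℝ)) (1 / 2, 1 / 2) x :=
    (((hasDerivAt_id x).add_const t).div_const 2).prodMk
      (((hasDerivAt_id x).sub_const t).div_const 2)
  have h3 := HasFDerivAt.comp_hasDerivAt
    (f := fun x : ℝ => (((x + t) / 2, (x - t) / 2) : ℝ × ℝ)) x key.hasFDerivAt h2
  have e : (((1 / 2 : ℝ) : ℂ) * f₁ ((x + t) / 2) ((x - t) / 2)) +
      (((1 / 2 : ℝ) : ℂ) * f₂ ((x + t) / 2) ((x - t) / 2)) =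
    ((1 / 2 : ℂ) * (f₁ ((x + t) / 2) ((x - t) / 2) + f₂ ((x + t) / 2) ((x - t) / 2))) := by
    push_cast; ring
  rw [← e]
  simpa [Function.comp_def, Function.HasUncurry.uncurry, ContinuousLinearMap.coprod_apply] using h3

def tkA (H : ℝ → ℝ → ℂ) (u : ℝ → ℂ) (x : ℝ) : ℂ :=
  ∫ t in (-x)..x, H ((x + t) / 2) ((x - t) / 2) * u t

def tkN (H : ℝ → ℝ → ℂ) (e : ℂ) (u : ℝ → ℂ) (s x : ℝ) : ℂ :=
  (1 / 2 : ℂ) * u x + e * ((1 / 2 : ℂ) * u (2 * s - x)) +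
    (e * (∫ σ in (0:ℝ)..s, H σ (s - σ) * u (2 * σ - x)) +
      ∫ σ in (0:ℝ)..s, H (s - σ) σ * u (x - 2 * σ))

lemma tk_subst1 (F : ℝ → ℝ → ℂ) (u : ℝ → ℂ) (x : ℝ) :
    (∫ t in (-x)..x, F ((x + t) / 2) ((x - t) / 2) * u t) =
      2 * ∫ σ in (0:ℝ)..x, F σ (x - σ) * u (2 * σ - x) := by
  have := intervalIntegral.integral_comp_mul_sub (a := 0) (b := x)
    (fun t => F ((x + t) / 2) ((x - t) / 2) * u t) (two_ne_zero (α := ℝ)) x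
  have e1 : (2 * 0 - x : ℝ) = -x := by ring
  have e2 : (2 * x - x : ℝ) = x := by ring
  rw [e1, e2] at this
  have e3 : ∀ σ : ℝ, (x + (2 * σ - x)) / 2 = σ := fun σ => by ring
  have e4 : ∀ σ : ℝ, (x - (2 * σ - x)) / 2 = x - σ := fun σ => by ring
  simp only [e3, e4] at this
  rw [this, Complex.real_smul]
  push_cast
  ring

lemma tk_subst2 (F : ℝ → ℝ → ℂ) (u : ℝ → ℂ) (x : ℝ) :
    (∫ t in (-x)..x, F ((x + t) / 2) ((x - t) / 2) * u t) =
      2 * ∫ σ in (0:ℝ)..x, F (x - σ) σ * u (x - 2 * σ) := by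
  have := intervalIntegral.integral_comp_sub_mul (a := 0) (b := x)
    (fun t => F ((x + t) / 2) ((x - t) / 2) * u t) (two_ne_zero (α := ℝ)) x
  have e1 : (x - 2 * x : ℝ) = -x := by ring
  have e2 : (x - 2 * 0 : ℝ) = x := by ring
  rw [e1, e2] at this
  have e3 : ∀ σ : ℝ, (x + (x - 2 * σ)) / 2 = x - σ := fun σ => by ring
  have e4 : ∀ σ : ℝ, (x - (x - 2 * σ)) / 2 = σ := fun σ => by ring
  simp only [e3, e4] at this
  rw [this, Complex.real_smul]
  push_cast
  ring

lemma tkN_diag_one (H : ℝ → ℝ → ℂ) (u : ℝ → ℂ) (x : ℝ) :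
    tkN H 1 u x x = u x + tkA H u x := by
  have h1 := tk_subst1 H u x
  have h2 := tk_subst2 H u x
  have e : 2 * x - x = x := by ring
  unfold tkN tkA
  rw [e]
  linear_combination (-1/2 : ℂ) * h1 - (1/2 : ℂ) * h2

lemma tkN_diag_neg (H : ℝ → ℝ → ℂ) (u : ℝ → ℂ) (x : ℝ) :
    tkN H (-1) u x x = 0 := by
  have h1 := tk_subst1 H u x
  have h2 := tk_subst2 H u x
  have e : 2 * x - x = x := by ring
  unfold tkN
  rw [e]
  linear_combination (1/2 : ℂ) * h1 - (1/2 : ℂ) * h2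

lemma tkN_cont {H : ℝ → ℝ → ℂ} (hH : Continuous fun p : ℝ × ℝ => H p.1 p.2) (e : ℂ)
    {u : ℝ → ℂ} (hu : Continuous u) : Continuous fun p : ℝ × ℝ => tkN H e u p.1 p.2 := by
  unfold tkN
  refine Continuous.add (by fun_prop) (Continuous.add (Continuous.mul continuous_const ?_) ?_)
  · refine tk_cont_param (F := fun (p : ℝ × ℝ) σ => H σ (p.1 - σ) * u (2 * σ - p.2)) ?_
      continuous_const continuous_fst
    exact (hH.comp (by fun_prop : Continuous fun z : (ℝ × ℝ) × ℝ => (z.2, z.1.1 - z.2))).mul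
      (by fun_prop)
  · refine tk_cont_param (F := fun (p : ℝ × ℝ) σ => H (p.1 - σ) σ * u (p.2 - 2 * σ)) ?_
      continuous_const continuous_fst
    exact (hH.comp (by fun_prop : Continuous fun z : (ℝ × ℝ) × ℝ => (z.1.1 - z.2, z.2))).mul
      (by fun_prop)

lemma tkN_deriv {H : ℝ → ℝ → ℂ} (hH : Continuous fun p : ℝ × ℝ => H p.1 p.2) (e : ℂ)
    {u u' : ℝ → ℂ} (hu : ∀ x, HasDerivAt u (u' x) x) (hu' : Continuous u') (s x : ℝ) :
    HasDerivAt (fun x => tkN H e u s x) (tkN H (-e) u' s x) x := by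
  have huc : Continuous u := continuous_iff_continuousAt.mpr fun x => (hu x).continuousAt
  have dneg : ∀ c x : ℝ, HasDerivAt (fun x => u (c - x)) (-u' (c - x)) x := by
    intro c x
    have := (hu (c - x)).scomp x ((hasDerivAt_id x).const_sub c)
    simpa [Function.comp_def] using this
  have dpos : ∀ c x : ℝ, HasDerivAt (fun x => u (x - c)) (u' (x - c)) x := by
    intro c x
    have := (hu (x - c)).scomp x ((hasDerivAt_id x).sub_const c)
    simpa [Function.comp_def] using this
  have hc1 : Continuous fun z : ℝ × ℝ => H z.1 (s - z.1) :=
    hH.comp (by fun_prop : Continuous fun z : ℝ × ℝ => (z.1, s - z.1))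
  have hc2 : Continuous fun z : ℝ × ℝ => H (s - z.1) z.1 :=
    hH.comp (by fun_prop : Continuous fun z : ℝ × ℝ => (s - z.1, z.1))
  have i1 := tk_leib0 (G := fun σ x => H σ (s - σ) * u (2 * σ - x))
    (G' := fun σ x => H σ (s - σ) * (-u' (2 * σ - x))) (hc1.mul (by fun_prop))
    (hc1.mul (by fun_prop)) (fun σ x => (dneg (2 * σ) x).const_mul _) 0 s x
  have i2 := tk_leib0 (G := fun σ x => H (s - σ) σ * u (x - 2 * σ))
    (G' := fun σ x => H (s - σ) σ * (u' (x - 2 * σ))) (hc2.mul (by fun_prop))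
    (hc2.mul (by fun_prop)) (fun σ x => (dpos (2 * σ) x).const_mul _) 0 s x
  have h := (((hu x).const_mul (1 / 2 : ℂ)).add
    (((dneg (2 * s) x).const_mul (1 / 2 : ℂ)).const_mul e)).add ((i1.const_mul e).add i2)
  have e0 : tkN H (-e) u' s x = (1 / 2 : ℂ) * u' x + e * ((1 / 2 : ℂ) * -u' (2 * s - x)) +
    (e * (∫ σ in (0:ℝ)..s, H σ (s - σ) * -u' (2 * σ - x)) +
      ∫ σ in (0:ℝ)..s, H (s - σ) σ * u' (x - 2 * σ)) := by
    unfold tkN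
    simp only [mul_neg, intervalIntegral.integral_neg]
    ring
  rw [e0]
  exact h

lemma tkA_deriv {q : ℝ → ℂ} (hq : Continuous q) {H : ℝ → ℝ → ℂ}
    (hH : Continuous fun p : ℝ × ℝ => H p.1 p.2)
    (heq : ∀ ξ η, H ξ η = (1 / 2 : ℂ) * (∫ s in (0:ℝ)..ξ, q s) +
        ∫ α in (0:ℝ)..ξ, ∫ β in (0:ℝ)..η, q (α + β) * H α β)
    {u : ℝ → ℂ} (hu : Continuous u) (x : ℝ) :
    HasDerivAt (tkA H u) (∫ s in (0:ℝ)..x, q s * tkN H 1 u s x) x := by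
  have hqH : Continuous fun p : ℝ × ℝ => q (p.1 + p.2) * H p.1 p.2 :=
    (hq.comp (by fun_prop)).mul hH
  have hqH1 : ∀ a, Continuous fun t : ℝ => q (a + t) * H a t := fun a =>
    hqH.comp (by fun_prop : Continuous fun t : ℝ => (a, t))
  have hqH2 : ∀ a, Continuous fun t : ℝ => q (t + a) * H t a := fun a =>
    hqH.comp (by fun_prop : Continuous fun t : ℝ => (t, a))
  have hJ : Continuous fun p : ℝ × ℝ => ∫ β in (0:ℝ)..p.2, q (p.1 + β) * H p.1 β :=
    tk_cont_param (F := fun (p : ℝ × ℝ) β => q (p.1 + β) * H p.1 β)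
      (hqH.comp (by fun_prop : Continuous fun z : (ℝ × ℝ) × ℝ => (z.1.1, z.2)))
      continuous_const continuous_snd
  let HX : ℝ → ℝ → ℂ := fun ξ η => (1 / 2 : ℂ) * q ξ + ∫ β in (0:ℝ)..η, q (ξ + β) * H ξ β
  let HY : ℝ → ℝ → ℂ := fun ξ η => ∫ α in (0:ℝ)..ξ, q (α + η) * H α η
  have cX : Continuous fun p : ℝ × ℝ => HX p.1 p.2 :=
    (continuous_const.mul (hq.comp continuous_fst)).add hJ
  have cY : Continuous fun p : ℝ × ℝ => HY p.1 p.2 :=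
    tk_cont_param (F := fun (p : ℝ × ℝ) α => q (α + p.2) * H α p.2)
      (hqH.comp (by fun_prop : Continuous fun z : (ℝ × ℝ) × ℝ => (z.2, z.1.2)))
      continuous_const continuous_fst
  have dX : ∀ ξ η, HasDerivAt (fun ξ => H ξ η) (HX ξ η) ξ := by
    intro ξ η
    have hcη : Continuous fun α => ∫ β in (0:ℝ)..η, q (α + β) * H α β :=
      hJ.comp (by fun_prop : Continuous fun α : ℝ => (α, η))
    have := ((tk_ftc hq 0 ξ).const_mul (1 / 2 : ℂ)).add (tk_ftc hcη 0 ξ)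
    have e : (fun ξ => H ξ η) = _ := funext fun ξ => heq ξ η
    rw [e]
    exact this
  have dY : ∀ ξ η, HasDerivAt (fun η => H ξ η) (HY ξ η) η := by
    intro ξ η
    have := (tk_leib0 (G := fun α η => ∫ β in (0:ℝ)..η, q (α + β) * H α β)
      (G' := fun α η => q (α + η) * H α η) hJ hqH (fun α η => tk_ftc (hqH1 α) 0 η) 0 ξ η).const_add
        ((1 / 2 : ℂ) * (∫ s in (0:ℝ)..ξ, q s))
    have e : (fun η => H ξ η) = _ := funext fun η => heq ξ η
    rw [e]
    exact this
  let K : ℝ → ℝ → ℂ := fun t x => H ((x + t) / 2) ((x - t) / 2)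
  let K' : ℝ → ℝ → ℂ := fun t x =>
    (1 / 2 : ℂ) * (HX ((x + t) / 2) ((x - t) / 2) + HY ((x + t) / 2) ((x - t) / 2))
  have dK : ∀ t x, HasDerivAt (fun x => K t x) (K' t x) x := fun t x => tk_chain dX dY cX cY t x
  have hmap : Continuous fun p : ℝ × ℝ => ((p.2 + p.1) / 2, (p.2 - p.1) / 2) := by fun_prop
  have cK : Continuous fun p : ℝ × ℝ => K p.1 p.2 := hH.comp hmap
  have cK' : Continuous fun p : ℝ × ℝ => K' p.1 p.2 :=
    continuous_const.mul ((cX.comp hmap).add (cY.comp hmap))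
  have hneg : Continuous fun p : ℝ × ℝ => (-p.1, p.2) := by fun_prop
  have hsplit : ∀ (g : ℝ → ℂ) (_ : Continuous g) (x : ℝ), (∫ t in (-x)..x, g t) =
      ∫ t in (0:ℝ)..x, (g t + g (-t)) := by
    intro g hg x
    have hg' : Continuous fun t => g (-t) := by fun_prop
    rw [intervalIntegral.integral_add (hg.intervalIntegrable _ _)
      (hg'.intervalIntegrable _ _), intervalIntegral.integral_comp_neg,
      neg_zero, add_comm, intervalIntegral.integral_add_adjacent_intervals] <;>
    exact hg.intervalIntegrable _ _
  have hL := tk_leib (G := fun t x => K t x * u t + K (-t) x * u (-t))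
    (G' := fun t x => K' t x * u t + K' (-t) x * u (-t))
    ((cK.mul (by fun_prop)).add ((cK.comp hneg).mul (by fun_prop)))
    ((cK'.mul (by fun_prop)).add ((cK'.comp hneg).mul (by fun_prop)))
    (fun t x => ((dK t x).mul_const _).add ((dK (-t) x).mul_const _)) 0 x
  have eA : tkA H u = fun x => ∫ t in (0:ℝ)..x, (K t x * u t + K (-t) x * u (-t)) := by
    funext x
    exact hsplit (fun t => K t x * u t)
      ((cK.comp (by fun_prop : Continuous fun t : ℝ => (t, x))).mul hu) x
  rw [eA]
  convert hL using 1
  rw [← hsplit (fun t => K' t x * u t)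
      ((cK'.comp (by fun_prop : Continuous fun t : ℝ => (t, x))).mul hu) x]
  -- now rewrite everything in terms of iterated integrals
  have k1 : K x x = (1 / 2 : ℂ) * ∫ s in (0:ℝ)..x, q s := by
    have e1 : (x + x) / 2 = x := by ring
    have e2 : (x - x) / 2 = 0 := by ring
    simp only [K, e1, e2]
    rw [heq]
    simp
  have k2 : K (-x) x = 0 := by
    have e1 : (x + -x) / 2 = 0 := by ring
    simp only [K, e1]
    rw [heq]
    simp
  have k3 : (∫ t in (-x)..x, K' t x * u t) =
      (∫ σ in (0:ℝ)..x, HX σ (x - σ) * u (2 * σ - x)) +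
      ∫ σ in (0:ℝ)..x, HY (x - σ) σ * u (x - 2 * σ) := by
    have hX := tk_subst1 HX u x
    have hY := tk_subst2 HY u x
    have e : (∫ t in (-x)..x, K' t x * u t) =
        (1 / 2 : ℂ) * ((∫ t in (-x)..x, HX ((x + t) / 2) ((x - t) / 2) * u t) +
          ∫ t in (-x)..x, HY ((x + t) / 2) ((x - t) / 2) * u t) := by
      have hm : Continuous fun t : ℝ => ((x + t) / 2, (x - t) / 2) := by fun_prop
      have hm1 : Continuous fun t : ℝ => HX ((x + t) / 2) ((x - t) / 2) * u t :=
        (cX.comp hm).mul hu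
      have hm2 : Continuous fun t : ℝ => HY ((x + t) / 2) ((x - t) / 2) * u t :=
        (cY.comp hm).mul hu
      rw [← intervalIntegral.integral_add (hm1.intervalIntegrable _ _)
        (hm2.intervalIntegrable _ _), ← intervalIntegral.integral_const_mul]
      refine intervalIntegral.integral_congr fun t _ => ?_
      simp only [K']
      ring
    rw [e, hX, hY]
    ring
  have k4 : ∀ σ, HX σ (x - σ) = (1 / 2 : ℂ) * q σ + ∫ s in σ..x, q s * H σ (s - σ) := by
    intro σ
    have := intervalIntegral.integral_comp_sub_right (a := σ) (b := x)
      (fun β => q (σ + β) * H σ β) σ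
    simp only [sub_self, add_sub_cancel] at this
    simp only [HX]
    rw [this]
  have k5 : ∀ σ, HY (x - σ) σ = ∫ s in σ..x, q s * H (s - σ) σ := by
    intro σ
    have := intervalIntegral.integral_comp_sub_right (a := σ) (b := x)
      (fun α => q (α + σ) * H α σ) σ
    simp only [sub_self, sub_add_cancel] at this
    simp only [HY]
    rw [this]
  have c6 : Continuous fun p : ℝ × ℝ => q p.2 * H p.1 (p.2 - p.1) * u (2 * p.1 - x) :=
    ((hq.comp continuous_snd).mul
      (hH.comp (by fun_prop : Continuous fun p : ℝ × ℝ => (p.1, p.2 - p.1)))).mul (by fun_prop)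
  have c7 : Continuous fun p : ℝ × ℝ => q p.2 * H (p.2 - p.1) p.1 * u (x - 2 * p.1) :=
    ((hq.comp continuous_snd).mul
      (hH.comp (by fun_prop : Continuous fun p : ℝ × ℝ => (p.2 - p.1, p.1)))).mul (by fun_prop)
  have k6 := tk_swap (F := fun σ s => q s * H σ (s - σ) * u (2 * σ - x)) c6 x
  have k7 := tk_swap (F := fun σ s => q s * H (s - σ) σ * u (x - 2 * σ)) c7 x
  have c8 : Continuous fun σ => ∫ s in σ..x, q s * H σ (s - σ) * u (2 * σ - x) :=
    tk_cont_param (F := fun σ s => q s * H σ (s - σ) * u (2 * σ - x)) c6 continuous_id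
      continuous_const
  have c9 : Continuous fun s => ∫ σ in (0:ℝ)..s, q s * H σ (s - σ) * u (2 * σ - x) :=
    tk_cont_param (F := fun s σ => q s * H σ (s - σ) * u (2 * σ - x))
      (c6.comp continuous_swap) continuous_const continuous_id
  have c10 : Continuous fun s => ∫ σ in (0:ℝ)..s, q s * H (s - σ) σ * u (x - 2 * σ) :=
    tk_cont_param (F := fun s σ => q s * H (s - σ) σ * u (x - 2 * σ))
      (c7.comp continuous_swap) continuous_const continuous_id
  have k8 : (∫ σ in (0:ℝ)..x, HX σ (x - σ) * u (2 * σ - x)) =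
      (∫ σ in (0:ℝ)..x, (1 / 2 : ℂ) * q σ * u (2 * σ - x)) +
      ∫ s in (0:ℝ)..x, ∫ σ in (0:ℝ)..s, q s * H σ (s - σ) * u (2 * σ - x) := by
    rw [← k6, ← intervalIntegral.integral_add
      (Continuous.intervalIntegrable (by fun_prop) _ _) (c8.intervalIntegrable _ _)]
    refine intervalIntegral.integral_congr fun σ _ => ?_
    simp only [k4, add_mul, intervalIntegral.integral_mul_const]
  have k9 : (∫ σ in (0:ℝ)..x, HY (x - σ) σ * u (x - 2 * σ)) =
      ∫ s in (0:ℝ)..x, ∫ σ in (0:ℝ)..s, q s * H (s - σ) σ * u (x - 2 * σ) := by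
    rw [← k7]
    refine intervalIntegral.integral_congr fun σ _ => ?_
    simp only [k5, intervalIntegral.integral_mul_const]
  rw [k1, k2, k3, k8, k9, zero_mul, add_zero]
  have k10 : (∫ s in (0:ℝ)..x, q s * tkN H 1 u s x) =
      ∫ s in (0:ℝ)..x, (((1 / 2 : ℂ) * q s * u x + (1 / 2 : ℂ) * q s * u (2 * s - x)) +
        ((∫ σ in (0:ℝ)..s, q s * H σ (s - σ) * u (2 * σ - x)) +
        ∫ σ in (0:ℝ)..s, q s * H (s - σ) σ * u (x - 2 * σ))) := by
    refine intervalIntegral.integral_congr fun s _ => ?_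
    simp only [tkN, mul_assoc, intervalIntegral.integral_const_mul]
    ring
  rw [k10, intervalIntegral.integral_add (Continuous.intervalIntegrable (by fun_prop) _ _)
      ((c9.fun_add c10).intervalIntegrable _ _),
    intervalIntegral.integral_add (Continuous.intervalIntegrable (by fun_prop) _ _)
      (Continuous.intervalIntegrable (by fun_prop) _ _),
    intervalIntegral.integral_add (c9.intervalIntegrable _ _) (c10.intervalIntegrable _ _),
    intervalIntegral.integral_mul_const, intervalIntegral.integral_const_mul]
  ring

lemma tkA_deriv2 {q : ℝ → ℂ} (hq : Continuous q) {H : ℝ → ℝ → ℂ}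
    (hH : Continuous fun p : ℝ × ℝ => H p.1 p.2)
    (heq : ∀ ξ η, H ξ η = (1 / 2 : ℂ) * (∫ s in (0:ℝ)..ξ, q s) +
        ∫ α in (0:ℝ)..ξ, ∫ β in (0:ℝ)..η, q (α + β) * H α β)
    {u u' u'' : ℝ → ℂ} (hu : ∀ x, HasDerivAt u (u' x) x) (hu' : ∀ x, HasDerivAt u' (u'' x) x)
    (hu'' : Continuous u'') (x : ℝ) :
    HasDerivAt (fun x => ∫ s in (0:ℝ)..x, q s * tkN H 1 u s x)
      (q x * (u x + tkA H u x) + tkA H u'' x) x := by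
  have huc : Continuous u := continuous_iff_continuousAt.mpr fun x => (hu x).continuousAt
  have huc' : Continuous u' := continuous_iff_continuousAt.mpr fun x => (hu' x).continuousAt
  have cq : Continuous fun p : ℝ × ℝ => q p.1 := hq.comp continuous_fst
  have h1 := fun x => tk_leib (G := fun s x => q s * tkN H 1 u s x)
    (G' := fun s x => q s * tkN H (-1) u' s x)
    (cq.mul (tkN_cont hH 1 huc)) (cq.mul (tkN_cont hH (-1) huc'))
    (fun s x => (tkN_deriv hH 1 hu huc' s x).const_mul _) 0 x
  have h2 := fun x => tk_leib (G := fun s x => q s * tkN H (-1) u' s x)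
    (G' := fun s x => q s * tkN H 1 u'' s x)
    (cq.mul (tkN_cont hH (-1) huc')) (cq.mul (tkN_cont hH 1 hu''))
    (fun s x => by
      have := (tkN_deriv hH (-1) hu' hu'' s x).const_mul (q s)
      rwa [neg_neg] at this) 0 x
  simp only [tkN_diag_neg, mul_zero, zero_add] at h2
  simp only [tkN_diag_one] at h1
  have h3 := tk_eq_of_deriv h2 (fun x => tkA_deriv hq hH heq hu'' x) (by simp [tkA]) x
  rw [← h3]
  exact h1 x

/-! ### Images of the monomials -/

lemma tk_wronsk {b : ℝ} {q f f' P P' R : ℝ → ℂ} (hb : 0 < b)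
    (hf : ∀ x ∈ Set.Icc (-b) b, HasDerivAt f (f' x) x)
    (hf' : ∀ x ∈ Set.Icc (-b) b, HasDerivAt f' (q x * f x) x)
    (hf0 : f 0 = 1) (hf'0 : f' 0 = 0)
    (hfne : ∀ x ∈ Set.Icc (-b) b, f x ≠ 0)
    (hP : ∀ x ∈ Set.Icc (-b) b, HasDerivAt P (P' x) x)
    (hP' : ∀ x ∈ Set.Icc (-b) b, HasDerivAt P' (q x * P x + R x) x)
    (hR : ContinuousOn R (Set.Icc (-b) b)) :
    ∀ x ∈ Set.Icc (-b) b, P x = f x * (P 0 + ∫ s in (0:ℝ)..x,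
      (P' 0 + ∫ t in (0:ℝ)..s, R t * f t) * ((f s) ^ 2)⁻¹) := by
  have h0 : (0:ℝ) ∈ Set.Icc (-b) b := ⟨by linarith, hb.le⟩
  have hsub : ∀ x ∈ Set.Icc (-b) b, Set.uIcc 0 x ⊆ Set.Icc (-b) b := fun x hx =>
    (Set.ordConnected_Icc).uIcc_subset h0 hx
  have cf : ContinuousOn f (Set.Icc (-b) b) := fun x hx => (hf x hx).continuousAt.continuousWithinAt
  have cf' : ContinuousOn f' (Set.Icc (-b) b) :=
    fun x hx => (hf' x hx).continuousAt.continuousWithinAt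
  have cP : ContinuousOn P (Set.Icc (-b) b) := fun x hx => (hP x hx).continuousAt.continuousWithinAt
  have cP' : ContinuousOn P' (Set.Icc (-b) b) :=
    fun x hx => (hP' x hx).continuousAt.continuousWithinAt
  have hW : ∀ x ∈ Set.Icc (-b) b,
      HasDerivAt (fun x => P' x * f x - P x * f' x) (R x * f x) x := by
    intro x hx
    have := ((hP' x hx).mul (hf x hx)).sub ((hP x hx).mul (hf' x hx))
    have e : R x * f x = (q x * P x + R x) * f x + P' x * f' x -
        (P' x * f' x + P x * (q x * f x)) := by ring
    rw [e]
    exact this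
  have hWi : ∀ x ∈ Set.Icc (-b) b, P' 0 + (∫ t in (0:ℝ)..x, R t * f t) =
      P' x * f x - P x * f' x := by
    intro x hx
    rw [intervalIntegral.integral_eq_sub_of_hasDerivAt (fun y hy => hW y (hsub x hx hy))
      (((hR.mul cf).mono (hsub x hx)).intervalIntegrable)]
    rw [hf0, hf'0]
    ring
  have hQ : ∀ x ∈ Set.Icc (-b) b, HasDerivAt (fun x => P x / f x)
      ((P' x * f x - P x * f' x) * ((f x) ^ 2)⁻¹) x := by
    intro x hx
    have := (hP x hx).div (hf x hx) (hfne x hx)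
    rw [div_eq_mul_inv] at this
    exact this
  intro x hx
  have hi : (∫ s in (0:ℝ)..x, (P' 0 + ∫ t in (0:ℝ)..s, R t * f t) * ((f s) ^ 2)⁻¹) =
      P x / f x - P 0 / f 0 := by
    rw [← intervalIntegral.integral_eq_sub_of_hasDerivAt (fun y hy => hQ y (hsub x hx hy))]
    · refine intervalIntegral.integral_congr fun s hs => ?_
      rw [hWi s (hsub x hx hs)]
    · refine ContinuousOn.intervalIntegrable (ContinuousOn.mono ?_ (hsub x hx))
      refine ((cP'.mul cf).sub (cP.mul cf')).mul ((cf.pow 2).inv₀ fun y hy => ?_)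
      exact pow_ne_zero 2 (hfne y hy)
  rw [hi, hf0]
  have := hfne x hx
  field_simp
  ring

def tkY (f : ℝ → ℂ) (k : ℕ) (x : ℝ) : ℂ :=
  if Odd k then formalX f k x else formalXt f k x

lemma tk_formalPower (f : ℝ → ℂ) (k : ℕ) (x : ℝ) : formalPower f k x = f x * tkY f k x := by
  unfold formalPower tkY
  split_ifs <;> rfl

lemma tkY_zero (f : ℝ → ℂ) (x : ℝ) : tkY f 0 x = 1 := by
  simp [tkY, formalXt]

lemma tkY_one (f : ℝ → ℂ) (x : ℝ) : tkY f 1 x = ∫ s in (0:ℝ)..x, ((f s) ^ 2)⁻¹ := by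
  simp [tkY, formalX]

lemma tkY_succ (f : ℝ → ℂ) (k : ℕ) (x : ℝ) : tkY f (k + 2) x =
    ∫ s in (0:ℝ)..x, (((k + 2 : ℂ) * (k + 1)) * ∫ t in (0:ℝ)..s, tkY f k t * (f t) ^ 2) *
      ((f s) ^ 2)⁻¹ := by
  rcases Nat.even_or_odd k with hk | hk
  · have h1 : ¬ Odd k := Nat.not_odd_iff_even.mpr hk
    have h2 : ¬ Odd (k + 2) := by
      rw [Nat.not_odd_iff_even]; exact hk.add (by decide)
    have e1 : (-1 : ℤ) ^ k = 1 := hk.neg_one_pow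
    have e2 : (-1 : ℤ) ^ (k + 1) = -1 := by rw [pow_succ, e1]; norm_num
    simp only [tkY, h1, h2, if_false, formalXt, e1, e2, zpow_neg, zpow_one]
    rw [← intervalIntegral.integral_const_mul]
    refine intervalIntegral.integral_congr fun s _ => ?_
    push_cast
    ring
  · have h2 : Odd (k + 2) := hk.add_even (by decide)
    have e1 : (-1 : ℤ) ^ k = -1 := hk.neg_one_pow
    have e2 : (-1 : ℤ) ^ (k + 1) = 1 := by rw [pow_succ, e1]; norm_num
    have e3 : (-1 : ℤ) ^ (k + 1 + 1) = -1 := by rw [pow_succ, e2]; norm_num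
    simp only [tkY, hk, h2, if_true, formalX, e2, e3, zpow_neg, zpow_one]
    rw [← intervalIntegral.integral_const_mul]
    refine intervalIntegral.integral_congr fun s _ => ?_
    push_cast
    ring

lemma tk_hasDerivAt_pow (k : ℕ) (x : ℝ) :
    HasDerivAt (fun t : ℝ => (t : ℂ) ^ k) ((k : ℂ) * (x : ℂ) ^ (k - 1)) x :=
  (hasDerivAt_pow k (x : ℂ)).comp_ofReal

lemma tkA_const_mul (H : ℝ → ℝ → ℂ) (u : ℝ → ℂ) (c : ℂ) (x : ℝ) :
    tkA H (fun t => c * u t) x = c * tkA H u x := by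
  unfold tkA
  rw [← intervalIntegral.integral_const_mul]
  refine intervalIntegral.integral_congr fun s _ => ?_
  simp only
  ring

lemma tk_moments {b : ℝ} (hb : 0 < b) {q f f' : ℝ → ℂ}
    (hf : ∀ x ∈ Set.Icc (-b) b, HasDerivAt f (f' x) x)
    (hf' : ∀ x ∈ Set.Icc (-b) b, HasDerivAt f' (q x * f x) x)
    (hf0 : f 0 = 1) (hf'0 : f' 0 = 0)
    (hfne : ∀ x ∈ Set.Icc (-b) b, f x ≠ 0)
    (hq : Continuous q) {H : ℝ → ℝ → ℂ}
    (hH : Continuous fun p : ℝ × ℝ => H p.1 p.2)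
    (heq : ∀ ξ η, H ξ η = (1 / 2 : ℂ) * (∫ s in (0:ℝ)..ξ, q s) +
        ∫ α in (0:ℝ)..ξ, ∫ β in (0:ℝ)..η, q (α + β) * H α β) (k : ℕ) :
    ∀ x ∈ Set.Icc (-b) b,
      (x : ℂ) ^ k + tkA H (fun t => (t : ℂ) ^ k) x = f x * tkY f k x := by
  have main : ∀ (u u' u'' : ℝ → ℂ), (∀ x, HasDerivAt u (u' x) x) → (∀ x, HasDerivAt u' (u'' x) x) →
      Continuous u'' → ∀ x ∈ Set.Icc (-b) b, u x + tkA H u x =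
        f x * (u 0 + ∫ s in (0:ℝ)..x,
          (u' 0 + ∫ t in (0:ℝ)..s, (u'' t + tkA H u'' t) * f t) * ((f s) ^ 2)⁻¹) := by
    intro u u' u'' hu hu' hu'' x hx
    have huc : Continuous u := continuous_iff_continuousAt.mpr fun x => (hu x).continuousAt
    have hAc : Continuous (tkA H u'') :=
      continuous_iff_continuousAt.mpr fun x => (tkA_deriv hq hH heq hu'' x).continuousAt
    have := tk_wronsk (P := fun x => u x + tkA H u x)
      (P' := fun x => u' x + ∫ s in (0:ℝ)..x, q s * tkN H 1 u s x)
      (R := fun x => u'' x + tkA H u'' x) hb hf hf' hf0 hf'0 hfne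
      (fun x _ => (hu x).add (tkA_deriv hq hH heq huc x))
      (fun x _ => by
        have h := (hu' x).add (tkA_deriv2 hq hH heq hu hu' hu'' x)
        have e : q x * (u x + tkA H u x) + (u'' x + tkA H u'' x) =
          u'' x + (q x * (u x + tkA H u x) + tkA H u'' x) := by ring
        rw [e]
        exact h)
      (hu''.add hAc).continuousOn x hx
    simpa [tkA] using this
  induction k using Nat.twoStepInduction with
  | zero =>
    intro x hx
    have := main (fun _ => 1) (fun _ => 0) (fun _ => 0) (fun x => hasDerivAt_const x _)
      (fun x => hasDerivAt_const x _) continuous_const x hx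
    simp only [pow_zero, tkY_zero]
    rw [this]
    simp [tkA]
  | one =>
    intro x hx
    have := main (fun t => (t : ℂ)) (fun _ => 1) (fun _ => 0)
      (fun x => by simpa using tk_hasDerivAt_pow 1 x)
      (fun x => hasDerivAt_const x _) continuous_const x hx
    simp only [pow_one, tkY_one]
    rw [this]
    simp [tkA]
  | more k ih _ =>
    intro x hx
    have := main (fun t => (t : ℂ) ^ (k + 2)) (fun t => (k + 2 : ℂ) * (t : ℂ) ^ (k + 1))
      (fun t => ((k + 2 : ℂ) * (k + 1)) * (t : ℂ) ^ k)
      (fun x => by simpa using tk_hasDerivAt_pow (k + 2) x)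
      (fun x => by
        have := (tk_hasDerivAt_pow (k + 1) x).const_mul (k + 2 : ℂ)
        simpa [mul_assoc] using this) (by fun_prop) x hx
    rw [this, tkY_succ]
    have h0 : (0:ℝ) ∈ Set.Icc (-b) b := ⟨by linarith, hb.le⟩
    have hsub : ∀ x ∈ Set.Icc (-b) b, Set.uIcc 0 x ⊆ Set.Icc (-b) b := fun x hx =>
      (Set.ordConnected_Icc).uIcc_subset h0 hx
    congr 1
    simp only [Complex.ofReal_zero, ne_eq, Nat.add_eq_zero_iff, OfNat.ofNat_ne_zero, and_false,
      not_false_eq_true, zero_pow, zero_add, one_ne_zero, mul_zero]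
    refine intervalIntegral.integral_congr fun s hs => ?_
    congr 1
    rw [← intervalIntegral.integral_const_mul]
    refine intervalIntegral.integral_congr fun t ht => ?_
    have hi := ih t (hsub s (hsub x hx hs) ht)
    simp only [tkA_const_mul]
    rw [← mul_add, hi]
    ring

/-! ### Extension of the kernel beyond the interval and the main theorem -/

lemma tk_ext {b : ℝ} (hb : 0 < b) {g : ℝ → ℂ} (hg : ContinuousOn g (Set.Icc (-b) b)) :
    ∃ G : ℝ → ℂ, Continuous G ∧ (∀ x ∈ Set.Icc (-b) b, G x = g x) ∧ ∃ M, ∀ x, ‖G x‖ ≤ M := by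
  have hbb : -b ≤ b := by linarith
  refine ⟨Set.IccExtend hbb (Set.restrict (Set.Icc (-b) b) g),
    (continuousOn_iff_continuous_restrict.mp hg).Icc_extend', fun x hx => ?_, ?_⟩
  · rw [Set.IccExtend_of_mem _ _ hx]; rfl
  · obtain ⟨M, hM⟩ := isCompact_Icc.exists_bound_of_continuousOn hg
    exact ⟨M, fun x => hM _ (Set.projIcc (-b) b hbb x).2⟩

lemma tk_piece {F g : ℝ → ℂ} {a c : ℝ} (hac : a ≤ c) (hg : Continuous g)
    (h : ∀ t, a < t → t < c → F t = g t) :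
    IntervalIntegrable F volume a c ∧ (∫ t in a..c, F t) = ∫ t in a..c, g t := by
  constructor
  · refine (hg.intervalIntegrable a c).congr_uIoo fun t ht => ?_
    rw [Set.uIoo_of_le hac] at ht
    exact (h t ht.1 ht.2).symm
  · exact intervalIntegral.integral_congr_Ioo_of_le hac fun t ht => h t ht.1 ht.2

def tkFold (b t : ℝ) : ℝ := 2 * max (-b) (min t b) - t

def tkExtK (b r : ℝ) (k : ℝ → ℂ) (t : ℝ) : ℂ :=
  if |t| ≤ b then k t + (if 2 * b - r < t then k (2 * b - t) else 0) +
    (if t < r - 2 * b then k (-(2 * b) - t) else 0) else 0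

lemma tkFold_mid {b t : ℝ} (h1 : -b ≤ t) (h2 : t ≤ b) : tkFold b t = t := by
  unfold tkFold
  rw [min_eq_left h2, max_eq_right h1]; ring

lemma tkFold_right {b t : ℝ} (hb : 0 < b) (h : b ≤ t) : tkFold b t = 2 * b - t := by
  unfold tkFold
  rw [min_eq_right h, max_eq_right (by linarith)]

lemma tkFold_left {b t : ℝ} (hb : 0 < b) (h : t ≤ -b) : tkFold b t = -(2 * b) - t := by
  unfold tkFold
  rw [min_eq_left (by linarith), max_eq_left h]; ring

lemma tkExtK_of_le {b r : ℝ} (k : ℝ → ℂ) {t : ℝ} (hr : r ≤ b) (ht : |t| ≤ b) :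
    tkExtK b r k t = k t := by
  have h := abs_le.mp ht
  unfold tkExtK
  rw [if_pos ht, if_neg (by linarith), if_neg (by linarith)]
  ring

lemma tk_fold_integral {b r : ℝ} (hb : 0 < b) (hr0 : 0 ≤ r) (hr : r < 2 * b)
    {k u g : ℝ → ℂ} (hk : Continuous k) (hg : Continuous g)
    (hug : ∀ x ∈ Set.Icc (-b) b, u x = g x) :
    (∫ t in (-r)..r, tkExtK b r k t * u t) = ∫ t in (-r)..r, k t * g (tkFold b t) := by
  rcases le_total r b with hrb | hrb
  · refine intervalIntegral.integral_congr fun t ht => ?_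
    rw [Set.uIcc_of_le (by linarith)] at ht
    have h1 : -b ≤ t := by linarith [ht.1]
    have h2 : t ≤ b := by linarith [ht.2]
    rw [tkExtK_of_le k hrb (abs_le.mpr ⟨h1, h2⟩), tkFold_mid h1 h2, hug t ⟨h1, h2⟩]
  · have p1 := tk_piece (F := fun t => tkExtK b r k t * u t) (g := fun _ => 0) (a := -r) (c := -b)
      (by linarith) continuous_const (fun t h1 h2 => by
        simp only [tkExtK]
        rw [if_neg (by rw [abs_le]; intro h; linarith [h.1]), zero_mul])
    have p2 := tk_piece (F := fun t => tkExtK b r k t * u t)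
      (g := fun t => k t * g t + k (-(2 * b) - t) * g t) (a := -b) (c := r - 2 * b)
      (by linarith) (by fun_prop) (fun t h1 h2 => by
        simp only [tkExtK]
        rw [if_pos (abs_le.mpr ⟨by linarith, by linarith⟩), if_neg (by linarith), if_pos h2,
          hug t ⟨by linarith, by linarith⟩]
        ring)
    have p3 := tk_piece (F := fun t => tkExtK b r k t * u t)
      (g := fun t => k t * g t) (a := r - 2 * b) (c := 2 * b - r)
      (by linarith) (by fun_prop) (fun t h1 h2 => by
        simp only [tkExtK]
        rw [if_pos (abs_le.mpr ⟨by linarith, by linarith⟩), if_neg (by linarith),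
          if_neg (by linarith), hug t ⟨by linarith, by linarith⟩]
        ring)
    have p4 := tk_piece (F := fun t => tkExtK b r k t * u t)
      (g := fun t => k t * g t + k (2 * b - t) * g t) (a := 2 * b - r) (c := b)
      (by linarith) (by fun_prop) (fun t h1 h2 => by
        simp only [tkExtK]
        rw [if_pos (abs_le.mpr ⟨by linarith, by linarith⟩), if_pos h1, if_neg (by linarith),
          hug t ⟨by linarith, by linarith⟩]
        ring)
    have p5 := tk_piece (F := fun t => tkExtK b r k t * u t) (g := fun _ => 0) (a := b) (c := r)
      (by linarith) continuous_const (fun t h1 h2 => by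
        simp only [tkExtK]
        rw [if_neg (by rw [abs_le]; intro h; linarith [h.2]), zero_mul])
    have r1 := tk_piece (F := fun t => k t * g (tkFold b t))
      (g := fun t => k t * g (-(2 * b) - t)) (a := -r) (c := -b)
      (by linarith) (by fun_prop) (fun t h1 h2 => by
        rw [tkFold_left hb h2.le])
    have r2 := tk_piece (F := fun t => k t * g (tkFold b t))
      (g := fun t => k t * g t) (a := -b) (c := b)
      (by linarith) (by fun_prop) (fun t h1 h2 => by
        rw [tkFold_mid h1.le h2.le])
    have r3 := tk_piece (F := fun t => k t * g (tkFold b t))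
      (g := fun t => k t * g (2 * b - t)) (a := b) (c := r)
      (by linarith) (by fun_prop) (fun t h1 h2 => by
        rw [tkFold_right hb h1.le])
    have s1 : (∫ t in (-r)..(-b), k t * g (-(2 * b) - t)) =
        ∫ t in (-b)..(r - 2 * b), k (-(2 * b) - t) * g t := by
      have := intervalIntegral.integral_comp_sub_left (a := -b) (b := r - 2 * b)
        (fun t => k t * g (-(2 * b) - t)) (-(2 * b))
      simp only [sub_sub_cancel] at this
      rw [this]
      congr 1 <;> ring
    have s2 : (∫ t in b..r, k t * g (2 * b - t)) =
        ∫ t in (2 * b - r)..b, k (2 * b - t) * g t := by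
      have := intervalIntegral.integral_comp_sub_left (a := 2 * b - r) (b := b)
        (fun t => k t * g (2 * b - t)) (2 * b)
      simp only [sub_sub_cancel] at this
      rw [this]
      congr 1; ring
    have hkg : Continuous fun t => k t * g t := by fun_prop
    have hkl : Continuous fun t => k (-(2 * b) - t) * g t := by fun_prop
    have hkr : Continuous fun t => k (2 * b - t) * g t := by fun_prop
    rw [← intervalIntegral.integral_add_adjacent_intervals r1.1 (r2.1.trans r3.1),
      ← intervalIntegral.integral_add_adjacent_intervals r2.1 r3.1,
      ← intervalIntegral.integral_add_adjacent_intervals p1.1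
        (p2.1.trans (p3.1.trans (p4.1.trans p5.1))),
      ← intervalIntegral.integral_add_adjacent_intervals p2.1 (p3.1.trans (p4.1.trans p5.1)),
      ← intervalIntegral.integral_add_adjacent_intervals p3.1 (p4.1.trans p5.1),
      ← intervalIntegral.integral_add_adjacent_intervals p4.1 p5.1,
      p1.2, p2.2, p3.2, p4.2, p5.2, r1.2, r2.2, r3.2, s1, s2,
      intervalIntegral.integral_add (hkg.intervalIntegrable _ _) (hkl.intervalIntegrable _ _),
      intervalIntegral.integral_add (hkg.intervalIntegrable _ _) (hkr.intervalIntegrable _ _),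
      ← intervalIntegral.integral_add_adjacent_intervals
        (hkg.intervalIntegrable (-b) (r - 2 * b)) (hkg.intervalIntegrable (r - 2 * b) b),
      ← intervalIntegral.integral_add_adjacent_intervals
        (hkg.intervalIntegrable (r - 2 * b) (2 * b - r)) (hkg.intervalIntegrable (2 * b - r) b)]
    simp only [intervalIntegral.integral_zero]
    ring

lemma tk_fold_integral' {b s : ℝ} (hb : 0 < b) (hs : |s| < 2 * b)
    {k u g : ℝ → ℂ} (hk : Continuous k) (hg : Continuous g)
    (hug : ∀ x ∈ Set.Icc (-b) b, u x = g x) :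
    (∫ t in (-s)..s, tkExtK b |s| k t * u t) = ∫ t in (-s)..s, k t * g (tkFold b t) := by
  have h := tk_fold_integral hb (abs_nonneg s) hs hk hg hug
  rcases abs_cases s with ⟨e, _⟩ | ⟨e, _⟩
  · rw [e] at h ⊢; exact h
  · rw [e] at h ⊢
    rw [neg_neg] at h
    rw [intervalIntegral.integral_symm, h, ← intervalIntegral.integral_symm]

lemma tk_prim {b : ℝ} (hb : 0 < b) {g g' G : ℝ → ℂ}
    (hg : ∀ x ∈ Set.Icc (-b) b, HasDerivAt g (g' x) x) (hG : Continuous G)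
    (he : ∀ x ∈ Set.Icc (-b) b, G x = g' x) :
    ∀ x ∈ Set.Icc (-b) b, g 0 + (∫ s in (0:ℝ)..x, G s) = g x := by
  intro x hx
  have h0 : (0:ℝ) ∈ Set.Icc (-b) b := ⟨by linarith, hb.le⟩
  have hsub : Set.uIcc 0 x ⊆ Set.Icc (-b) b := (Set.ordConnected_Icc).uIcc_subset h0 hx
  rw [intervalIntegral.integral_eq_sub_of_hasDerivAt (f := g)
    (fun y hy => by rw [he y (hsub hy)]; exact hg y (hsub hy)) (hG.intervalIntegrable _ _)]
  ring

/-- Hermite moments of the transmutation kernel. -/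
theorem transmutation_kernel_hermite_moments
    (b : ℝ) (hb : 0 < b) (q : ℝ → ℂ) (hq : ContinuousOn q (Set.Icc (-b) b))
    (f f' : ℝ → ℂ)
    (hf : ∀ x ∈ Set.Icc (-b) b, HasDerivAt f (f' x) x)
    (hf' : ∀ x ∈ Set.Icc (-b) b, HasDerivAt f' (q x * f x) x)
    (hf0 : f 0 = 1) (hf'0 : f' 0 = 0)
    (hfne : ∀ x ∈ Set.Icc (-b) b, f x ≠ 0) :
    ∃ K : ℝ → ℝ → ℂ,
      ContinuousOn (fun p : ℝ × ℝ => K p.1 p.2) {p : ℝ × ℝ | |p.2| ≤ |p.1| ∧ |p.1| ≤ b} ∧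
      (      ∀ u u' u'' : ℝ → ℂ,
        (∀ x ∈ Set.Icc (-b) b, HasDerivAt u (u' x) x) →
        (∀ x ∈ Set.Icc (-b) b, HasDerivAt u' (u'' x) x) →
        ContinuousOn u'' (Set.Icc (-b) b) →
        ∃ D1 D2 : ℝ → ℂ,
          (∀ x ∈ Set.Icc (-b) b,
            HasDerivAt (fun s : ℝ => u s + ∫ t in (-s)..s, K s t * u t) (D1 x) x) ∧
          (∀ x ∈ Set.Icc (-b) b, HasDerivAt D1 (D2 x) x) ∧
          ContinuousOn D2 (Set.Icc (-b) b) ∧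
          ∀ x ∈ Set.Icc (-b) b,
            D2 x - q x * (u x + ∫ t in (-x)..x, K x t * u t)
              = u'' x + ∫ t in (-x)..x, K x t * u'' t) ∧
      ∀ (n : ℕ), ∀ x ∈ Set.Ioc (0:ℝ) b,
        (∫ t in (-x)..x, K x t * (((hermitePhys n).eval t : ℝ) : ℂ)) =
          (∑ k ∈ Finset.range (n + 1), ((hermitePhys n).coeff k : ℂ) *
            (formalPower f k x - (x : ℂ) ^ k)) ∧
        (∫ t in (-x)..x, K x t * (((hermitePhys n).eval t : ℝ) : ℂ)) =
          (Real.sqrt Real.pi : ℂ) * (n.factorial : ℂ) * 2 ^ n * cCoef f n x := by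
  obtain ⟨qt, hqt, hqe, M, hM⟩ := tk_ext hb hq
  obtain ⟨H, hH, heq⟩ := tk_exists_H hqt hM
  have hqf' : ∀ x ∈ Set.Icc (-b) b, HasDerivAt f' (qt x * f x) x := fun x hx => by
    rw [hqe x hx]; exact hf' x hx
  let k : ℝ → ℝ → ℂ := fun s t => H ((s + t) / 2) ((s - t) / 2)
  have hkc : Continuous fun p : ℝ × ℝ => k p.1 p.2 :=
    hH.comp (by fun_prop : Continuous fun p : ℝ × ℝ => ((p.1 + p.2) / 2, (p.1 - p.2) / 2))
  have hks : ∀ s, Continuous (k s) := fun s =>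
    hkc.comp (by fun_prop : Continuous fun t : ℝ => (s, t))
  let K : ℝ → ℝ → ℂ := fun s t => tkExtK b |s| (k s) t
  have hK : ∀ s t, |t| ≤ |s| → |s| ≤ b → K s t = k s t := fun s t h1 h2 =>
    tkExtK_of_le _ h2 (h1.trans h2)
  have habs : ∀ x t : ℝ, t ∈ Set.uIcc (-x) x → |t| ≤ |x| := by
    intro x t ht
    rcases le_total 0 x with h | h
    · rw [Set.uIcc_of_le (by linarith)] at ht
      rw [abs_of_nonneg h]; exact abs_le.mpr ht
    · rw [Set.uIcc_of_ge (by linarith)] at ht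
      rw [abs_of_nonpos h, abs_le, neg_neg]; exact ht
  have hin : ∀ x ∈ Set.Icc (-b) b, ∀ t ∈ Set.uIcc (-x) x, t ∈ Set.Icc (-b) b := by
    intro x hx t ht
    exact abs_le.mp ((habs x t ht).trans (abs_le.mpr hx))
  have hKA : ∀ x ∈ Set.Icc (-b) b, ∀ u g : ℝ → ℂ, (∀ y ∈ Set.Icc (-b) b, g y = u y) →
      (∫ t in (-x)..x, K x t * u t) = tkA H g x := by
    intro x hx u g hug
    refine intervalIntegral.integral_congr fun t ht => ?_
    rw [hK x t (habs x t ht) (abs_le.mpr hx), hug t (hin x hx t ht)]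
  refine ⟨K, ?_, ?_, ?_⟩
  · refine hkc.continuousOn.congr ?_
    rintro ⟨s, t⟩ ⟨h1, h2⟩
    exact hK s t h1 h2
  · intro u u' u'' hu hu' hu''
    obtain ⟨v2, hv2, he2, -⟩ := tk_ext hb hu''
    let v1 : ℝ → ℂ := fun x => u' 0 + ∫ s in (0:ℝ)..x, v2 s
    let v0 : ℝ → ℂ := fun x => u 0 + ∫ s in (0:ℝ)..x, v1 s
    have d1 : ∀ x, HasDerivAt v1 (v2 x) x := fun x => (tk_ftc hv2 0 x).const_add _
    have c1 : Continuous v1 := continuous_iff_continuousAt.mpr fun x => (d1 x).continuousAt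
    have d0 : ∀ x, HasDerivAt v0 (v1 x) x := fun x => (tk_ftc c1 0 x).const_add _
    have c0 : Continuous v0 := continuous_iff_continuousAt.mpr fun x => (d0 x).continuousAt
    have he1 : ∀ x ∈ Set.Icc (-b) b, v1 x = u' x := tk_prim hb hu' hv2 he2
    have he0 : ∀ x ∈ Set.Icc (-b) b, v0 x = u x := tk_prim hb hu c1 he1
    have hfoldc : Continuous (tkFold b) := by unfold tkFold; fun_prop
    let w : ℝ → ℂ := fun t => v0 (tkFold b t)
    have cw : Continuous w := c0.comp hfoldc
    have hAw : ∀ x ∈ Set.Icc (-b) b, tkA H w x = tkA H v0 x := by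
      intro x hx
      refine intervalIntegral.integral_congr fun t ht => ?_
      have h := hin x hx t ht
      simp only [w]
      rw [tkFold_mid h.1 h.2]
    have hder : ∀ x ∈ Set.Icc (-b) b,
        HasDerivAt (tkA H w) (∫ s in (0:ℝ)..x, qt s * tkN H 1 v0 s x) x := by
      intro x hx
      have a1 := tkA_deriv hqt hH heq cw x
      have a2 := tkA_deriv hqt hH heq c0 x
      have hu : UniqueDiffWithinAt ℝ (Set.Icc (-b) b) x :=
        uniqueDiffOn_Icc (by linarith) x hx
      have e := hu.eq_deriv _ (a1.hasDerivWithinAt)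
        (a2.hasDerivWithinAt.congr hAw (hAw x hx))
      rw [← e]
      exact a1
    refine ⟨fun x => u' x + ∫ s in (0:ℝ)..x, qt s * tkN H 1 v0 s x,
      fun x => u'' x + (qt x * (v0 x + tkA H v0 x) + tkA H v2 x), ?_, ?_, ?_, ?_⟩
    · intro x hx
      have h := (hu x hx).add (hder x hx)
      refine h.congr_of_eventuallyEq ?_
      have hx2 : |x| < 2 * b := lt_of_le_of_lt (abs_le.mpr hx) (by linarith)
      filter_upwards [(isOpen_lt continuous_abs continuous_const).mem_nhds hx2] with s hs
      change u s + _ = u s + _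
      congr 1
      exact tk_fold_integral' hb hs (hks s) c0 (fun y hy => (he0 y hy).symm)
    · intro x hx
      exact (hu' x hx).add (tkA_deriv2 hqt hH heq d0 d1 hv2 x)
    · have cA0 : Continuous (tkA H v0) :=
        continuous_iff_continuousAt.mpr fun x => (tkA_deriv hqt hH heq c0 x).continuousAt
      have cA2 : Continuous (tkA H v2) :=
        continuous_iff_continuousAt.mpr fun x => (tkA_deriv hqt hH heq hv2 x).continuousAt
      exact hu''.add (((hqt.mul (c0.add cA0)).add cA2).continuousOn)
    · intro x hx
      rw [hKA x hx u v0 he0, hKA x hx u'' v2 he2]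
      beta_reduce
      rw [he0 x hx, hqe x hx]
      ring
  · intro n x hx
    have hx' : x ∈ Set.Icc (-b) b := ⟨by linarith [hx.1], hx.2⟩
    have hmain : (∫ t in (-x)..x, K x t * (((hermitePhys n).eval t : ℝ) : ℂ)) =
          (∑ k ∈ Finset.range (n + 1), ((hermitePhys n).coeff k : ℂ) *
            (formalPower f k x - (x : ℂ) ^ k)) := by
      have hdeg : ∀ n, (hermitePhys n).natDegree ≤ n := by
        intro n
        induction n with
        | zero => simp [hermitePhys]
        | succ n ih =>
          simp only [hermitePhys]
          refine (Polynomial.natDegree_sub_le _ _).trans (max_le ?_ ?_)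
          · refine Polynomial.natDegree_mul_le.trans ?_
            have : (2 * Polynomial.X : Polynomial ℝ).natDegree ≤ 1 := by
              refine Polynomial.natDegree_mul_le.trans ?_
              simp
            omega
          · refine (Polynomial.natDegree_derivative_le _).trans ?_
            omega
      have hev : ∀ t : ℝ, (((hermitePhys n).eval t : ℝ) : ℂ) =
          ∑ j ∈ Finset.range (n + 1), ((hermitePhys n).coeff j : ℂ) * (t : ℂ) ^ j := by
        intro t
        rw [Polynomial.eval_eq_sum_range' (Nat.lt_succ_of_le (hdeg n))]
        push_cast
        rfl
      rw [hKA x hx' _ _ (fun y _ => rfl)]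
      simp only [tkA, hev, Finset.mul_sum]
      rw [intervalIntegral.integral_finsetSum]
      · refine Finset.sum_congr rfl fun j _ => ?_
        have hm := tk_moments hb hf hqf' hf0 hf'0 hfne hqt hH heq j x hx'
        rw [tk_formalPower, ← hm, add_sub_cancel_left]
        exact tkA_const_mul H (fun t => (t : ℂ) ^ j) _ x
      · intro j _
        refine Continuous.intervalIntegrable ?_ _ _
        exact (hks x).mul (by fun_prop)
    refine ⟨hmain, ?_⟩
    rw [hmain, cCoef, ← mul_assoc]
    have h1 : (Real.sqrt Real.pi : ℂ) ≠ 0 := by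
      simpa using (Real.sqrt_pos.mpr Real.pi_pos).ne'
    have h2 : (n.factorial : ℂ) ≠ 0 := by exact_mod_cast n.factorial_ne_zero
    have h3 : (2 : ℂ) ^ n ≠ 0 := pow_ne_zero n two_ne_zero
    rw [mul_one_div_cancel (mul_ne_zero (mul_ne_zero h1 h2) h3), one_mul]

end
end
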